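/- arXiv:2303.14600 — 2 statements merged into one kernel-verified Lean document; each statement's English description precedes it below -/
import Mathlib

section
/- Let F(T) ∈ ℤ[T] be a fixed nonconstant polynomial of degree D. There is a constant C (depending only on F) such that for every positive integer q and every real number x ≥ 3q, |∑_{p ≤ x, gcd(F(p), q) = 1} 1/p − α(q)·log log x| ≤ C·(log log 3q)^{D+1}, where the sum is over primes p ≤ x with gcd(F(p), q) = 1. -/
open Finset in
/-- `α(q) = (1/φ(q)) · #{a mod q : gcd(a·F(a), q) = 1}`. -/
noncomputable def alpha (F : Polynomial ℤ) (q : ℕ) : ℝ :=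
  (Set.ncard {a : ℕ | a < q ∧ Int.gcd ((a : ℤ) * F.eval (a : ℤ)) (q : ℤ) = 1} : ℝ)
    / (Nat.totient q : ℝ)

open Finset in
theorem abel_bound {E : Type*} [NormedAddCommGroup E] [NormedSpace ℝ E] (a : ℕ → E) (f : ℕ → ℝ)
    (m n : ℕ) (hmn : m ≤ n) (K : ℝ) (hK : ∀ k, m ≤ k → ‖∑ i ∈ Ico m k, a i‖ ≤ K)
    (hf : ∀ i, m ≤ i → f (i+1) ≤ f i) (hpos : ∀ i, m ≤ i → 0 ≤ f i) :
    ‖∑ i ∈ Ico m n, f i • a i‖ ≤ K * f m := by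
  have key : ∀ n, m ≤ n → ∑ i ∈ Ico m n, f i • a i = f n • ∑ i ∈ Ico m n, a i
      + ∑ i ∈ Ico m n, (f i - f (i+1)) • ∑ j ∈ Ico m (i+1), a j := by
    intro n hn
    induction n, hn using Nat.le_induction with
    | base => simp
    | succ k hk ih =>
      rw [sum_Ico_succ_top hk, sum_Ico_succ_top hk, ih, sum_Ico_succ_top hk, sum_Ico_succ_top hk]
      module
  have tele : ∀ n, m ≤ n → ∑ i ∈ Ico m n, (f i - f (i+1)) = f m - f n := by
    intro n hn
    induction n, hn using Nat.le_induction with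
    | base => simp
    | succ k hk ih => rw [sum_Ico_succ_top hk, ih]; ring
  rw [key n hmn]
  calc _ ≤ ‖f n • ∑ i ∈ Ico m n, a i‖ + ∑ i ∈ Ico m n, ‖(f i - f (i+1)) • ∑ j ∈ Ico m (i+1), a j‖ :=
        (norm_add_le _ _).trans (by gcongr; exact norm_sum_le _ _)
    _ ≤ f n * K + ∑ i ∈ Ico m n, (f i - f (i+1)) * K := by
        gcongr with i hi
        · rw [norm_smul, Real.norm_of_nonneg (hpos n hmn)]
          exact mul_le_mul_of_nonneg_left (hK n hmn) (hpos n hmn)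
        · have h1 := (mem_Ico.mp hi).1
          rw [norm_smul, Real.norm_of_nonneg (by linarith [hf i h1])]
          exact mul_le_mul_of_nonneg_left (hK _ (by omega)) (by linarith [hf i h1])
    _ = K * f m := by rw [← sum_mul, tele n hmn]; ring

open Finset in
theorem sum_conv {E : Type*} [AddCommMonoid E] (F : ℕ → ℕ → E) (N : ℕ) :
    ∑ n ∈ Ioc 0 N, ∑ x ∈ n.divisorsAntidiagonal, F x.1 x.2
      = ∑ m ∈ Ioc 0 N, ∑ k ∈ Ioc 0 (N / m), F m k := by
  rw [sum_sigma', sum_sigma']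
  refine sum_nbij' (fun x => ⟨x.2.1, x.2.2⟩) (fun x => ⟨x.1 * x.2, (x.1, x.2)⟩) ?_ ?_ ?_ ?_ ?_
  · rintro ⟨n, a, b⟩ h
    simp only [mem_sigma, mem_Ioc, Nat.mem_divisorsAntidiagonal] at h ⊢
    obtain ⟨⟨h1, h2⟩, rfl, h3⟩ := h
    have ha : 0 < a := Nat.pos_of_ne_zero (by rintro rfl; simp at h3)
    have hb : 0 < b := Nat.pos_of_ne_zero (by rintro rfl; simp at h3)
    refine ⟨⟨ha, le_trans (Nat.le_mul_of_pos_right _ hb) h2⟩, hb, ?_⟩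
    rw [Nat.le_div_iff_mul_le ha, mul_comm]; exact h2
  · rintro ⟨a, b⟩ h
    simp only [mem_sigma, mem_Ioc, Nat.mem_divisorsAntidiagonal] at h ⊢
    obtain ⟨⟨h1, h2⟩, h3, h4⟩ := h
    rw [Nat.le_div_iff_mul_le h1, mul_comm] at h4
    have := Nat.mul_pos h1 h3
    exact ⟨⟨this, h4⟩, by simp [this.ne']⟩
  · rintro ⟨n, a, b⟩ h
    simp only [mem_sigma, mem_Ioc, Nat.mem_divisorsAntidiagonal] at h ⊢
    obtain ⟨⟨h1, h2⟩, rfl, h3⟩ := h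
    rfl
  · rintro ⟨a, b⟩ h; rfl
  · rintro ⟨n, a, b⟩ h; rfl

open Finset in
theorem sum_period {E : Type*} [AddCommMonoid E] (d : ℕ) [NeZero d] (f : ZMod d → E) (m : ℕ) :
    ∑ i ∈ Ico m (m + d), f (i : ZMod d) = ∑ x : ZMod d, f x := by
  have inj : Set.InjOn (fun i : ℕ => (i : ZMod d)) (Ico m (m + d) : Finset ℕ) := by
    intro i hi j hj hij
    simp only [coe_Ico, Set.mem_Ico] at hi hj
    have h : i ≡ j [MOD d] := (ZMod.natCast_eq_natCast_iff _ _ _).mp hij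
    rcases le_total i j with hle | hle
    · have := (Nat.modEq_iff_dvd' hle).mp h
      have := Nat.eq_zero_of_dvd_of_lt this (by omega)
      omega
    · have := (Nat.modEq_iff_dvd' hle).mp h.symm
      have := Nat.eq_zero_of_dvd_of_lt this (by omega)
      omega
  have him : (Ico m (m + d)).image (fun i : ℕ => (i : ZMod d)) = univ := by
    apply eq_univ_of_card
    rw [card_image_of_injOn inj]; simp [ZMod.card]
  rw [← him, sum_image inj]

open Finset in
theorem char_sum_bound {d : ℕ} [NeZero d] (χ : DirichletCharacter ℂ d) (hχ : χ ≠ 1) (m : ℕ) :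
    ∀ k, ‖∑ i ∈ Ico m k, χ (i : ZMod d)‖ ≤ d := by
  intro k
  induction hk : k - m using Nat.strong_induction_on generalizing m with
  | _ t ih =>
    by_cases h : k - m < d
    · calc _ ≤ ∑ i ∈ Ico m k, ‖χ (i : ZMod d)‖ := norm_sum_le _ _
        _ ≤ ∑ i ∈ Ico m k, 1 := sum_le_sum fun i _ => χ.norm_le_one _
        _ ≤ d := by
          rw [sum_const, Nat.card_Ico, nsmul_eq_mul, mul_one]; exact_mod_cast h.le
    · have hd : 0 < d := NeZero.pos d
      rw [← sum_Ico_consecutive _ (Nat.le_add_right m d) (by omega : m + d ≤ k), sum_period d (fun x => χ x),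
        MulChar.sum_eq_zero_of_ne_one hχ, zero_add]
      exact ih (k - (m+d)) (by omega) _ rfl

open Finset in
/-- value of `L(1,χ)` with an explicit tail bound -/
theorem exists_L1 {d : ℕ} [NeZero d] (χ : DirichletCharacter ℂ d) (hχ : χ ≠ 1) :
    ∃ L : ℂ, ∀ N : ℕ, ‖(∑ n ∈ Ioc 0 N, χ (n : ZMod d) / n) - L‖ ≤ d / (N + 1) := by
  have diff : ∀ N M : ℕ, N ≤ M → ‖(∑ n ∈ Ioc 0 M, χ (n : ZMod d) / n)
      - ∑ n ∈ Ioc 0 N, χ (n : ZMod d) / n‖ ≤ d / (N + 1) := by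
    intro N M h
    have e : (∑ n ∈ Ioc 0 M, χ (n : ZMod d) / n) - ∑ n ∈ Ioc 0 N, χ (n : ZMod d) / n
        = ∑ n ∈ Ico (N+1) (M+1), ((1:ℝ)/n) • χ (n : ZMod d) := by
      rw [sub_eq_iff_eq_add, add_comm, ← sum_Ioc_consecutive _ (Nat.zero_le N) h]
      congr 1
      refine sum_congr ?_ ?_
      · ext; simp only [mem_Ioc, mem_Ico]; omega
      · intro i _
        simp [div_eq_mul_inv, mul_comm]
    rw [e]
    have := abel_bound (fun n : ℕ => χ (n : ZMod d)) (fun n : ℕ => (1:ℝ)/n) (N+1) (M+1) (by omega) d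
      (fun k _ => char_sum_bound χ hχ _ k) ?_ ?_
    · refine this.trans (le_of_eq ?_); push_cast; ring
    · intro i hi
      have : (0:ℝ) < i := by exact_mod_cast (by omega : 0 < i)
      push_cast; gcongr; linarith
    · intro i _; positivity
  have cs : CauchySeq (fun N : ℕ => ∑ n ∈ Ioc 0 N, χ (n : ZMod d) / n) := by
    refine cauchySeq_of_le_tendsto_0' (fun N : ℕ => (d:ℝ) / (N + 1)) ?_ ?_
    · intro n m h; rw [dist_comm, dist_eq_norm]; exact diff n m h
    · exact tendsto_const_div_atTop_nhds_zero_nat (d:ℝ) |>.comp (Filter.tendsto_add_atTop_nat 1) |>.congr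
        (fun n => by simp)
  obtain ⟨L, hL⟩ := cauchySeq_tendsto_of_complete cs
  refine ⟨L, fun N => ?_⟩
  have h2 : Filter.Tendsto (fun M : ℕ => ‖(∑ n ∈ Ioc 0 M, χ (n : ZMod d) / n)
      - ∑ n ∈ Ioc 0 N, χ (n : ZMod d) / n‖) Filter.atTop
      (nhds ‖L - ∑ n ∈ Ioc 0 N, χ (n : ZMod d) / n‖) := (hL.sub_const _).norm
  rw [norm_sub_rev]
  exact le_of_tendsto h2 (Filter.eventually_atTop.mpr ⟨N, fun M hM => diff N M hM⟩)

open Finset in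
theorem sum_anti_fst {E : Type*} [AddCommMonoid E] (f : ℕ → E) (n : ℕ) :
    ∑ x ∈ n.divisorsAntidiagonal, f x.1 = ∑ i ∈ n.divisors, f i := by
  rw [Nat.sum_divisorsAntidiagonal (f := fun i _ => f i)]

open Finset ArithmeticFunction in
theorem sum_mu (n : ℕ) : ∑ x ∈ n.divisors, moebius x = if n = 1 then 1 else 0 := by
  rw [← coe_mul_zeta_apply, moebius_mul_coe_zeta, one_apply]

theorem log_fact_lower (N : ℕ) (hN : 0 < N) : (N:ℝ) * Real.log N - N ≤ Real.log (N.factorial) := by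
  have h := Real.pow_div_factorial_le_exp (N:ℝ) (by positivity) N
  have hf : (0:ℝ) < N.factorial := by exact_mod_cast N.factorial_pos
  have hN' : (0:ℝ) < N := by exact_mod_cast hN
  have := Real.log_le_log (by positivity) h
  rw [Real.log_exp, Real.log_div (by positivity) (by positivity), Real.log_pow] at this
  linarith

theorem log_fact_upper (N : ℕ) : Real.log (N.factorial) ≤ (N:ℝ) * Real.log N := by
  have hf : (0:ℝ) < N.factorial := by exact_mod_cast N.factorial_pos
  have : (N.factorial : ℝ) ≤ (N:ℝ)^N := by exact_mod_cast N.factorial_le_pow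
  have := Real.log_le_log hf this
  rwa [Real.log_pow] at this

open Finset in
theorem log_fact_eq (N : ℕ) : Real.log (N.factorial) = ∑ n ∈ Ioc 0 N, Real.log n := by
  induction N with
  | zero => simp
  | succ k ih =>
    rw [Nat.factorial_succ, sum_Ioc_succ_top (Nat.zero_le k), ← ih]
    push_cast
    rw [Real.log_mul (by positivity) (by positivity)]; ring

theorem log4_le : Real.log 4 ≤ 2 := by
  have : (4:ℝ) = 2^2 := by norm_num
  rw [this, Real.log_pow]
  have := Real.log_two_lt_d9
  push_cast; linarith

open Finset ArithmeticFunction in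
theorem psi_bound (N : ℕ) : ∑ n ∈ Ioc 0 N, vonMangoldt n ≤ 6 * N := by
  have h := Chebyshev.psi_le_const_mul_self (x := (N:ℝ)) (by positivity)
  rw [Chebyshev.psi, Nat.floor_natCast] at h
  refine h.trans ?_
  gcongr
  linarith [log4_le]

theorem natdiv_tail (N m d : ℕ) (hN : 0 < N) (hm : 0 < m) :
    (d:ℝ) / (((N / m : ℕ) : ℝ) + 1) ≤ d * m / N := by
  have hN' : (0:ℝ) < N := by exact_mod_cast hN
  have hm' : (0:ℝ) < m := by exact_mod_cast hm
  have h : (N:ℝ) / m ≤ ((N / m : ℕ) : ℝ) + 1 := by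
    rw [div_le_iff₀ hm']
    have := Nat.lt_div_mul_add (a := N) hm
    have : N ≤ (N / m + 1) * m := by linarith [this]
    exact_mod_cast this
  calc _ ≤ (d:ℝ) / ((N:ℝ) / m) := by gcongr
    _ = _ := by field_simp

open Finset ArithmeticFunction in
theorem mertens1 (N : ℕ) (hN : 0 < N) :
    Real.log N - 1 ≤ ∑ n ∈ Ioc 0 N, vonMangoldt n / n ∧
    ∑ n ∈ Ioc 0 N, vonMangoldt n / n ≤ Real.log N + 6 := by
  have hN' : (0:ℝ) < N := by exact_mod_cast hN
  have e : Real.log (N.factorial) = ∑ m ∈ Ioc 0 N, vonMangoldt m * ((N / m : ℕ):ℝ) := by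
    rw [log_fact_eq]
    have := sum_conv (fun m _ => vonMangoldt m) N
    simp only [sum_const, Nat.card_Ioc, Nat.sub_zero, nsmul_eq_mul] at this
    rw [sum_congr rfl (fun m _ => mul_comm _ _), ← this]
    refine sum_congr rfl fun n hn => ?_
    rw [← vonMangoldt_sum, sum_anti_fst (fun i => vonMangoldt i)]
  have h1 := log_fact_lower N hN
  have h2 := log_fact_upper N
  have h3 := psi_bound N
  have u : Real.log (N.factorial) ≤ N * ∑ n ∈ Ioc 0 N, vonMangoldt n / n := by
    rw [e, mul_sum]
    refine sum_le_sum fun m hm => ?_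
    have : ((N / m : ℕ):ℝ) ≤ N / m := Nat.cast_div_le
    have hh : 0 ≤ vonMangoldt m := vonMangoldt_nonneg
    calc _ ≤ vonMangoldt m * ((N:ℝ)/m) := by gcongr
      _ = _ := by ring
  have l : N * ∑ n ∈ Ioc 0 N, vonMangoldt n / n ≤ Real.log (N.factorial) + 6 * N := by
    rw [e, mul_sum]
    refine le_trans ?_ (add_le_add_right h3 _)
    rw [← sum_add_distrib]
    refine sum_le_sum fun m hm => ?_
    have hm0 : 0 < m := (mem_Ioc.mp hm).1
    have hm' : (0:ℝ) < m := by exact_mod_cast hm0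
    have hh : 0 ≤ vonMangoldt m := vonMangoldt_nonneg
    have : (N:ℝ) / m ≤ ((N / m : ℕ) : ℝ) + 1 := by
      rw [div_le_iff₀ hm']
      have := Nat.lt_div_mul_add (a := N) hm0
      have : N ≤ (N / m + 1) * m := by linarith [this]
      exact_mod_cast this
    calc _ = vonMangoldt m * ((N:ℝ)/m) := by ring
      _ ≤ vonMangoldt m * (((N / m : ℕ) : ℝ) + 1) := by gcongr
      _ = _ := by ring
  constructor
  · have : (N:ℝ) * (Real.log N - 1) ≤ N * ∑ n ∈ Ioc 0 N, vonMangoldt n / n := by linarith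
    exact le_of_mul_le_mul_left this hN'
  · have : (N:ℝ) * ∑ n ∈ Ioc 0 N, vonMangoldt n / n ≤ N * (Real.log N + 6) := by linarith
    exact le_of_mul_le_mul_left this hN'

open Finset ArithmeticFunction in
noncomputable def Mchi {d : ℕ} (χ : DirichletCharacter ℂ d) (N : ℕ) : ℂ :=
  ∑ n ∈ Ioc 0 N, χ (n : ZMod d) * ((vonMangoldt n : ℝ) : ℂ) / n

open Finset in
theorem log_char_sum {d : ℕ} [NeZero d] (χ : DirichletCharacter ℂ d) (hχ : χ ≠ 1) (N : ℕ) :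
    ‖∑ n ∈ Ioc 0 N, χ (n : ZMod d) * (Real.log n : ℂ) / n‖ ≤ 2 * d := by
  have hd : (1:ℝ) ≤ d := by exact_mod_cast NeZero.one_le
  have hl2 := Real.log_two_lt_d9
  have triv : ∀ n : ℕ, ‖χ (n : ZMod d) * (Real.log n : ℂ) / n‖ ≤ Real.log n / n := by
    intro n
    rw [norm_div, norm_mul, Complex.norm_real, Real.norm_of_nonneg (Real.log_natCast_nonneg n), Complex.norm_natCast]
    gcongr
    exact mul_le_of_le_one_left (Real.log_natCast_nonneg n) (χ.norm_le_one _)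
  have small : ∀ N : ℕ, N ≤ 2 → ‖∑ n ∈ Ioc 0 N, χ (n : ZMod d) * (Real.log n : ℂ) / n‖ ≤ 1 := by
    intro N hN
    have h2 := triv 2
    norm_num at h2
    interval_cases N
    · simp
    · simp
    · rw [sum_Ioc_succ_top (by norm_num), sum_Ioc_succ_top (by norm_num)]
      norm_num
      linarith
  by_cases h : N ≤ 2
  · exact (small N h).trans (by linarith)
  · rw [← sum_Ioc_consecutive _ (Nat.zero_le 2) (by omega)]
    refine (norm_add_le _ _).trans ?_
    have e : ∑ n ∈ Ioc 2 N, χ (n : ZMod d) * (Real.log n : ℂ) / n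
      = ∑ n ∈ Ico 3 (N+1), (Real.log n / n) • χ (n : ZMod d) := by
      refine sum_congr ?_ ?_
      · ext; simp only [mem_Ioc, mem_Ico]; omega
      · intro i _
        rw [Complex.real_smul]; push_cast; ring
    have hexp := Real.exp_one_lt_d9
    have := abel_bound (fun n : ℕ => χ (n : ZMod d)) (fun n : ℕ => Real.log n/n) 3 (N+1) (by omega) d
      (fun k _ => char_sum_bound χ hχ _ k) ?_ ?_
    · rw [e]
      have h3 : Real.log (3:ℕ) / (3:ℕ) ≤ 1 := by
        rw [div_le_one (by norm_num)]
        have := Real.log_le_sub_one_of_pos (x := ((3:ℕ):ℝ)) (by norm_num)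
        linarith
      have := mul_le_mul_of_nonneg_left h3 (by linarith : (0:ℝ) ≤ d)
      linarith [small 2 le_rfl]
    · intro i hi
      have hi' : (3:ℝ) ≤ i := by exact_mod_cast hi
      refine Real.log_div_self_antitoneOn ?_ ?_ (by push_cast; linarith)
      · change Real.exp 1 ≤ (i:ℝ); linarith
      · change Real.exp 1 ≤ ((i+1 : ℕ):ℝ); push_cast; linarith
    · intro i _; exact div_nonneg (Real.log_natCast_nonneg i) (by positivity)

open Finset ArithmeticFunction in
theorem L_mul_M {d : ℕ} [NeZero d] (χ : DirichletCharacter ℂ d) (hχ : χ ≠ 1) (L : ℂ)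
    (hL : ∀ N : ℕ, ‖(∑ n ∈ Ioc 0 N, χ (n : ZMod d) / n) - L‖ ≤ d / (N + 1)) (N : ℕ) (hN : 0 < N) :
    ‖L‖ * ‖Mchi χ N‖ ≤ 8 * d := by
  have hN' : (0:ℝ) < N := by exact_mod_cast hN
  have e : ∑ n ∈ Ioc 0 N, χ (n : ZMod d) * (Real.log n : ℂ) / n
      = ∑ m ∈ Ioc 0 N, χ (m : ZMod d) * ((vonMangoldt m : ℝ) : ℂ) / m *
          ∑ k ∈ Ioc 0 (N / m), χ (k : ZMod d) / k := by
    have := sum_conv (fun m k => χ (m : ZMod d) * ((vonMangoldt m : ℝ) : ℂ) / m * (χ (k : ZMod d) / k)) N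
    simp only [← mul_sum] at this
    rw [← this]
    refine sum_congr rfl fun n hn => ?_
    rw [← vonMangoldt_sum, ← sum_anti_fst (fun i => vonMangoldt i)]
    push_cast
    rw [mul_sum, sum_div]
    refine sum_congr rfl fun x hx => ?_
    have hx' := (Nat.mem_divisorsAntidiagonal.mp hx).1
    rw [← hx']; push_cast; rw [map_mul]
    ring
  have e2 : L * Mchi χ N = ∑ n ∈ Ioc 0 N, χ (n : ZMod d) * (Real.log n : ℂ) / n
      - ∑ m ∈ Ioc 0 N, χ (m : ZMod d) * ((vonMangoldt m : ℝ) : ℂ) / m *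
          ((∑ k ∈ Ioc 0 (N / m), χ (k : ZMod d) / k) - L) := by
    rw [e, Mchi, mul_sum, ← sum_sub_distrib]
    exact sum_congr rfl fun _ _ => by ring
  rw [← norm_mul, e2]
  refine (norm_sub_le _ _).trans ?_
  have h1 := log_char_sum χ hχ N
  have h2 : ‖∑ m ∈ Ioc 0 N, χ (m : ZMod d) * ((vonMangoldt m : ℝ) : ℂ) / m *
          ((∑ k ∈ Ioc 0 (N / m), χ (k : ZMod d) / k) - L)‖ ≤ 6 * d := by
    calc _ ≤ ∑ m ∈ Ioc 0 N, vonMangoldt m * (d / N) := by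
          refine norm_sum_le_of_le _ fun m hm => ?_
          have hm0 : 0 < m := (mem_Ioc.mp hm).1
          have hm' : (0:ℝ) < m := by exact_mod_cast hm0
          have hh : 0 ≤ vonMangoldt m := vonMangoldt_nonneg
          rw [norm_mul, norm_div, norm_mul, Complex.norm_real, Real.norm_of_nonneg hh, Complex.norm_natCast]
          calc _ ≤ 1 * vonMangoldt m / m * (d * m / N) := by
                gcongr
                · exact χ.norm_le_one _
                · exact (hL _).trans (natdiv_tail N m d hN hm0)
            _ = _ := by field_simp
      _ = (∑ m ∈ Ioc 0 N, vonMangoldt m) * (d / N) := by rw [sum_mul]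
      _ ≤ 6 * N * (d / N) := by gcongr; exact psi_bound N
      _ = _ := by field_simp
  linarith

open Finset ArithmeticFunction in
theorem M_add_log {d : ℕ} [NeZero d] (χ : DirichletCharacter ℂ d) (L : ℂ)
    (hL : ∀ N : ℕ, ‖(∑ n ∈ Ioc 0 N, χ (n : ZMod d) / n) - L‖ ≤ d / (N + 1)) (N : ℕ) (hN : 0 < N) :
    ‖Mchi χ N + Real.log N‖ ≤ ‖L‖ * (Real.log N * (1 + Real.log N)) + d := by
  have hN' : (0:ℝ) < N := by exact_mod_cast hN
  have e : Mchi χ N + Real.log N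
      = ∑ m ∈ Ioc 0 N, χ (m : ZMod d) * ((moebius m : ℤ) : ℂ) * ((Real.log N - Real.log m : ℝ) : ℂ) / m *
          ∑ k ∈ Ioc 0 (N / m), χ (k : ZMod d) / k := by
    have := sum_conv (fun m k => χ (m : ZMod d) * ((moebius m : ℤ) : ℂ) *
      ((Real.log N - Real.log m : ℝ) : ℂ) / m * (χ (k : ZMod d) / k)) N
    simp only [← mul_sum] at this
    rw [← this]
    have e1 : (Real.log N : ℂ) = ∑ n ∈ Ioc 0 N, if n = 1 then (Real.log N : ℂ) else 0 := by
      rw [sum_ite_eq' (Ioc 0 N) 1]; simp; omega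
    rw [e1, Mchi, ← sum_add_distrib]
    refine sum_congr rfl fun n hn => ?_
    have hn0 : n ≠ 0 := by have := (mem_Ioc.mp hn).1; omega
    have i1 : ∑ x ∈ n.divisorsAntidiagonal, χ (x.1 : ZMod d) * ((moebius x.1 : ℤ) : ℂ) *
      ((Real.log N - Real.log x.1 : ℝ) : ℂ) / x.1 * (χ (x.2 : ZMod d) / x.2)
      = χ (n : ZMod d) / n * ((∑ x ∈ n.divisors, (moebius x : ℝ) * (Real.log N - Real.log x) : ℝ) : ℂ) := by
      rw [← sum_anti_fst (fun x => (moebius x : ℝ) * (Real.log N - Real.log x))]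
      push_cast
      rw [mul_sum]
      refine sum_congr rfl fun x hx => ?_
      have hx' := (Nat.mem_divisorsAntidiagonal.mp hx).1
      rw [← hx']; push_cast; rw [map_mul]
      ring
    rw [i1]
    have i2 : ∑ x ∈ n.divisors, (moebius x : ℝ) * (Real.log N - Real.log x)
        = (if n = 1 then Real.log N else 0) + vonMangoldt n := by
      simp only [mul_sub, sum_sub_distrib, ← sum_mul]
      have hml : ∑ x ∈ n.divisors, (moebius x : ℝ) * Real.log x = - vonMangoldt n := sum_moebius_mul_log_eq
      rw [hml]
      have : ∑ x ∈ n.divisors, (moebius x : ℝ) = if n = 1 then 1 else 0 := by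
        have := sum_mu n
        exact_mod_cast this
      rw [this]; split_ifs <;> simp
    rw [i2]
    split_ifs with h
    · subst h; simp
    · push_cast; ring
  have e2 : Mchi χ N + Real.log N = L * (∑ m ∈ Ioc 0 N, χ (m : ZMod d) * ((moebius m : ℤ) : ℂ) * ((Real.log N - Real.log m : ℝ) : ℂ) / m)
      + ∑ m ∈ Ioc 0 N, χ (m : ZMod d) * ((moebius m : ℤ) : ℂ) * ((Real.log N - Real.log m : ℝ) : ℂ) / m *
          ((∑ k ∈ Ioc 0 (N / m), χ (k : ZMod d) / k) - L) := by
    rw [e, mul_sum, ← sum_add_distrib]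
    exact sum_congr rfl fun _ _ => by ring
  have lognn : ∀ m ∈ Ioc 0 N, 0 ≤ Real.log N - Real.log m := by
    intro m hm
    have hm0 : 0 < m := (mem_Ioc.mp hm).1
    have hm' : (0:ℝ) < m := by exact_mod_cast hm0
    have : Real.log m ≤ Real.log N := Real.log_le_log hm' (by exact_mod_cast (mem_Ioc.mp hm).2)
    linarith
  have nb : ∀ m ∈ Ioc 0 N, ‖χ (m : ZMod d) * ((moebius m : ℤ) : ℂ) * ((Real.log N - Real.log m : ℝ) : ℂ) / m‖
      ≤ (Real.log N - Real.log m) / m := by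
    intro m hm
    rw [norm_div, norm_mul, norm_mul, Complex.norm_real, Real.norm_of_nonneg (lognn m hm), Complex.norm_natCast]
    have h1 : ‖((moebius m : ℤ) : ℂ)‖ ≤ 1 := by
      rw [Complex.norm_intCast]; exact_mod_cast abs_moebius_le_one
    have h2 := χ.norm_le_one (m : ZMod d)
    gcongr
    have := mul_le_mul h2 h1 (norm_nonneg _) zero_le_one
    exact mul_le_of_le_one_left (lognn m hm) (by linarith)
  rw [e2]
  refine (norm_add_le _ _).trans (add_le_add ?_ ?_)
  · rw [norm_mul]
    gcongr
    calc _ ≤ ∑ m ∈ Ioc 0 N, Real.log N * ((m:ℝ)⁻¹) := by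
          refine norm_sum_le_of_le _ fun m hm => (nb m hm).trans ?_
          rw [div_eq_mul_inv]
          gcongr
          linarith [Real.log_natCast_nonneg m]
      _ ≤ _ := by
          rw [← mul_sum]
          gcongr
          have := harmonic_le_one_add_log N
          rw [harmonic_eq_sum_Icc] at this
          push_cast at this
          exact this
  · calc _ ≤ ∑ m ∈ Ioc 0 N, (Real.log N - Real.log m) * (d / N) := by
          refine norm_sum_le_of_le _ fun m hm => ?_
          have hm0 : 0 < m := (mem_Ioc.mp hm).1
          have hm' : (0:ℝ) < m := by exact_mod_cast hm0
          rw [norm_mul]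
          calc _ ≤ (Real.log N - Real.log m) / m * (d * m / N) := by
                gcongr
                · exact div_nonneg (lognn m hm) hm'.le
                · exact nb m hm
                · exact (hL _).trans (natdiv_tail N m d hN hm0)
            _ = _ := by field_simp
      _ = (N * Real.log N - Real.log N.factorial) * (d / N) := by
          rw [← sum_mul, sum_sub_distrib, log_fact_eq]; simp
      _ ≤ N * (d / N) := by gcongr; linarith [log_fact_lower N hN]
      _ = _ := by field_simp

theorem exists_nat_log (T : ℝ) (hT : 0 ≤ T) : ∃ N : ℕ, 0 < N ∧ T ≤ Real.log N ∧ Real.log N ≤ T + 1 := by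
  refine ⟨⌈Real.exp T⌉₊, Nat.ceil_pos.mpr (Real.exp_pos T), ?_, ?_⟩
  · rw [Real.le_log_iff_exp_le (by exact_mod_cast Nat.ceil_pos.mpr (Real.exp_pos T))]
    exact Nat.le_ceil _
  · rw [Real.log_le_iff_le_exp (by exact_mod_cast Nat.ceil_pos.mpr (Real.exp_pos T))]
    have h1 := (Nat.ceil_lt_add_one (Real.exp_pos T).le).le
    rw [Real.exp_add]
    have h2 := Real.add_one_le_exp (1:ℝ)
    have h3 := Real.one_le_exp hT
    nlinarith

open Finset ArithmeticFunction in
theorem three_four_one {d : ℕ} (χ : DirichletCharacter ℂ d) (N : ℕ) :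
    0 ≤ 3 * (∑ n ∈ Ioc 0 N, vonMangoldt n / n) + 4 * (Mchi χ N).re + (Mchi (χ^2) N).re := by
  unfold Mchi
  rw [Complex.re_sum, Complex.re_sum, mul_sum, mul_sum, ← sum_add_distrib, ← sum_add_distrib]
  refine sum_nonneg fun n hn => ?_
  have hh : 0 ≤ vonMangoldt n / n := div_nonneg vonMangoldt_nonneg (by positivity)
  have e : ∀ z : ℂ, (z * ((vonMangoldt n : ℝ) : ℂ) / n).re = z.re * (vonMangoldt n / n) := by
    intro z
    rw [mul_div_assoc, show ((vonMangoldt n : ℝ) : ℂ) / (n:ℂ) = ((vonMangoldt n / n : ℝ) : ℂ) by push_cast; rfl,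
      Complex.re_mul_ofReal]
  rw [e, e]
  have h1 : ‖χ (n : ZMod d)‖ ≤ 1 := χ.norm_le_one _
  set z := χ (n : ZMod d) with hz
  have h2 : (χ^2) (n : ZMod d) = z^2 := by
    rw [hz, MulChar.pow_apply' _ (by norm_num)]
  rw [h2]
  have h3 : z.re^2 + z.im^2 ≤ 1 := by
    have := Complex.sq_norm z
    rw [Complex.normSq_apply] at this
    nlinarith [norm_nonneg z]
  have h4 : (z^2).re = z.re^2 - z.im^2 := by rw [sq, Complex.mul_re]; ring
  rw [h4]
  have : 0 ≤ 3 + 4 * z.re + (z.re^2 - z.im^2) := by nlinarith [sq_nonneg (z.re + 1)]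
  nlinarith [mul_nonneg hh this]

open Finset in
theorem L_lower_complex {d : ℕ} [NeZero d] (χ : DirichletCharacter ℂ d) (hχ2 : χ^2 ≠ 1) (L : ℂ)
    (hL : ∀ N : ℕ, ‖(∑ n ∈ Ioc 0 N, χ (n : ZMod d) / n) - L‖ ≤ d / (N + 1)) :
    1 / (20000 * (d:ℝ)^2) ≤ ‖L‖ := by
  have hd : (1:ℝ) ≤ d := by exact_mod_cast NeZero.one_le
  obtain ⟨L2, hL2⟩ := exists_L1 (χ^2) hχ2
  have ineq : ∀ N : ℕ, 0 < N → Real.log N ≤ 18 + 4 * d + 4 * ‖L‖ * (Real.log N * (1 + Real.log N)) +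
      (Mchi (χ^2) N).re := by
    intro N hN
    have h1 := three_four_one χ N
    have h2 := (mertens1 N hN).2
    have h3 := M_add_log χ L hL N hN
    have h4 := (Complex.re_le_norm (Mchi χ N + Real.log N)).trans h3
    rw [Complex.add_re, Complex.ofReal_re] at h4
    linarith
  have hε := norm_nonneg L
  obtain ⟨N1, hN1, hT1, hT1'⟩ := exists_nat_log (30 * d) (by positivity)
  have i1 := ineq N1 hN1
  set T1 := Real.log N1
  have hT1p : 0 < T1 := by linarith
  rw [div_le_iff₀ (by positivity)]
  by_cases hη : ‖L2‖ ≤ 1 / (1 + T1)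
  · have h3 := M_add_log (χ^2) L2 hL2 N1 hN1
    have h4 := (Complex.re_le_norm (Mchi (χ^2) N1 + Real.log N1)).trans h3
    rw [Complex.add_re, Complex.ofReal_re] at h4
    have h5 : ‖L2‖ * (T1 * (1 + T1)) ≤ T1 := by
      calc _ ≤ 1 / (1 + T1) * (T1 * (1 + T1)) := by gcongr
        _ = T1 := by field_simp
    have h6 : 7 * (d:ℝ) ≤ 4 * ‖L‖ * (T1 * (1 + T1)) := by linarith
    have h7 : T1 * (1 + T1) ≤ (31 * d) * (32 * d) := by gcongr <;> linarith
    have h8 : 7 * (d:ℝ) ≤ 4 * ‖L‖ * ((31 * d) * (32 * d)) := h6.trans (by gcongr)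
    nlinarith
  · push Not at hη
    have h3 := L_mul_M (χ^2) hχ2 L2 hL2
    have hη2 : 1 / (32 * (d:ℝ)) ≤ ‖L2‖ := by
      refine le_trans ?_ hη.le
      gcongr
      linarith
    obtain ⟨N2, hN2, hT2, hT2'⟩ := exists_nat_log (300 * (d:ℝ)^2) (by positivity)
    have i2 := ineq N2 hN2
    set T2 := Real.log N2
    have h4 : (Mchi (χ^2) N2).re ≤ 256 * (d:ℝ)^2 := by
      refine (Complex.re_le_norm _).trans ?_
      have h5 := h3 N2 hN2
      have h6 : 1 / (32 * (d:ℝ)) * ‖Mchi (χ^2) N2‖ ≤ 8 * d :=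
        le_trans (by gcongr) h5
      rw [div_mul_eq_mul_div, div_le_iff₀ (by positivity)] at h6
      linarith
    have hT2p : 0 < T2 := by nlinarith
    have hd2 : (d:ℝ) ≤ (d:ℝ)^2 := by nlinarith
    have h7 : T2 * (1 + T2) ≤ (301 * (d:ℝ)^2) * (302 * (d:ℝ)^2) := by gcongr <;> linarith
    have h8 : 22 * (d:ℝ)^2 ≤ 4 * ‖L‖ * ((301 * (d:ℝ)^2) * (302 * (d:ℝ)^2)) := by
      have : 4 * ‖L‖ * (T2 * (1 + T2)) ≤ 4 * ‖L‖ * ((301 * (d:ℝ)^2) * (302 * (d:ℝ)^2)) := by gcongr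
      linarith
    have hdp : (0:ℝ) < (d:ℝ)^2 := by positivity
    have h9 : (d:ℝ)^2 * 22 ≤ (d:ℝ)^2 * (4 * ‖L‖ * ((301 ) * (302 * (d:ℝ)^2))) := by linarith
    have := le_of_mul_le_mul_left h9 hdp
    nlinarith

theorem zetaMul_apply {d : ℕ} (χ : DirichletCharacter ℂ d) (n : ℕ) :
    χ.zetaMul n = ∑ e ∈ n.divisors, χ (e : ZMod d) := by
  rw [DirichletCharacter.zetaMul, ArithmeticFunction.coe_zeta_mul_apply]
  refine Finset.sum_congr rfl fun e he => ?_
  have : e ≠ 0 := (Nat.pos_of_mem_divisors he).ne'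
  change (if e = 0 then 0 else χ (e : ZMod d)) = _
  rw [if_neg this]

open ComplexOrder in
theorem zetaMul_sq {d : ℕ} (χ : DirichletCharacter ℂ d) (hχ : χ^2 = 1) (n : ℕ) (hn : 0 < n) :
    1 ≤ χ.zetaMul (n^2) := by
  induction n using Nat.recOnPosPrimePosCoprime with
  | zero => omega
  | one => simp [χ.isMultiplicative_zetaMul.map_one]
  | prime_pow p k hp hk =>
    rw [← pow_mul]
    rw [zetaMul_apply, Nat.sum_divisors_prime_pow hp]
    simp only [Nat.cast_pow, map_pow]
    rcases MulChar.isQuadratic_iff_sq_eq_one.mpr hχ p with h | h | h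
    · simp [h, Finset.sum_range_succ', zero_pow]
    · simp only [h, one_pow, Finset.sum_const, Finset.card_range, nsmul_eq_mul, mul_one]
      exact_mod_cast (by omega : 1 ≤ k * 2 + 1)
    · have : ∀ j : ℕ, ∑ i ∈ Finset.range (j * 2 + 1), (-1:ℂ)^i = 1 := by
        intro j
        induction j with
        | zero => simp
        | succ j ih =>
          rw [show (j+1)*2+1 = j*2+1+1+1 by ring, Finset.sum_range_succ, Finset.sum_range_succ, ih]
          rw [pow_succ (-1:ℂ) (j*2+1)]; ring
      rw [h, this]
  | coprime a b ha hb hab iha ihb =>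
    rw [mul_pow, χ.isMultiplicative_zetaMul.map_mul_of_coprime (Nat.Coprime.pow 2 2 hab)]
    exact one_le_mul_of_one_le_of_one_le (iha (by omega)) (ihb (by omega))

open Finset in
theorem geom_amgm (u : ℝ) (hu : 0 ≤ u) (n : ℕ) : n * u^(n-1) ≤ ∑ i ∈ range n, (u^2)^i := by
  have h := sum_range_reflect (fun i => (u^2)^i) n
  have h2 : ∑ i ∈ range n, (2 * u^(n-1)) ≤ ∑ i ∈ range n, ((u^2)^i + (u^2)^(n-1-i)) := by
    refine sum_le_sum fun i hi => ?_
    have hi' := mem_range.mp hi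
    have e : u^(n-1) = u^i * u^(n-1-i) := by rw [← pow_add]; congr 1; omega
    rw [e, ← pow_mul, ← pow_mul, mul_comm 2 i, mul_comm 2 (n-1-i), pow_mul, pow_mul]
    nlinarith [sq_nonneg (u^i - u^(n-1-i))]
  rw [sum_add_distrib, h] at h2
  simp only [sum_const, card_range, nsmul_eq_mul] at h2
  linarith

/-- the Monsky coefficients -/
noncomputable def monskyB (t : ℝ) (n : ℕ) : ℝ := 1 / (n * (1 - t)) - t^n / (1 - t^n)

open Finset in
theorem monskyB_anti (t : ℝ) (h0 : 0 < t) (h1 : t < 1) (n : ℕ) (hn : 1 ≤ n) :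
    monskyB t (n+1) ≤ monskyB t n := by
  unfold monskyB
  obtain ⟨u, hu, rfl⟩ : ∃ u : ℝ, 0 < u ∧ u^2 = t := ⟨√t, Real.sqrt_pos.mpr h0, Real.sq_sqrt h0.le⟩
  have hu1 : u ≤ 1 := by nlinarith
  have hn' : (0:ℝ) < n := by exact_mod_cast hn
  have g : ∀ k, 1 - (u^2)^k = (1 - u^2) * ∑ i ∈ range k, (u^2)^i := fun k => by
    rw [mul_neg_geom_sum]
  have a1 := geom_amgm u hu.le n
  have a2 := geom_amgm u hu.le (n+1)
  rw [g n, g (n+1)]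
  have eS : ∑ i ∈ range (n+1), (u^2)^i = ∑ i ∈ range n, (u^2)^i + (u^2)^n := sum_range_succ _ _
  have eS2 : (u^2) * ∑ i ∈ range n, (u^2)^i + 1 = ∑ i ∈ range (n+1), (u^2)^i := by
    rw [sum_range_succ', mul_sum]; simp [pow_succ, mul_comm]
  have p1 : 0 < ∑ i ∈ range n, (u^2)^i := lt_of_lt_of_le (by positivity) a1
  have p2 : 0 < ∑ i ∈ range (n+1), (u^2)^i := by rw [eS]; positivity
  set S := ∑ i ∈ range n, (u^2)^i
  set S' := ∑ i ∈ range (n+1), (u^2)^i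
  have key : (n:ℝ) * (n+1) * (u^2)^n ≤ S * S' := by
    have : (n * u^(n-1)) * (((n+1:ℕ):ℝ) * u^(n+1-1)) ≤ S * S' := by gcongr
    refine le_trans ?_ this
    push_cast
    have e1 : (u^2)^n ≤ u^(n-1) * u^n := by
      rw [← pow_add, ← pow_mul]
      exact pow_le_pow_of_le_one hu.le hu1 (by omega)
    have : 0 ≤ (n:ℝ) * (n+1) := by positivity
    nlinarith [mul_le_mul_of_nonneg_left e1 this]
  have hw : 0 < 1 - u^2 := by linarith
  have e1 : (u^2)^n / S - (u^2)^(n+1)/S' = (u^2)^n / (S * S') := by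
    rw [div_sub_div _ _ p1.ne' p2.ne']
    congr 1
    rw [← eS2, pow_succ]; ring
  have e2 : (1:ℝ) / n - 1/(n+1) = 1 / (n * (n+1)) := by field_simp; ring
  have e3 : (u^2)^n / (S * S') ≤ 1 / (n * (n+1)) := by
    rw [div_le_div_iff₀ (by positivity) (by positivity)]; linarith
  have fin : (1:ℝ)/(n+1) - (u^2)^(n+1)/S' ≤ 1/n - (u^2)^n/S := by linarith
  have := div_le_div_of_nonneg_right fin hw.le
  push_cast
  calc _ = ((1:ℝ)/(n+1) - (u^2)^(n+1)/S') / (1 - u^2) := by field_simp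
    _ ≤ _ := this
    _ = _ := by field_simp

theorem monskyB_nonneg (t : ℝ) (h0 : 0 < t) (h1 : t < 1) (n : ℕ) (hn : 1 ≤ n) : 0 ≤ monskyB t n := by
  unfold monskyB
  have hn' : (0:ℝ) < n := by exact_mod_cast hn
  have ht : t^n < 1 := pow_lt_one₀ h0.le h1 (by omega)
  rw [sub_nonneg, div_le_div_iff₀ (by linarith) (by nlinarith)]
  rw [← mul_neg_geom_sum t n]
  have : n * t^n ≤ ∑ i ∈ Finset.range n, t^i := by
    calc (n:ℝ) * t^n = ∑ i ∈ Finset.range n, t^n := by simp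
      _ ≤ _ := Finset.sum_le_sum fun i hi => pow_le_pow_of_le_one h0.le h1.le (Finset.mem_range.mp hi).le
  nlinarith [mul_le_mul_of_nonneg_left this (by linarith : 0 ≤ 1 - t)]

open Finset in
theorem monsky_sum {d : ℕ} [NeZero d] (χ : DirichletCharacter ℂ d) (hχ : χ ≠ 1) (t : ℝ) (h0 : 0 < t) (h1 : t < 1)
    (X : ℕ) : ‖∑ m ∈ Ioc 0 X, χ (m : ZMod d) * (monskyB t m : ℂ)‖ ≤ d := by
  have e : ∑ m ∈ Ioc 0 X, χ (m : ZMod d) * (monskyB t m : ℂ) = ∑ m ∈ Ico 1 (X+1), monskyB t m • χ (m : ZMod d) := by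
    refine sum_congr ?_ ?_
    · ext; simp only [mem_Ioc, mem_Ico]; omega
    · intro i _; rw [Complex.real_smul, mul_comm]
  rw [e]
  have := abel_bound (fun n : ℕ => χ (n : ZMod d)) (monskyB t) 1 (X+1) (by omega) d
      (fun k _ => char_sum_bound χ hχ _ k) (monskyB_anti t h0 h1) (monskyB_nonneg t h0 h1)
  refine this.trans (le_of_eq ?_)
  have : 1 - t ≠ 0 := by linarith
  unfold monskyB
  field_simp
  ring

open Finset in
theorem L_lower_real {d : ℕ} [NeZero d] (χ : DirichletCharacter ℂ d) (hχ : χ ≠ 1) (hχ2 : χ^2 = 1) (L : ℂ)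
    (hL : ∀ N : ℕ, ‖(∑ n ∈ Ioc 0 N, χ (n : ZMod d) / n) - L‖ ≤ d / (N + 1)) :
    1 / (64 * (d:ℝ)) ≤ ‖L‖ := by
  have hd : (1:ℝ) ≤ d := by exact_mod_cast NeZero.one_le
  have hd0 : 0 < d := NeZero.pos d
  set N := 8 * d with hN
  have hNr : (N:ℝ) = 8 * d := by rw [hN]; push_cast; ring
  set t : ℝ := 1 - 1 / (2 * (N:ℝ)^2) with ht
  have hNp : (0:ℝ) < N := by linarith
  have hN2 : (1:ℝ) < 2 * (N:ℝ)^2 := by nlinarith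
  have h1 : t < 1 := by
    have : 0 < 1 / (2 * (N:ℝ)^2) := by positivity
    linarith
  have h0 : 0 < t := by
    have : 1 / (2 * (N:ℝ)^2) < 1 := by rw [div_lt_one (by positivity)]; exact hN2
    linarith
  have h1t : 1 - t = 1 / (2 * (N:ℝ)^2) := by rw [ht]; ring
  have hbern : 1/2 ≤ t^(N^2) := by
    have := one_add_mul_le_pow (a := -(1 / (2 * (N:ℝ)^2))) (by linarith) (N^2)
    refine le_trans (le_of_eq ?_) (this.trans (le_of_eq ?_))
    · push_cast; field_simp; ring
    · rw [ht]; ring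
  have lim : Filter.Tendsto (fun X : ℕ => (X * t^X + d/(X+1)) / (1 - t)) Filter.atTop (nhds ((0 + 0) / (1-t))) := by
    refine Filter.Tendsto.div_const (Filter.Tendsto.add ?_ ?_) _
    · exact tendsto_self_mul_const_pow_of_lt_one h0.le h1
    · exact tendsto_const_div_atTop_nhds_zero_nat (d:ℝ) |>.comp (Filter.tendsto_add_atTop_nat 1) |>.congr
        (fun n => by simp)
  rw [add_zero, zero_div] at lim
  obtain ⟨X, hX1, hX2⟩ := ((lim.eventually (gt_mem_nhds zero_lt_one)).and (Filter.eventually_ge_atTop (N^2))).exists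
  have lower : (N:ℝ) / 2 ≤ (∑ n ∈ Ioc 0 X, χ.zetaMul n * ((t^n : ℝ) : ℂ)).re := by
    have nn : ∀ n, 0 ≤ (χ.zetaMul n).re := fun n => (Complex.le_def.mp (DirichletCharacter.zetaMul_nonneg hχ2 n)).1
    rw [Complex.re_sum]
    simp only [Complex.re_mul_ofReal]
    calc (N:ℝ)/2 = ∑ k ∈ Ioc 0 N, (1/2:ℝ) := by simp; ring
      _ ≤ ∑ k ∈ Ioc 0 N, (χ.zetaMul (k^2)).re * t^(k^2) := by
          refine sum_le_sum fun k hk => ?_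
          have hk' := mem_Ioc.mp hk
          have := (Complex.le_def.mp (zetaMul_sq χ hχ2 k hk'.1)).1
          rw [Complex.one_re] at this
          have h3 : t^(N^2) ≤ t^(k^2) := pow_le_pow_of_le_one h0.le h1.le (Nat.pow_le_pow_left hk'.2 2)
          nlinarith
      _ = ∑ n ∈ (Ioc 0 N).image (fun k => k^2), (χ.zetaMul n).re * t^n := by
          rw [sum_image]
          intro a _ b _ hab
          exact Nat.pow_left_injective (by norm_num : 2 ≠ 0) hab
      _ ≤ _ := by
          refine sum_le_sum_of_subset_of_nonneg ?_ (fun n _ _ => mul_nonneg (nn n) (by positivity))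
          intro n hn
          obtain ⟨k, hk, rfl⟩ := mem_image.mp hn
          have hk' := mem_Ioc.mp hk
          exact mem_Ioc.mpr ⟨pow_pos hk'.1 2, (Nat.pow_le_pow_left hk'.2 2).trans hX2⟩
  have conv : ∑ n ∈ Ioc 0 X, χ.zetaMul n * ((t^n : ℝ) : ℂ)
      = ∑ m ∈ Ioc 0 X, χ (m : ZMod d) * ((∑ k ∈ Ioc 0 (X/m), t^(m*k) : ℝ) : ℂ) := by
    have := sum_conv (fun m k => χ (m : ZMod d) * ((t^(m*k) : ℝ) : ℂ)) X
    simp only [← mul_sum] at this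
    push_cast at this ⊢
    rw [← this]
    refine sum_congr rfl fun n hn => ?_
    rw [zetaMul_apply, ← sum_anti_fst (fun e => χ (e : ZMod d)), sum_mul]
    refine sum_congr rfl fun x hx => ?_
    rw [(Nat.mem_divisorsAntidiagonal.mp hx).1]
  have geo : ∀ m ∈ Ioc 0 X, |∑ k ∈ Ioc 0 (X/m), t^(m*k) - t^m/(1 - t^m)| ≤ t^X / (1 - t) := by
    intro m hm
    have hm' := mem_Ioc.mp hm
    have htm : t^m ≤ t := pow_le_of_le_one h0.le h1.le (by omega)
    have htm0 : 0 < t^m := by positivity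
    have gs : ∀ K : ℕ, ∑ k ∈ Ioc 0 K, t^(m*k) = t^m/(1 - t^m) - t^(m*(K+1))/(1 - t^m) := by
      intro K
      have : 1 - t^m ≠ 0 := by linarith
      induction K with
      | zero => simp
      | succ K ih =>
        rw [sum_Ioc_succ_top (Nat.zero_le K), ih, pow_mul, pow_mul]
        field_simp
        ring
    rw [gs, sub_sub_cancel_left, abs_neg, abs_of_nonneg (div_nonneg (by positivity) (by linarith))]
    gcongr ?_ / ?_
    · refine pow_le_pow_of_le_one h0.le h1.le ?_
      have := Nat.lt_div_mul_add (a := X) hm'.1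
      nlinarith
    · linarith
  have split : ∑ m ∈ Ioc 0 X, χ (m : ZMod d) * ((∑ k ∈ Ioc 0 (X/m), t^(m*k) : ℝ) : ℂ)
      = L / ((1 - t : ℝ) : ℂ) + ((∑ m ∈ Ioc 0 X, χ (m : ZMod d) / m) - L) / ((1 - t : ℝ) : ℂ)
        - ∑ m ∈ Ioc 0 X, χ (m : ZMod d) * (monskyB t m : ℂ)
        + ∑ m ∈ Ioc 0 X, χ (m : ZMod d) * ((∑ k ∈ Ioc 0 (X/m), t^(m*k) - t^m/(1 - t^m) : ℝ) : ℂ) := by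
    rw [← add_div, add_sub_cancel, sum_div, ← sum_sub_distrib, ← sum_add_distrib]
    refine sum_congr rfl fun m _ => ?_
    unfold monskyB
    push_cast
    rw [one_div, mul_inv, div_div, div_eq_mul_inv _ ((m:ℂ) * _), mul_inv]
    ring
  have n1t : ‖((1 - t : ℝ) : ℂ)‖ = 1 - t := by rw [Complex.norm_real, Real.norm_of_nonneg (by linarith)]
  have b1 : ‖L / ((1 - t : ℝ) : ℂ)‖ = ‖L‖ * (2 * (N:ℝ)^2) := by
    rw [norm_div, n1t, h1t]; field_simp
  have b2 : ‖((∑ m ∈ Ioc 0 X, χ (m : ZMod d) / m) - L) / ((1 - t : ℝ) : ℂ)‖ ≤ (d/(X+1)) / (1-t) := by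
    rw [norm_div, n1t]
    have := hL X
    have : 0 < 1 - t := by linarith
    gcongr
  have b3 := monsky_sum χ hχ t h0 h1 X
  have b4 : ‖∑ m ∈ Ioc 0 X, χ (m : ZMod d) * ((∑ k ∈ Ioc 0 (X/m), t^(m*k) - t^m/(1 - t^m) : ℝ) : ℂ)‖
      ≤ X * t^X / (1 - t) := by
    calc _ ≤ ∑ m ∈ Ioc 0 X, t^X / (1-t) := by
          refine norm_sum_le_of_le _ fun m hm => ?_
          rw [norm_mul, Complex.norm_real]
          exact (mul_le_of_le_one_left (norm_nonneg _) (χ.norm_le_one _)).trans (geo m hm)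
      _ = _ := by simp; ring
  have tot := lower.trans (Complex.re_le_norm _)
  rw [conv, split] at tot
  have tri := norm_add_le (L / ((1 - t : ℝ) : ℂ) + ((∑ m ∈ Ioc 0 X, χ (m : ZMod d) / m) - L) / ((1 - t : ℝ) : ℂ)
        - ∑ m ∈ Ioc 0 X, χ (m : ZMod d) * (monskyB t m : ℂ)) (∑ m ∈ Ioc 0 X, χ (m : ZMod d) * ((∑ k ∈ Ioc 0 (X/m), t^(m*k) - t^m/(1 - t^m) : ℝ) : ℂ))
  have tri2 := norm_sub_le (L / ((1 - t : ℝ) : ℂ) + ((∑ m ∈ Ioc 0 X, χ (m : ZMod d) / m) - L) / ((1 - t : ℝ) : ℂ))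
     (∑ m ∈ Ioc 0 X, χ (m : ZMod d) * (monskyB t m : ℂ))
  have tri3 := norm_add_le (L / ((1 - t : ℝ) : ℂ)) (((∑ m ∈ Ioc 0 X, χ (m : ZMod d) / m) - L) / ((1 - t : ℝ) : ℂ))
  rw [add_div] at hX1
  have fin : (N:ℝ)/2 ≤ ‖L‖ * (2 * (N:ℝ)^2) + d + 1 := by linarith
  rw [hNr] at fin
  rw [div_le_iff₀ (by positivity)]
  have : (d:ℝ) * 2 ≤ d * (‖L‖ * (128 * d)) := by nlinarith
  have := le_of_mul_le_mul_left this (by linarith)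
  linarith

section
open Finset ArithmeticFunction

theorem nonprime_vM : ∃ C : ℝ, 0 < C ∧ ∀ N : ℕ,
    ∑ n ∈ (Ioc 0 N).filter (fun n => ¬ n.Prime), vonMangoldt n / n ≤ C := by
  have hs : Summable (fun n : ℕ => 4 * ((n:ℝ) ^ (3/2:ℝ))⁻¹) :=
    (Real.summable_nat_rpow_inv.mpr (by norm_num)).mul_left 4
  refine ⟨∑' n : ℕ, 4 * ((n:ℝ) ^ (3/2:ℝ))⁻¹ + 1, by positivity, fun N => ?_⟩
  have h1 : ∑ n ∈ (Ioc 0 N).filter (fun n => ¬ n.Prime), vonMangoldt n / n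
      ≤ ∑ x ∈ (Icc 2 N) ×ˢ (Icc 2 N), Real.log x.1 / (x.1:ℝ)^x.2 := by
    rw [← sum_filter_add_sum_filter_not _ (fun n => IsPrimePow n)]
    have z : ∑ n ∈ ((Ioc 0 N).filter (fun n => ¬ n.Prime)).filter (fun n => ¬ IsPrimePow n),
        vonMangoldt n / n = 0 := by
      refine sum_eq_zero fun n hn => ?_
      rw [vonMangoldt_apply, if_neg (mem_filter.mp hn).2, zero_div]
    rw [z, add_zero]
    have hdec : ∀ n ∈ ((Ioc 0 N).filter (fun n => ¬ n.Prime)).filter (fun n => IsPrimePow n),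
        n.minFac.Prime ∧ n.minFac ^ (n.factorization n.minFac) = n ∧ 2 ≤ n.factorization n.minFac ∧ n ≤ N := by
      intro n hn
      simp only [mem_filter, mem_Ioc] at hn
      obtain ⟨⟨⟨h0, hN⟩, hp⟩, hpp⟩ := hn
      have e := hpp.minFac_pow_factorization_eq
      have pm := Nat.minFac_prime hpp.ne_one
      refine ⟨pm, e, ?_, hN⟩
      by_contra hlt
      have : n.factorization n.minFac = 0 ∨ n.factorization n.minFac = 1 := by omega
      rcases this with h | h
      · rw [h, pow_zero] at e; exact hpp.ne_one e.symm
      · rw [h, pow_one] at e; rw [e] at pm; exact hp pm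
    calc _ = ∑ n ∈ ((Ioc 0 N).filter (fun n => ¬ n.Prime)).filter (fun n => IsPrimePow n),
          (fun x : ℕ × ℕ => Real.log x.1 / (x.1:ℝ)^x.2) (n.minFac, n.factorization n.minFac) := by
          refine sum_congr rfl fun n hn => ?_
          rw [vonMangoldt_apply, if_pos (mem_filter.mp hn).2]
          dsimp only
          congr 1
          exact_mod_cast (hdec n hn).2.1.symm
      _ = ∑ x ∈ (((Ioc 0 N).filter (fun n => ¬ n.Prime)).filter (fun n => IsPrimePow n)).image
            (fun n => ((n.minFac, n.factorization n.minFac) : ℕ × ℕ)), Real.log (x.1:ℝ) / (x.1:ℝ)^x.2 := by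
          rw [sum_image]
          intro m hm n hn h
          simp only [Prod.mk.injEq] at h
          rw [← (hdec m hm).2.1, ← (hdec n hn).2.1, h.2, h.1]
      _ ≤ _ := by
          refine sum_le_sum_of_subset_of_nonneg ?_ ?_
          · intro x hx
            obtain ⟨n, hn, rfl⟩ := mem_image.mp hx
            obtain ⟨hp, he, h2, hN⟩ := hdec n hn
            have h0 : 0 < n := by
              simp only [mem_filter, mem_Ioc] at hn; exact hn.1.1.1
            simp only [mem_product, mem_Icc]
            refine ⟨⟨hp.two_le, (Nat.minFac_le h0).trans hN⟩, h2, ?_⟩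
            exact (Nat.factorization_lt _ h0.ne').le.trans hN
          · intro x _ _
            exact div_nonneg (Real.log_natCast_nonneg _) (by positivity)
  refine h1.trans ?_
  rw [sum_product]
  calc _ ≤ ∑ p ∈ Icc 2 N, 4 * ((p:ℝ) ^ (3/2:ℝ))⁻¹ := by
        refine sum_le_sum fun p hp => ?_
        have hp2 : (2:ℝ) ≤ p := by exact_mod_cast (mem_Icc.mp hp).1
        have hp0 : (0:ℝ) < p := by linarith
        dsimp only
        have g : ∀ K : ℕ, ∑ k ∈ Icc 2 K, ((p:ℝ)^k)⁻¹ ≤ 2 / (p:ℝ)^2 - 1 / (p:ℝ)^(K) ∨ K < 2 := by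
          intro K
          induction K with
          | zero => right; norm_num
          | succ K ih =>
            rcases Nat.lt_or_ge (K+1) 2 with h | h
            · right; exact h
            left
            rw [sum_Icc_succ_top h]
            rcases ih with ih | ih
            · have : 2 * ((p:ℝ)^(K+1))⁻¹ ≤ 1 / (p:ℝ)^K := by
                rw [pow_succ, mul_inv, one_div]
                have : (p:ℝ)⁻¹ ≤ 2⁻¹ := by gcongr
                have h3 : 0 < ((p:ℝ)^K)⁻¹ := by positivity
                nlinarith
              rw [one_div ((p:ℝ)^(K+1))]
              linarith
            · have : K = 1 := by omega
              subst this
              have : (2:ℝ) / (p:ℝ)^2 - 1/(p:ℝ)^(1+1) = ((p:ℝ)^2)⁻¹ := by field_simp; norm_num; try ring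
              rw [this]
              simp
        have g2 : ∑ k ∈ Icc 2 N, ((p:ℝ)^k)⁻¹ ≤ 2 / (p:ℝ)^2 := by
          rcases g N with h | h
          · refine h.trans ?_
            have : 0 < 1 / (p:ℝ)^N := by positivity
            linarith
          · rw [Icc_eq_empty (by omega)]; simp; positivity
        rw [show ∑ y ∈ Icc 2 N, Real.log (p:ℝ) / (p:ℝ)^y = Real.log p * ∑ k ∈ Icc 2 N, ((p:ℝ)^k)⁻¹ by
          rw [mul_sum]; rfl]
        have hl : Real.log p ≤ 2 * (p:ℝ)^(1/2:ℝ) := by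
          have := Real.log_le_rpow_div hp0.le (ε := 1/2) (by norm_num)
          linarith
        calc _ ≤ 2 * (p:ℝ)^(1/2:ℝ) * (2 / (p:ℝ)^2) := by
              gcongr
          _ = _ := by
              rw [show (3/2:ℝ) = 2 - 1/2 by norm_num, Real.rpow_sub hp0]
              norm_num
              field_simp
              norm_num
    _ ≤ ∑' n : ℕ, 4 * ((n:ℝ) ^ (3/2:ℝ))⁻¹ := hs.sum_le_tsum _ (fun _ _ => by positivity)
    _ ≤ _ := by linarith

theorem Mchi_bound {d : ℕ} [NeZero d] (χ : DirichletCharacter ℂ d) (hχ : χ ≠ 1) (N : ℕ) (hN : 0 < N) :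
    ‖Mchi χ N‖ ≤ 160000 * (d:ℝ)^3 := by
  have hd : (1:ℝ) ≤ d := by exact_mod_cast NeZero.one_le
  obtain ⟨L, hL⟩ := exists_L1 χ hχ
  have h1 := L_mul_M χ hχ L hL N hN
  have h2 : 1 / (20000 * (d:ℝ)^2) ≤ ‖L‖ := by
    by_cases h : χ^2 = 1
    · refine le_trans ?_ (L_lower_real χ hχ h L hL)
      gcongr
      · norm_num
      · nlinarith
    · exact L_lower_complex χ h L hL
  have h3 : 1 / (20000 * (d:ℝ)^2) * ‖Mchi χ N‖ ≤ 8 * d := le_trans (by gcongr) h1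
  rw [one_div, inv_mul_le_iff₀ (by positivity)] at h3
  linarith

theorem Mchi_one : ∃ C : ℝ, 0 < C ∧ ∀ (d : ℕ) [NeZero d] (N : ℕ), 0 < N →
    ‖Mchi (1 : DirichletCharacter ℂ d) N - Real.log N‖ ≤ C * d := by
  obtain ⟨C, hC, h⟩ := nonprime_vM
  refine ⟨C + 7, by linarith, fun d _ N hN => ?_⟩
  have hd : (1:ℝ) ≤ d := by exact_mod_cast NeZero.one_le
  have hd0 : 0 < d := NeZero.pos d
  have e : ∑ n ∈ Ioc 0 N, ((vonMangoldt n / n : ℝ):ℂ) - Mchi (1 : DirichletCharacter ℂ d) N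
      = ((∑ n ∈ (Ioc 0 N).filter (fun n => ¬ n.Coprime d), vonMangoldt n / n : ℝ) : ℂ) := by
    unfold Mchi
    rw [← sum_sub_distrib, Complex.ofReal_sum, sum_filter]
    refine sum_congr rfl fun n _ => ?_
    by_cases hc : n.Coprime d
    · have : IsUnit (n : ZMod d) := (ZMod.isUnit_iff_coprime n d).mpr hc
      rw [MulChar.one_apply this]
      simp [hc]
    · have : ¬ IsUnit (n : ZMod d) := fun h => hc ((ZMod.isUnit_iff_coprime n d).mp h)
      rw [MulChar.map_nonunit _ this]
      simp [hc]
  have nn : ∀ n : ℕ, 0 ≤ vonMangoldt n / n := fun n => div_nonneg vonMangoldt_nonneg (by positivity)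
  have b : ∑ n ∈ (Ioc 0 N).filter (fun n => ¬ n.Coprime d), vonMangoldt n / n ≤ C + d := by
    rw [← sum_filter_add_sum_filter_not _ (fun n => ¬ n.Prime)]
    refine add_le_add ?_ ?_
    · refine le_trans ?_ (h N)
      refine sum_le_sum_of_subset_of_nonneg ?_ fun _ _ _ => nn _
      intro n hn; simp only [mem_filter] at *; tauto
    · calc _ ≤ ∑ n ∈ Ioc 0 d, (1:ℝ) := by
            refine (sum_le_sum (g := fun _ => (1:ℝ)) fun n hn => ?_).trans
              (sum_le_sum_of_subset_of_nonneg ?_ fun _ _ _ => zero_le_one)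
            · simp only [mem_filter, not_not] at hn
              rw [vonMangoldt_apply_prime hn.2]
              have : (0:ℝ) < n := by exact_mod_cast hn.2.pos
              rw [div_le_one this]
              linarith [Real.log_le_sub_one_of_pos this]
            · intro n hn
              simp only [mem_filter, not_not, mem_Ioc] at *
              refine ⟨hn.1.1.1, ?_⟩
              have : n ∣ d := by
                by_contra h
                exact hn.1.2 ((Nat.Prime.coprime_iff_not_dvd hn.2).mpr h)
              exact Nat.le_of_dvd hd0 this
        _ = d := by simp
  have m := mertens1 N hN
  have e2 : Mchi (1 : DirichletCharacter ℂ d) N - Real.log N =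
     ((∑ n ∈ Ioc 0 N, (vonMangoldt n / n : ℝ) - Real.log N
       - ∑ n ∈ (Ioc 0 N).filter (fun n => ¬ n.Coprime d), vonMangoldt n / n : ℝ) : ℂ) := by
    push_cast at e ⊢
    rw [← e]; ring
  rw [e2, Complex.norm_real, Real.norm_eq_abs]
  have b0 : 0 ≤ ∑ n ∈ (Ioc 0 N).filter (fun n => ¬ n.Coprime d), vonMangoldt n / n :=
    sum_nonneg fun _ _ => nn _
  rw [abs_le]
  constructor <;> nlinarith

theorem mertensAP : ∃ C : ℝ, 0 < C ∧ ∀ (d : ℕ) [NeZero d] (a : ZMod d), IsUnit a → ∀ N : ℕ, 0 < N →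
    |∑ p ∈ (Ioc 0 N).filter (fun p : ℕ => p.Prime ∧ (p : ZMod d) = a), Real.log p / p
      - Real.log N / d.totient| ≤ C * (d:ℝ)^3 := by
  obtain ⟨C, hC, hnp⟩ := nonprime_vM
  obtain ⟨C1, hC1, h1⟩ := Mchi_one
  refine ⟨C + C1 + 160000, by linarith, fun d _ a ha N hN => ?_⟩
  have hd : (1:ℝ) ≤ d := by exact_mod_cast NeZero.one_le
  have hφ : (1:ℝ) ≤ d.totient := by exact_mod_cast Nat.totient_pos.mpr (NeZero.pos d)
  have nn : ∀ n : ℕ, 0 ≤ vonMangoldt n / n := fun n => div_nonneg vonMangoldt_nonneg (by positivity)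
  have orth : ∑ χ : DirichletCharacter ℂ d, χ a⁻¹ * Mchi χ N
      = (d.totient : ℂ) * ((∑ n ∈ (Ioc 0 N).filter (fun n : ℕ => (n : ZMod d) = a), vonMangoldt n / n : ℝ) : ℂ) := by
    unfold Mchi
    simp_rw [mul_sum]
    rw [sum_comm, Complex.ofReal_sum, sum_filter, mul_sum]
    refine sum_congr rfl fun n _ => ?_
    have := DirichletCharacter.sum_char_inv_mul_char_eq ℂ ha (n : ZMod d)
    calc _ = (∑ χ : DirichletCharacter ℂ d, χ a⁻¹ * χ n) * ((vonMangoldt n : ℝ) : ℂ) / n := by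
          rw [sum_mul, sum_div]; refine sum_congr rfl fun χ _ => by ring
      _ = _ := by
          rw [this]
          by_cases h : a = n
          · rw [if_pos h, if_pos h.symm]; push_cast; ring
          · rw [if_neg h, if_neg (Ne.symm h)]; simp
  have hcard : (Fintype.card (DirichletCharacter ℂ d) : ℝ) = d.totient := by
    rw [← Nat.card_eq_fintype_card, DirichletCharacter.card_eq_totient_of_hasEnoughRootsOfUnity]
  have bd : ‖∑ χ : DirichletCharacter ℂ d, χ a⁻¹ * Mchi χ N - Real.log N‖
      ≤ d.totient * ((C1 + 160000) * (d:ℝ)^3) := by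
    have ua : IsUnit a⁻¹ := by
      obtain ⟨u, rfl⟩ := ha
      rw [ZMod.inv_coe_unit]; exact Units.isUnit _
    classical
    have : ∑ χ : DirichletCharacter ℂ d, χ a⁻¹ * Mchi χ N - Real.log N
       = ∑ χ : DirichletCharacter ℂ d, (χ a⁻¹ * Mchi χ N - if χ = 1 then (Real.log N : ℂ) else 0) := by
      rw [sum_sub_distrib]; simp
    rw [this]
    refine (norm_sum_le_of_le _ (n := fun _ => (C1 + 160000) * (d:ℝ)^3) fun χ _ => ?_).trans ?_
    · have d3 : (d:ℝ) ≤ (d:ℝ)^3 := le_self_pow₀ hd (by norm_num)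
      by_cases h : χ = 1
      · rw [if_pos h, h, MulChar.one_apply ua, one_mul]
        refine (h1 d N hN).trans ?_
        nlinarith
      · rw [if_neg h, sub_zero, norm_mul]
        have := Mchi_bound χ h N hN
        have h2 : ‖χ a⁻¹‖ ≤ 1 := DirichletCharacter.norm_le_one χ _
        nlinarith [norm_nonneg (Mchi χ N), norm_nonneg (χ a⁻¹), pow_pos (by linarith : (0:ℝ) < d) 3]
    · rw [sum_const, card_univ, nsmul_eq_mul, hcard]
  rw [orth] at bd
  set S := ∑ n ∈ (Ioc 0 N).filter (fun n : ℕ => (n : ZMod d) = a), vonMangoldt n / n with hS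
  have bd2 : |S - Real.log N / d.totient| ≤ (C1 + 160000) * (d:ℝ)^3 := by
    have e : (d.totient : ℂ) * (S : ℂ) - Real.log N = ((d.totient * (S - Real.log N / d.totient) : ℝ) : ℂ) := by
      push_cast
      have : (d.totient : ℂ) ≠ 0 := by exact_mod_cast (by linarith : (d.totient:ℝ) ≠ 0)
      field_simp
    rw [e, Complex.norm_real, Real.norm_eq_abs, abs_mul, abs_of_pos (by linarith : (0:ℝ) < d.totient)] at bd
    exact le_of_mul_le_mul_left bd (by linarith)
  have e3 : S = ∑ p ∈ (Ioc 0 N).filter (fun p : ℕ => p.Prime ∧ (p : ZMod d) = a), Real.log p / p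
     + ∑ n ∈ ((Ioc 0 N).filter (fun n : ℕ => (n : ZMod d) = a)).filter (fun n => ¬ n.Prime), vonMangoldt n / n := by
    rw [hS, ← sum_filter_add_sum_filter_not _ (fun n => n.Prime)]
    congr 1
    rw [filter_filter]
    refine sum_congr (by ext; simp only [mem_filter]; tauto) fun n hn => ?_
    rw [vonMangoldt_apply_prime (mem_filter.mp hn).2.1]
  have b1 : ∑ n ∈ ((Ioc 0 N).filter (fun n : ℕ => (n : ZMod d) = a)).filter (fun n => ¬ n.Prime), vonMangoldt n / n ≤ C := by
    refine le_trans ?_ (hnp N)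
    refine sum_le_sum_of_subset_of_nonneg ?_ fun _ _ _ => nn _
    intro n hn; simp only [mem_filter] at *; tauto
  have b0 : 0 ≤ ∑ n ∈ ((Ioc 0 N).filter (fun n : ℕ => (n : ZMod d) = a)).filter (fun n => ¬ n.Prime), vonMangoldt n / n :=
    sum_nonneg fun _ _ => nn _
  have d3 : 1 ≤ (d:ℝ)^3 := one_le_pow₀ hd
  rw [abs_le] at *
  constructor <;> nlinarith
end

section
open Finset

theorem ap_count (m r a b : ℕ) (hm : 0 < m) (hab : a ≤ b) :
    |(((Ioc a b).filter (fun n => n ≡ r [MOD m])).card : ℝ) - ((b:ℝ) - a) / m| ≤ 1 := by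
  have h := Nat.Ioc_filter_modEq_card a b hm r
  have hm' : (0:ℚ) < m := by exact_mod_cast hm
  have hab' : (a:ℚ) ≤ b := by exact_mod_cast hab
  have h2 : (⌊((a:ℚ) - r)/m⌋ : ℤ) ≤ ⌊((b:ℚ) - r)/m⌋ := by
    apply Int.floor_le_floor; gcongr
  rw [max_eq_left (by linarith)] at h
  have h3 : |((((Ioc a b).filter (fun n => n ≡ r [MOD m])).card : ℤ) : ℚ) - ((b:ℚ) - a) / m| ≤ 1 := by
    rw [h]
    push_cast
    have e : ((b:ℚ) - a)/m = ((b:ℚ) - r)/m - ((a:ℚ) - r)/m := by ring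
    rw [e, abs_le]
    have f1 := Int.floor_le (((a:ℚ) - r)/m)
    have f2 := Int.lt_floor_add_one (((a:ℚ) - r)/m)
    have f3 := Int.floor_le (((b:ℚ) - r)/m)
    have f4 := Int.lt_floor_add_one (((b:ℚ) - r)/m)
    constructor <;> linarith
  have h4 : (((|((((Ioc a b).filter (fun n => n ≡ r [MOD m])).card : ℤ) : ℚ) - ((b:ℚ) - a) / m|) : ℚ) : ℝ) ≤ (1:ℚ) := by
    exact_mod_cast h3
  push_cast at h4
  exact h4

theorem sum_inv_log (y Y : ℕ) (hy : 0 < y) (hyY : y ≤ Y) :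
    Real.log Y - Real.log y - 1 / y ≤ ∑ n ∈ Ioc y Y, (1:ℝ)/n ∧ 
    ∑ n ∈ Ioc y Y, (1:ℝ)/n ≤ Real.log Y - Real.log y := by
  have hy' : (0:ℝ) < y := by exact_mod_cast hy
  suffices H : Real.log Y - Real.log y - (1 / y - 1/Y) ≤ ∑ n ∈ Ioc y Y, (1:ℝ)/n ∧ 
    ∑ n ∈ Ioc y Y, (1:ℝ)/n ≤ Real.log Y - Real.log y by
    refine ⟨?_, H.2⟩
    have : (0:ℝ) ≤ 1 / Y := by positivity
    linarith [H.1]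
  induction Y, hyY using Nat.le_induction with
  | base => simp
  | succ k hk ih =>
    have hk' : (0:ℝ) < k := lt_of_lt_of_le hy' (by exact_mod_cast hk)
    rw [sum_Ioc_succ_top hk]
    have l1 : Real.log (k+1) - Real.log k ≤ 1 / k := by
      rw [← Real.log_div (by positivity) (by positivity)]
      have := Real.log_le_sub_one_of_pos (show (0:ℝ) < (k+1)/k by positivity)
      refine this.trans (le_of_eq ?_)
      field_simp; ring
    have l2 : 1 / ((k:ℝ)+1) ≤ Real.log (k+1) - Real.log k := by
      rw [← Real.log_div (by positivity) (by positivity)]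
      have := Real.one_sub_inv_le_log_of_pos (show (0:ℝ) < (k+1)/k by positivity)
      refine le_trans (le_of_eq ?_) this
      field_simp; ring
    push_cast
    constructor <;> linarith [ih.1, ih.2]

theorem ap_inv_sum (m r y Y : ℕ) (hm : 0 < m) (hy : 0 < y) (hyY : y ≤ Y) :
    |∑ n ∈ (Ioc y Y).filter (fun n => n ≡ r [MOD m]), (1:ℝ)/n - (Real.log Y - Real.log y) / m| ≤ 2 / y := by
  have hy' : (0:ℝ) < y := by exact_mod_cast hy
  have hm' : (1:ℝ) ≤ m := by exact_mod_cast hm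
  have ab := abel_bound (E := ℝ) (m := y+1) (n := Y+1) (f := fun n => (1:ℝ)/n)
    (a := fun n => (if n ≡ r [MOD m] then 1 else 0) - 1 / m) (K := 1)
  have s := sum_inv_log y Y hy hyY
  have conv : ∀ Z : ℕ, Ico (y+1) (Z+1) = Ioc y Z := by
    intro Z; ext; simp only [mem_Ioc, mem_Ico]; omega
  have ab' := ab (by omega) (by
    intro k hk
    obtain ⟨k, rfl⟩ : ∃ j, k = j+1 := ⟨k-1, by omega⟩
    rw [conv, sum_sub_distrib, sum_const, Nat.card_Ioc, ← sum_filter, sum_const, nsmul_eq_mul, nsmul_eq_mul, mul_one,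
      Nat.cast_sub (by omega), Real.norm_eq_abs, mul_one_div]
    exact ap_count m r y k hm (by omega)) (by
    intro i hi
    have : (0:ℝ) < i := by exact_mod_cast (by omega : 0 < i)
    gcongr; push_cast; linarith) (by intro i hi; positivity)
  rw [conv, Real.norm_eq_abs] at ab'
  have e : ∑ n ∈ Ioc y Y, ((1:ℝ)/n) • ((if n ≡ r [MOD m] then (1:ℝ) else 0) - 1 / m)
     = ∑ n ∈ (Ioc y Y).filter (fun n => n ≡ r [MOD m]), (1:ℝ)/n - (∑ n ∈ Ioc y Y, (1:ℝ)/n) / m := by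
    rw [sum_filter, sum_div, ← sum_sub_distrib]
    refine sum_congr rfl fun n _ => ?_
    rw [smul_eq_mul]; split_ifs <;> ring
  rw [e] at ab'
  have t1 : |(∑ n ∈ Ioc y Y, (1:ℝ)/n) / m - (Real.log Y - Real.log y)/m| ≤ 1 / y := by
    rw [← sub_div, abs_div, abs_of_pos (by linarith : (0:ℝ) < m), div_le_iff₀ (by linarith)]
    have : (0:ℝ) < 1 / y := by positivity
    rw [abs_le]; constructor <;> nlinarith
  have t2 : 1 * (1 / ((y+1:ℕ):ℝ)) ≤ 1 / y := by
    rw [one_mul]; gcongr; push_cast; linarith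
  have t3 : (2:ℝ)/y = 1/y + 1/y := by ring
  rw [t3]
  refine (abs_sub_le _ _ _).trans (add_le_add (ab'.trans t2) t1)

/-- sieve index set -/
def sieveE (d R : ℕ) : Finset ℕ := (Ioc 0 R).filter (fun e => Squarefree e ∧ e.Coprime d)

theorem harmonic_sieve (d R : ℕ) (hd : 0 < d) :
    Real.log R ≤ 2 * (∑ g ∈ d.divisors, (1:ℝ)/g) * ∑ e ∈ sieveE d R, (1:ℝ)/e := by
  have h0 : Real.log R ≤ ∑ n ∈ Ioc 0 R, (1:ℝ)/n := by
    rcases Nat.eq_zero_or_pos R with h | h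
    · subst h; simp
    have := log_add_one_le_harmonic R
    rw [harmonic_eq_sum_Icc] at this
    push_cast at this
    have h2 : Real.log R ≤ Real.log (R+1) := Real.log_le_log (by exact_mod_cast h) (by linarith)
    refine h2.trans (this.trans (le_of_eq ?_))
    refine sum_congr (by ext; simp only [mem_Ioc, mem_Icc]; omega) fun n _ => by simp
  have dec : ∀ n : ℕ, ∃ x : ℕ × ℕ × ℕ, n ∈ Ioc 0 R → x ∈ Ioc 0 R ×ˢ d.divisors ×ˢ sieveE d R ∧ n = x.1^2 * (x.2.1 * x.2.2) := by
    intro n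
    by_cases hn : n ∈ Ioc 0 R
    swap
    · exact ⟨(0,0,0), fun h => absurd h hn⟩
    have hn' := mem_Ioc.mp hn
    obtain ⟨m, s, hms, hsq⟩ := Nat.sq_mul_squarefree n
    have hm0 : 0 < m := Nat.pos_of_ne_zero hsq.ne_zero
    have hs0 : 0 < s := by
      rcases Nat.eq_zero_or_pos s with h | h
      · subst h; simp at hms; omega
      · exact h
    refine ⟨(s, m.gcd d, m / m.gcd d), fun _ => ⟨?_, ?_⟩⟩
    · have hg0 : 0 < m.gcd d := Nat.gcd_pos_of_pos_left _ hm0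
      have hgm : m.gcd d * (m / m.gcd d) = m := Nat.mul_div_cancel' (Nat.gcd_dvd_left _ _)
      have hmR : m ≤ R := by nlinarith [pow_pos hs0 2]
      simp only [mem_product, mem_Ioc, Nat.mem_divisors, sieveE, mem_filter]
      refine ⟨⟨hs0, by nlinarith⟩, ⟨Nat.gcd_dvd_right _ _, hd.ne'⟩, ⟨Nat.div_pos (Nat.gcd_le_left _ hm0) hg0, (Nat.div_le_self _ _).trans hmR⟩, ?_, ?_⟩
      · exact hsq.squarefree_of_dvd (Nat.div_dvd_of_dvd (Nat.gcd_dvd_left _ _))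
      · rw [← hgm] at hsq
        refine Nat.coprime_of_dvd fun ℓ hℓ h1 h2 => ?_
        have h3 : ℓ ∣ m.gcd d := Nat.dvd_gcd (h1.trans (Nat.div_dvd_of_dvd (Nat.gcd_dvd_left _ _))) h2
        exact hℓ.not_isUnit (hsq ℓ (mul_dvd_mul h3 h1))
    · rw [Nat.mul_div_cancel' (Nat.gcd_dvd_left _ _)]; exact hms.symm
  choose F hF using dec
  have sq2 : ∑ s ∈ Ioc 0 R, (1:ℝ)/s^2 ≤ 2 := by
    have : ∀ K : ℕ, ∑ s ∈ Ioc 0 (K+1), (1:ℝ)/s^2 ≤ 2 - 1/((K:ℝ)+1) := by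
      intro K
      induction K with
      | zero => norm_num
      | succ k ih =>
        rw [sum_Ioc_succ_top (by omega)]
        have : (1:ℝ)/((k+1+1:ℕ):ℝ)^2 ≤ 1/((k:ℝ)+1) - 1/((k:ℝ)+1+1) := by
          push_cast
          rw [div_sub_div _ _ (by positivity) (by positivity), div_le_div_iff₀ (by positivity) (by positivity)]
          nlinarith [(by positivity : 0 ≤ (k:ℝ))]
        push_cast at *
        linarith
    rcases R with _ | R
    · simp
    have h2 := this R
    have : (0:ℝ) ≤ 1/((R:ℝ)+1) := by positivity
    linarith
  calc _ ≤ _ := h0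
    _ = ∑ n ∈ Ioc 0 R, (fun x : ℕ × ℕ × ℕ => (1:ℝ)/x.1^2 * ((1:ℝ)/x.2.1 * (1/x.2.2))) (F n) := by
        refine sum_congr rfl fun n hn => ?_
        have := (hF n hn).2
        conv_lhs => rw [this]
        push_cast
        simp only [one_div, mul_inv]
    _ = ∑ x ∈ (Ioc 0 R).image F, (1:ℝ)/x.1^2 * ((1:ℝ)/x.2.1 * (1/x.2.2)) := by
        rw [sum_image]
        intro m hm n hn h
        rw [(hF m hm).2, (hF n hn).2, h]
    _ ≤ ∑ x ∈ Ioc 0 R ×ˢ d.divisors ×ˢ sieveE d R, (1:ℝ)/x.1^2 * ((1:ℝ)/x.2.1 * (1/x.2.2)) := by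
        refine sum_le_sum_of_subset_of_nonneg ?_ fun _ _ _ => by positivity
        intro x hx
        obtain ⟨n, hn, rfl⟩ := mem_image.mp hx
        exact (hF n hn).1
    _ = (∑ s ∈ Ioc 0 R, (1:ℝ)/s^2) * ((∑ g ∈ d.divisors, (1:ℝ)/g) * ∑ e ∈ sieveE d R, (1:ℝ)/e) := by
        rw [sum_product, sum_mul]
        refine sum_congr rfl fun s _ => ?_
        rw [sum_product, sum_mul_sum, mul_sum]
        refine sum_congr rfl fun g _ => ?_
        rw [mul_sum]
    _ ≤ 2 * ((∑ g ∈ d.divisors, (1:ℝ)/g) * ∑ e ∈ sieveE d R, (1:ℝ)/e) := by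
        gcongr
    _ = _ := by ring
end

section
open Finset ArithmeticFunction

noncomputable def lam (d R g : ℕ) : ℝ :=
  ∑ e ∈ sieveE d R, if g ∣ e then (moebius e : ℝ) * (moebius (e/g) : ℝ) * g / (e.totient : ℝ) else 0

theorem mu_inner (R k e : ℕ) (he : e ∈ Ioc 0 R) (hk : 0 < k) :
    ∑ g ∈ Ioc 0 R, (if k ∣ g ∧ g ∣ e then (moebius (e/g) : ℤ) else 0) = if e = k then 1 else 0 := by
  have he' := mem_Ioc.mp he
  by_cases hke : k ∣ e
  · obtain ⟨m, rfl⟩ := hke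
    have hm : 0 < m := Nat.pos_of_ne_zero (by rintro rfl; simp at he')
    have hs := sum_mu m
    rw [← Nat.sum_div_divisors] at hs
    have hc : (if k * m = k then (1:ℤ) else 0) = if m = 1 then 1 else 0 := by
      congr 1; simp [hk.ne']
    rw [hc, ← hs, ← sum_filter]
    symm
    refine sum_bij (fun t _ => k * t) ?_ ?_ ?_ ?_
    · intro t ht
      have htm := Nat.dvd_of_mem_divisors ht
      have ht0 := Nat.pos_of_mem_divisors ht
      simp only [mem_filter, mem_Ioc]
      refine ⟨⟨by positivity, le_trans ?_ he'.2⟩, Dvd.intro _ rfl, mul_dvd_mul_left k htm⟩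
      exact Nat.mul_le_mul_left k (Nat.le_of_dvd hm htm)
    · intro a _ b _ h; exact Nat.eq_of_mul_eq_mul_left hk h
    · intro g hg
      simp only [mem_filter, mem_Ioc] at hg
      obtain ⟨t, rfl⟩ := hg.2.1
      refine ⟨t, ?_, rfl⟩
      rw [Nat.mem_divisors]
      exact ⟨Nat.dvd_of_mul_dvd_mul_left hk hg.2.2, hm.ne'⟩
    · intro t ht
      rw [Nat.mul_div_mul_left _ _ hk]
  · rw [if_neg (by rintro rfl; exact hke dvd_rfl)]
    refine sum_eq_zero fun g _ => ?_
    rw [if_neg (by rintro ⟨h1, h2⟩; exact hke (h1.trans h2))]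

theorem lam_sum (d R k : ℕ) (hk : 0 < k) :
    ∑ g ∈ Ioc 0 R, (if k ∣ g then lam d R g / g else 0)
      = if k ∈ sieveE d R then (moebius k : ℝ) / k.totient else 0 := by
  have : ∀ g ∈ Ioc 0 R, (if k ∣ g then lam d R g / g else 0)
     = ∑ e ∈ sieveE d R, (moebius e : ℝ) / e.totient * ((if k ∣ g ∧ g ∣ e then (moebius (e/g) : ℤ) else 0 : ℤ) : ℝ) := by
    intro g hg
    have hg0 : (g:ℝ) ≠ 0 := by exact_mod_cast (mem_Ioc.mp hg).1.ne'
    unfold lam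
    by_cases h : k ∣ g
    · simp only [h, true_and, if_true]
      rw [sum_div]
      refine sum_congr rfl fun e _ => ?_
      split_ifs
      · field_simp
      · simp
    · simp [h]
  rw [sum_congr rfl this, sum_comm]
  have h2 : ∀ e ∈ sieveE d R, ∑ g ∈ Ioc 0 R, (moebius e : ℝ) / e.totient * ((if k ∣ g ∧ g ∣ e then (moebius (e/g) : ℤ) else 0 : ℤ) : ℝ)
     = if e = k then (moebius k : ℝ) / k.totient else 0 := by
    intro e he
    rw [← mul_sum, ← Int.cast_sum, mu_inner R k e (mem_filter.mp he).1 hk]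
    split_ifs with h
    · rw [h]; simp
    · simp
  rw [sum_congr rfl h2]
  simp

noncomputable def sieveH (d R : ℕ) : ℝ := ∑ e ∈ sieveE d R, 1 / (e.totient : ℝ)

theorem lam_quad (d R : ℕ) :
    ∑ g ∈ Ioc 0 R, ∑ h ∈ Ioc 0 R, lam d R g * lam d R h / (g.lcm h : ℝ) = sieveH d R := by
  have e1 : ∀ g ∈ Ioc 0 R, ∀ h ∈ Ioc 0 R, lam d R g * lam d R h / (g.lcm h : ℝ)
     = ∑ k ∈ Ioc 0 R, (k.totient : ℝ) * ((if k ∣ g then lam d R g / g else 0) * (if k ∣ h then lam d R h / h else 0)) := by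
    intro g hg h hh
    have hg' := mem_Ioc.mp hg
    have hh' := mem_Ioc.mp hh
    have hg0 : (g:ℝ) ≠ 0 := by exact_mod_cast hg'.1.ne'
    have hh0 : (h:ℝ) ≠ 0 := by exact_mod_cast hh'.1.ne'
    have gl : (g.gcd h : ℝ) * (g.lcm h) = g * h := by exact_mod_cast Nat.gcd_mul_lcm g h
    have hl0 : (g.lcm h : ℝ) ≠ 0 := by exact_mod_cast (Nat.lcm_pos hg'.1 hh'.1).ne'
    have gs : (g.gcd h : ℝ) = ∑ k ∈ Ioc 0 R, if k ∣ g ∧ k ∣ h then (k.totient : ℝ) else 0 := by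
      have h0 := Nat.sum_totient (g.gcd h)
      rw [← sum_filter, ← Nat.cast_sum]
      congr 1
      rw [← h0] 
      refine sum_congr ?_ fun _ _ => rfl
      ext k
      simp only [Nat.mem_divisors, mem_filter, mem_Ioc, Nat.dvd_gcd_iff]
      constructor
      · rintro ⟨⟨a, b⟩, _⟩
        exact ⟨⟨Nat.pos_of_dvd_of_pos a hg'.1, (Nat.le_of_dvd hg'.1 a).trans hg'.2⟩, a, b⟩
      · rintro ⟨_, a, b⟩
        exact ⟨⟨a, b⟩, (Nat.gcd_pos_of_pos_left _ hg'.1).ne'⟩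
    have : lam d R g * lam d R h / (g.lcm h : ℝ) = (lam d R g / g) * (lam d R h / h) * (g.gcd h : ℝ) := by
      field_simp
      linear_combination (-lam d R g * lam d R h) * gl
    rw [this, gs, mul_sum]
    refine sum_congr rfl fun k _ => ?_
    by_cases a : k ∣ g <;> by_cases b : k ∣ h <;> simp [a, b]
    ring
  rw [sum_congr rfl fun g hg => sum_congr rfl fun h hh => e1 g hg h hh]
  have e2 : ∀ g ∈ Ioc 0 R, ∑ h ∈ Ioc 0 R, ∑ k ∈ Ioc 0 R, (k.totient : ℝ) * ((if k ∣ g then lam d R g / g else 0) * (if k ∣ h then lam d R h / h else 0))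
    = ∑ k ∈ Ioc 0 R, (k.totient : ℝ) * ((if k ∣ g then lam d R g / g else 0) * (if k ∈ sieveE d R then (moebius k : ℝ) / k.totient else 0)) := by
    intro g _
    rw [sum_comm]
    refine sum_congr rfl fun k hk => ?_
    rw [← mul_sum, ← mul_sum, lam_sum d R k (mem_Ioc.mp hk).1]
  rw [sum_congr rfl e2, sum_comm]
  have e3 : ∀ k ∈ Ioc 0 R, ∑ g ∈ Ioc 0 R, (k.totient : ℝ) * ((if k ∣ g then lam d R g / g else 0) * (if k ∈ sieveE d R then (moebius k : ℝ) / k.totient else 0))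
    = if Squarefree k ∧ k.Coprime d then 1 / (k.totient : ℝ) else 0 := by
    intro k hk
    rw [← mul_sum, ← sum_mul, lam_sum d R k (mem_Ioc.mp hk).1]
    have hm : k ∈ sieveE d R ↔ Squarefree k ∧ k.Coprime d := by
      unfold sieveE; rw [mem_filter]; tauto
    by_cases h : Squarefree k ∧ k.Coprime d
    · rw [if_pos (hm.mpr h), if_pos h]
      have : (k.totient : ℝ) ≠ 0 := by exact_mod_cast (Nat.totient_pos.mpr (mem_Ioc.mp hk).1).ne'
      have hmu : (moebius k : ℝ)^2 = 1 := by exact_mod_cast moebius_sq_eq_one_of_squarefree h.1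
      field_simp
      exact hmu
    · rw [if_neg (by rwa [hm]), if_neg h]; simp
  rw [sum_congr rfl e3, ← sum_filter]
  rfl

theorem lam_one (d R : ℕ) : lam d R 1 = sieveH d R := by
  unfold lam sieveH
  refine sum_congr rfl fun e he => ?_
  have hmu : (moebius e : ℝ)^2 = 1 := by
    exact_mod_cast moebius_sq_eq_one_of_squarefree (mem_filter.mp he).2.1
  rw [if_pos (one_dvd _), Nat.div_one, ← sq, hmu]; simp

theorem lam_abs (d R g : ℕ) (hg : g ≤ R) : |lam d R g| ≤ (R:ℝ)^2 := by
  unfold lam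
  calc _ ≤ ∑ e ∈ sieveE d R, (R:ℝ) := by
        refine (abs_sum_le_sum_abs _ _).trans (sum_le_sum fun e he => ?_)
        split_ifs
        · rw [abs_div, abs_mul, abs_mul]
          have h1 : |(moebius e : ℝ)| ≤ 1 := by exact_mod_cast abs_moebius_le_one
          have h2 : |(moebius (e/g) : ℝ)| ≤ 1 := by exact_mod_cast abs_moebius_le_one
          have h3 : (1:ℝ) ≤ |(e.totient : ℝ)| := by
            rw [Nat.abs_cast]
            exact_mod_cast Nat.totient_pos.mpr (mem_Ioc.mp (mem_filter.mp he).1).1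
          rw [Nat.abs_cast]
          have h4 : (g:ℝ) ≤ R := by exact_mod_cast hg
          calc _ ≤ (1:ℝ) * 1 * R / 1 := by gcongr
            _ = _ := by ring
        · simp
    _ = (sieveE d R).card * R := by rw [sum_const, nsmul_eq_mul]
    _ ≤ R * R := by
        gcongr
        calc _ ≤ (Ioc 0 R).card := card_filter_le _ _
          _ = R := by simp
    _ = _ := by ring

theorem lam_supp (d R g : ℕ) (h : lam d R g ≠ 0) : g.Coprime d := by
  by_contra hc
  apply h
  unfold lam
  refine sum_eq_zero fun e he => ?_
  rw [if_neg]
  intro hge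
  exact hc (Nat.Coprime.coprime_dvd_left hge (mem_filter.mp he).2.2)

theorem ap_dvd_sum (d k a y Y : ℕ) (hd : 0 < d) (hk : 0 < k) (hdk : k.Coprime d) (hy : 0 < y) (hyY : y ≤ Y) :
    |∑ n ∈ (Ioc y Y).filter (fun n => n ≡ a [MOD d]), (if k ∣ n then (1:ℝ)/n else 0)
       - (Real.log Y - Real.log y) / (d * k)| ≤ 2 / y := by
  obtain ⟨c, hc⟩ := Nat.chineseRemainder hdk.symm a 0
  have := ap_inv_sum (d*k) c y Y (by positivity) hy hyY
  rw [Nat.cast_mul] at this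
  convert this using 3
  rw [← sum_filter, filter_filter]
  refine sum_congr ?_ fun _ _ => rfl
  ext n
  simp only [mem_filter, and_congr_right_iff]
  intro _
  rw [← Nat.modEq_and_modEq_iff_modEq_mul hdk.symm, ← Nat.modEq_zero_iff_dvd]
  constructor
  · rintro ⟨h1, h2⟩; exact ⟨h1.trans hc.1.symm, h2.trans hc.2.symm⟩
  · rintro ⟨h1, h2⟩; exact ⟨h1.trans hc.1, h2.trans hc.2⟩

theorem sieve_bound (d a z : ℕ) (hd : 0 < d) (hz : 2 ≤ z) (hdz : d ≤ z) :
    ∑ p ∈ (Ioc (z^8) (z^16)).filter (fun p => p.Prime ∧ p ≡ a [MOD d]), (1:ℝ)/p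
      ≤ 18 * (∑ g ∈ d.divisors, (1:ℝ)/g) / d := by
  have hzr : (2:ℝ) ≤ z := by exact_mod_cast hz
  have hdr : (1:ℝ) ≤ d := by exact_mod_cast hd
  have hdzr : (d:ℝ) ≤ z := by exact_mod_cast hdz
  set H := sieveH d z with hH
  set S := (Ioc (z^8) (z^16)).filter (fun n => n ≡ a [MOD d]) with hS
  set P := ∑ p ∈ (Ioc (z^8) (z^16)).filter (fun p => p.Prime ∧ p ≡ a [MOD d]), (1:ℝ)/p with hP
  have hy : 0 < z^8 := by positivity
  have hyY : z^8 ≤ z^16 := Nat.pow_le_pow_right (by omega) (by norm_num)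
  have hlog : Real.log ((z^16 : ℕ):ℝ) - Real.log ((z^8 : ℕ):ℝ) = 8 * Real.log z := by
    push_cast; rw [Real.log_pow, Real.log_pow]; push_cast; ring
  have low : H^2 * P ≤ ∑ n ∈ S, (∑ g ∈ Ioc 0 z, if g ∣ n then lam d z g else 0)^2 * ((1:ℝ)/n) := by
    rw [hP, mul_sum]
    calc _ = ∑ p ∈ (Ioc (z^8) (z^16)).filter (fun p => p.Prime ∧ p ≡ a [MOD d]),
          (∑ g ∈ Ioc 0 z, if g ∣ p then lam d z g else 0)^2 * ((1:ℝ)/p) := by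
          refine sum_congr rfl fun p hp => ?_
          simp only [mem_filter, mem_Ioc] at hp
          congr 2
          rw [sum_eq_single 1]
          · rw [if_pos (one_dvd _), lam_one]
          · intro g hg hg1
            rw [if_neg]
            intro hgp
            rcases (Nat.dvd_prime hp.2.1).mp hgp with h | h
            · exact hg1 h
            · have h1 := (mem_Ioc.mp hg).2
              have h2 : z ≤ z^8 := Nat.le_self_pow (by norm_num) z
              omega
          · intro h; exact absurd (mem_Ioc.mpr ⟨by norm_num, by omega⟩) h
      _ ≤ _ := by
          refine sum_le_sum_of_subset_of_nonneg ?_ fun _ _ _ => by positivity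
          intro n hn; simp only [hS, mem_filter] at *; tauto
  have expand : ∑ n ∈ S, (∑ g ∈ Ioc 0 z, if g ∣ n then lam d z g else 0)^2 * ((1:ℝ)/n)
      = ∑ g ∈ Ioc 0 z, ∑ h ∈ Ioc 0 z, lam d z g * lam d z h * ∑ n ∈ S, (if g.lcm h ∣ n then (1:ℝ)/n else 0) := by
    have : ∀ n ∈ S, (∑ g ∈ Ioc 0 z, if g ∣ n then lam d z g else 0)^2 * ((1:ℝ)/n)
       = ∑ g ∈ Ioc 0 z, ∑ h ∈ Ioc 0 z, lam d z g * lam d z h * (if g.lcm h ∣ n then (1:ℝ)/n else 0) := by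
      intro n _
      rw [sq, sum_mul_sum, sum_mul]
      refine sum_congr rfl fun g _ => ?_
      rw [sum_mul]
      refine sum_congr rfl fun h _ => ?_
      by_cases a : g ∣ n <;> by_cases b : h ∣ n <;> simp [Nat.lcm_dvd_iff, a, b]
    rw [sum_congr rfl this, sum_comm]
    refine sum_congr rfl fun g _ => ?_
    rw [sum_comm]
    refine sum_congr rfl fun h _ => ?_
    rw [mul_sum]
  have est : ∑ g ∈ Ioc 0 z, ∑ h ∈ Ioc 0 z, lam d z g * lam d z h * ∑ n ∈ S, (if g.lcm h ∣ n then (1:ℝ)/n else 0)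
      ≤ ∑ g ∈ Ioc 0 z, ∑ h ∈ Ioc 0 z, (8 * Real.log z / d * (lam d z g * lam d z h / (g.lcm h : ℝ)) + (z:ℝ)^4 * (2 / (z:ℝ)^8)) := by
    refine sum_le_sum fun g hg => sum_le_sum fun h hh => ?_
    have hg' := mem_Ioc.mp hg
    have hh' := mem_Ioc.mp hh
    by_cases h0 : lam d z g * lam d z h = 0
    · rw [h0]; simp; positivity
    have cg := lam_supp d z g (left_ne_zero_of_mul h0)
    have ch := lam_supp d z h (right_ne_zero_of_mul h0)
    have cl : (g.lcm h).Coprime d := Nat.Coprime.coprime_dvd_left (Nat.lcm_dvd_mul g h) (Nat.Coprime.mul_left cg ch)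
    have key := ap_dvd_sum d (g.lcm h) a (z^8) (z^16) hd (Nat.lcm_pos hg'.1 hh'.1) cl hy hyY
    rw [hlog] at key
    have la : |lam d z g * lam d z h| ≤ (z:ℝ)^4 := by
      rw [abs_mul, show (z:ℝ)^4 = (z:ℝ)^2 * (z:ℝ)^2 by ring]
      gcongr
      · exact lam_abs d z g hg'.2
      · exact lam_abs d z h hh'.2
    set T := ∑ n ∈ S, (if g.lcm h ∣ n then (1:ℝ)/n else 0)
    have hl0 : (g.lcm h : ℝ) ≠ 0 := by exact_mod_cast (Nat.lcm_pos hg'.1 hh'.1).ne'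
    have : lam d z g * lam d z h * T = 8 * Real.log z / d * (lam d z g * lam d z h / (g.lcm h : ℝ))
       + lam d z g * lam d z h * (T - 8 * Real.log z / (d * (g.lcm h : ℝ))) := by
      field_simp; ring
    rw [this]
    refine add_le_add le_rfl ((le_abs_self _).trans ?_)
    rw [abs_mul]
    push_cast at key
    gcongr
  have main : H^2 * P ≤ 8 * Real.log z / d * H + 2 / (z:ℝ)^2 := by
    refine low.trans (expand.le.trans (est.trans (le_of_eq ?_)))
    simp_rw [sum_add_distrib, ← mul_sum]
    rw [lam_quad]
    simp only [sum_const, Nat.card_Ioc, nsmul_eq_mul, tsub_zero]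
    rw [← hH]
    field_simp
  have H1 : 1 ≤ H := by
    rw [hH, sieveH]
    calc (1:ℝ) = 1 / ((1:ℕ).totient : ℝ) := by simp
      _ ≤ _ := by
        refine single_le_sum (f := fun e : ℕ => 1 / (e.totient : ℝ)) (fun _ _ => by positivity) ?_
        simp [sieveE]; omega
  have HG := harmonic_sieve d z hd
  set G := ∑ g ∈ d.divisors, (1:ℝ)/g with hG
  have G1 : 1 ≤ G := by
    calc (1:ℝ) = 1 / ((1:ℕ) : ℝ) := by simp
      _ ≤ _ := by
        refine single_le_sum (f := fun e : ℕ => 1 / (e : ℝ)) (fun _ _ => by positivity) ?_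
        simp; omega
  have EH : ∑ e ∈ sieveE d z, (1:ℝ)/e ≤ H := by
    rw [hH, sieveH]
    refine sum_le_sum fun e he => ?_
    have : (0:ℝ) < e.totient := by exact_mod_cast Nat.totient_pos.mpr (mem_Ioc.mp (mem_filter.mp he).1).1
    gcongr
    exact Nat.totient_le e
  have HG2 : Real.log z ≤ 2 * G * H := HG.trans (by gcongr)
  have m2 : H^2 * P ≤ H^2 * (18 * G / d) := by
    refine main.trans ?_
    have t1 : 8 * Real.log z / d * H ≤ 8 * (2 * G * H) / d * H := by gcongr
    have t2 : 2 / (z:ℝ)^2 ≤ H^2 * (2 * G / d) := by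
      calc 2 / (z:ℝ)^2 ≤ 2 / d := by gcongr; nlinarith
        _ ≤ 1^2 * (2 * 1 / d) := by simp
        _ ≤ _ := by gcongr
    have : H^2 * (18 * G / d) = 8 * (2 * G * H) / d * H + H^2 * (2 * G / d) := by ring
    linarith
  exact le_of_mul_le_mul_left m2 (by positivity)

theorem divisor_inv_sum (d : ℕ) (hd : Squarefree d) : (∑ g ∈ d.divisors, (1:ℝ)/g) / d ≤ 1 / d.totient := by
  have hd0 : 0 < d := Nat.pos_of_ne_zero hd.ne_zero
  have hφ : (0:ℝ) < d.totient := by exact_mod_cast Nat.totient_pos.mpr hd0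
  have hdr : (0:ℝ) < d := by exact_mod_cast hd0
  rw [div_le_div_iff₀ hdr hφ, one_mul, sum_mul]
  calc _ ≤ ∑ g ∈ d.divisors, ((d/g).totient : ℝ) := by
        refine sum_le_sum fun g hg => ?_
        obtain ⟨k, rfl⟩ := Nat.dvd_of_mem_divisors hg
        have hg0 := Nat.pos_of_mem_divisors hg
        rw [Nat.mul_div_cancel_left _ hg0]
        have c : g.Coprime k := Nat.coprime_of_squarefree_mul hd
        rw [Nat.totient_mul c]
        push_cast
        have : (0:ℝ) < g := by exact_mod_cast hg0
        rw [one_div, inv_mul_le_iff₀ this]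
        gcongr
        exact Nat.totient_le g
    _ = d := by
        rw [Nat.sum_div_divisors d (fun x => (x.totient : ℝ))]
        exact_mod_cast Nat.sum_totient d
    _ ≤ _ := le_rfl
end

section
open Finset

noncomputable def Pr (d b u v : ℕ) : ℝ :=
  ∑ p ∈ (Ioc u v).filter (fun p => p.Prime ∧ p ≡ b [MOD d]), (1:ℝ)/p

noncomputable def LL (n : ℕ) : ℝ := Real.log (Real.log n)

theorem Pr_nonneg (d b u v : ℕ) : 0 ≤ Pr d b u v := sum_nonneg fun _ _ => by positivity

theorem Pr_mono (d b u v u' v' : ℕ) (hu : u' ≤ u) (hv : v ≤ v') : Pr d b u v ≤ Pr d b u' v' := by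
  refine sum_le_sum_of_subset_of_nonneg ?_ fun _ _ _ => by positivity
  exact filter_subset_filter _ (Ioc_subset_Ioc hu hv)

theorem Pr_add (d b u v w : ℕ) (h1 : u ≤ v) (h2 : v ≤ w) : Pr d b u w = Pr d b u v + Pr d b v w := by
  unfold Pr
  rw [sum_filter, sum_filter, sum_filter, sum_Ioc_consecutive _ h1 h2]

theorem Pr_trivial (d b u v : ℕ) (hd : 0 < d) (hu : d ≤ u) (huv : u ≤ v) :
    Pr d b u v ≤ (Real.log v - Real.log u + 2) / d := by
  have h := ap_inv_sum d b u v hd (by omega) huv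
  have hd' : (0:ℝ) < d := by exact_mod_cast hd
  have h2 : Pr d b u v ≤ ∑ n ∈ (Ioc u v).filter (fun n => n ≡ b [MOD d]), (1:ℝ)/n := by
    refine sum_le_sum_of_subset_of_nonneg ?_ fun _ _ _ => by positivity
    intro n hn; simp only [mem_filter] at *; tauto
  have h3 : (2:ℝ)/u ≤ 2 / d := by gcongr
  rw [add_div]
  linarith [(abs_le.mp h).2]

theorem Pr_sieve (d b z J : ℕ) (hd : Squarefree d) (hz : 2 ≤ z) (hdz : d ≤ z) :
    Pr d b (z^8) (z^(8*2^J)) ≤ 18 * J / d.totient := by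
  have hd0 : 0 < d := Nat.pos_of_ne_zero hd.ne_zero
  induction J with
  | zero => simp [Pr]
  | succ J ih =>
    have m1 : z^8 ≤ z^(8*2^J) := Nat.pow_le_pow_right (by omega) (by have := Nat.one_le_two_pow (n := J); omega)
    have m2 : z^(8*2^J) ≤ z^(8*2^(J+1)) := Nat.pow_le_pow_right (by omega) (by rw [pow_succ]; omega)
    rw [Pr_add d b _ _ _ m1 m2]
    have hw : z ≤ z^(2^J) := Nat.le_self_pow (by positivity) z
    have s := sieve_bound d b (z^(2^J)) hd0 (by omega) (by omega)
    rw [← pow_mul, ← pow_mul, show 2^J * 8 = 8 * 2^J by ring, show 2^J*16 = 8*2^(J+1) by ring] at s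
    have s2 := divisor_inv_sum d hd
    have s3 : Pr d b (z^(8*2^J)) (z^(8*2^(J+1))) ≤ 18 * (1 / d.totient) := by
      refine s.trans ?_
      rw [mul_div_assoc]
      gcongr
    have : (18:ℝ) * ((J+1:ℕ):ℝ) / d.totient = 18 * J / d.totient + 18 * (1/d.totient) := by push_cast; ring
    rw [this]
    exact add_le_add ih s3

theorem sum_inv_nlog (y N : ℕ) (hy : 2 ≤ y) (hyN : y ≤ N) :
    |∑ n ∈ Ioc y N, 1/Real.log n * ((1:ℝ)/n) - (LL N - LL y)| ≤ 1 / Real.log y := by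
  have hy' : (2:ℝ) ≤ y := by exact_mod_cast hy
  have hly : 0 < Real.log y := Real.log_pos (by linarith)
  suffices H : LL N - LL y - (1/Real.log y * (1/y) - 1/Real.log N * (1/N)) ≤ ∑ n ∈ Ioc y N, 1/Real.log n * ((1:ℝ)/n) ∧
     ∑ n ∈ Ioc y N, 1/Real.log n * ((1:ℝ)/n) ≤ LL N - LL y by
    have a1 : 1/Real.log y * (1/y) ≤ 1/Real.log y := by
      refine mul_le_of_le_one_right (by positivity) ?_
      rw [div_le_one (by linarith)]; linarith
    have a2 : 0 ≤ 1/Real.log N * ((1:ℝ)/N) := mul_nonneg (div_nonneg zero_le_one (Real.log_natCast_nonneg N)) (by positivity)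
    have a3 : 0 < 1/Real.log y := by positivity
    rw [abs_le]; constructor <;> linarith [H.1, H.2]
  unfold LL
  induction N, hyN using Nat.le_induction with
  | base => simp
  | succ k hk ih =>
    have hk' : (2:ℝ) ≤ k := le_trans hy' (by exact_mod_cast hk)
    have hlk : 0 < Real.log k := Real.log_pos (by linarith)
    have hlk1 : 0 < Real.log ((k:ℝ)+1) := Real.log_pos (by linarith)
    rw [sum_Ioc_succ_top hk]
    push_cast
    have l1 : Real.log (k+1) - Real.log k ≤ 1 / k := by
      rw [← Real.log_div (by positivity) (by positivity)]
      have := Real.log_le_sub_one_of_pos (show (0:ℝ) < (k+1)/k by positivity)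
      refine this.trans (le_of_eq ?_)
      field_simp; ring
    have l2 : 1 / ((k:ℝ)+1) ≤ Real.log (k+1) - Real.log k := by
      rw [← Real.log_div (by positivity) (by positivity)]
      have := Real.one_sub_inv_le_log_of_pos (show (0:ℝ) < (k+1)/k by positivity)
      refine le_trans (le_of_eq ?_) this
      field_simp; ring
    have b1 : Real.log (Real.log (k+1)) - Real.log (Real.log k) ≤ 1/Real.log k * (1/k) := by
      rw [← Real.log_div (by positivity) (by positivity)]
      have := Real.log_le_sub_one_of_pos (show (0:ℝ) < Real.log (k+1)/Real.log k by positivity)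
      refine this.trans ?_
      have e : Real.log (k+1)/Real.log k - 1 = 1/Real.log k * (Real.log (k+1) - Real.log k) := by field_simp
      rw [e]; gcongr
    have b2 : 1/Real.log ((k:ℝ)+1) * (1/((k:ℝ)+1)) ≤ Real.log (Real.log (k+1)) - Real.log (Real.log k) := by
      rw [← Real.log_div (by positivity) (by positivity)]
      have := Real.one_sub_inv_le_log_of_pos (show (0:ℝ) < Real.log (k+1)/Real.log k by positivity)
      refine le_trans ?_ this
      have e : 1 - (Real.log (k+1)/Real.log k)⁻¹ = 1/Real.log (k+1) * (Real.log (k+1) - Real.log k) := by field_simp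
      rw [e]; gcongr
    constructor <;> linarith [ih.1, ih.2]

theorem Pr_tail : ∃ C : ℝ, 0 < C ∧ ∀ d b y N : ℕ, 0 < d → b.Coprime d → 2 ≤ y → y ≤ N →
    |Pr d b y N - (LL N - LL y) / d.totient| ≤ C * (d:ℝ)^3 / Real.log y + 1 / Real.log y / d.totient := by
  obtain ⟨C, hC, h⟩ := mertensAP
  refine ⟨2 * C + 1, by linarith, fun d b y N hd hb hy hyN => ?_⟩
  haveI : NeZero d := ⟨hd.ne'⟩
  have hy' : (2:ℝ) ≤ y := by exact_mod_cast hy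
  have hd' : (1:ℝ) ≤ d := by exact_mod_cast hd
  have hly : 0 < Real.log y := Real.log_pos (by linarith)
  have hφ : (1:ℝ) ≤ d.totient := by exact_mod_cast Nat.totient_pos.mpr hd
  have hub : IsUnit (b : ZMod d) := (ZMod.isUnit_iff_coprime b d).mpr hb
  have h' := h d (b : ZMod d) hub
  simp_rw [ZMod.natCast_eq_natCast_iff] at h'
  have conv : ∀ Z : ℕ, Ico (y+1) (Z+1) = Ioc y Z := by
    intro Z; ext; simp only [mem_Ioc, mem_Ico]; omega
  have ab := abel_bound (E := ℝ) (m := y+1) (n := N+1) (f := fun n => 1/Real.log n)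
    (a := fun n => (if n.Prime ∧ n ≡ b [MOD d] then Real.log n / n else 0) - 1/n / d.totient) (K := (2*C+1)*(d:ℝ)^3)
    (by omega) (by
      intro k hk
      obtain ⟨k, rfl⟩ : ∃ j, k = j+1 := ⟨k-1, by omega⟩
      have hyk : y ≤ k := by omega
      rw [conv, sum_sub_distrib, ← sum_filter, ← sum_div, Real.norm_eq_abs]
      have s := sum_inv_log y k (by omega) hyk
      have h1 := h' k (by omega)
      have h2 := h' y (by omega)
      have e : ∑ p ∈ (Ioc 0 k).filter (fun p => p.Prime ∧ p ≡ b [MOD d]), Real.log p / p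
         = ∑ p ∈ (Ioc 0 y).filter (fun p => p.Prime ∧ p ≡ b [MOD d]), Real.log p / p
          + ∑ p ∈ (Ioc y k).filter (fun p => p.Prime ∧ p ≡ b [MOD d]), Real.log p / p := by
        rw [sum_filter, sum_filter, sum_filter, sum_Ioc_consecutive _ (Nat.zero_le _) hyk]
      have t : |(Real.log k - Real.log y)/d.totient - (∑ n ∈ Ioc y k, (1:ℝ)/n)/d.totient| ≤ 1 := by
        rw [← sub_div, abs_div, abs_of_pos (by linarith : (0:ℝ) < d.totient), div_le_one (by linarith)]
        have : (1:ℝ)/y ≤ 1 := by rw [div_le_one (by linarith)]; linarith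
        rw [abs_le]; constructor <;> linarith [s.1, s.2]
      have d3 : 1 ≤ (d:ℝ)^3 := one_le_pow₀ hd'
      rw [sub_div] at t
      rw [abs_le] at *
      constructor <;> nlinarith)
    (by
      intro i hi
      have h2 : (1:ℝ) < i := by exact_mod_cast (by omega : 1 < i)
      have : 0 < Real.log i := Real.log_pos h2
      gcongr
      omega)
    (by intro i _; exact div_nonneg zero_le_one (Real.log_natCast_nonneg i))
  rw [conv, Real.norm_eq_abs] at ab
  have e : ∑ n ∈ Ioc y N, (1/Real.log n) • ((if n.Prime ∧ n ≡ b [MOD d] then Real.log n / n else 0) - 1/n / d.totient)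
     = Pr d b y N - (∑ n ∈ Ioc y N, 1/Real.log n * ((1:ℝ)/n)) / d.totient := by
    unfold Pr
    rw [sum_filter, sum_div, ← sum_sub_distrib]
    refine sum_congr rfl fun n hn => ?_
    have hn' := mem_Ioc.mp hn
    have h2 : (1:ℝ) < n := by exact_mod_cast (by omega : 1 < n)
    have : 0 < Real.log n := Real.log_pos h2
    rw [smul_eq_mul]
    split_ifs
    · field_simp
    · ring
  rw [e] at ab
  have s := sum_inv_nlog y N hy hyN
  have t : |(∑ n ∈ Ioc y N, 1/Real.log n * ((1:ℝ)/n)) / d.totient - (LL N - LL y)/d.totient| ≤ 1 / Real.log y / d.totient := by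
    rw [← sub_div, abs_div, abs_of_pos (by linarith : (0:ℝ) < d.totient)]
    gcongr
  refine (abs_sub_le _ _ _).trans (add_le_add (ab.trans ?_) t)
  rw [mul_one_div]
  gcongr
  omega

theorem LL_mono (a b : ℕ) (ha : 2 ≤ a) (hab : a ≤ b) : LL a ≤ LL b := by
  have h : (2:ℝ) ≤ a := by exact_mod_cast ha
  have h2 : (a:ℝ) ≤ b := by exact_mod_cast hab
  unfold LL
  exact Real.log_le_log (Real.log_pos (by linarith)) (Real.log_le_log (by linarith) h2)

theorem one_le_log_three : (1:ℝ) ≤ Real.log 3 := by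
  rw [Real.le_log_iff_exp_le (by norm_num)]
  linarith [Real.exp_one_lt_d9]

theorem LL_nonneg (a : ℕ) (ha : 3 ≤ a) : 0 ≤ LL a := by
  have h : (3:ℝ) ≤ a := by exact_mod_cast ha
  unfold LL
  apply Real.log_nonneg
  exact one_le_log_three.trans (Real.log_le_log (by norm_num) h)

theorem lemmaE : ∃ C : ℝ, 0 < C ∧ ∀ d b Q N : ℕ, Squarefree d → b.Coprime d → 3 ≤ Q → d ≤ Q → Q ≤ N →
    |Pr d b Q N - (LL N - LL Q) / d.totient| ≤ C * Real.log (2*d) / d.totient := by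
  obtain ⟨C, hC, ht⟩ := Pr_tail
  refine ⟨2 * C + 200, by linarith, fun d b Q N hsq hb hQ hdQ hQN => ?_⟩
  have hd0 : 0 < d := Nat.pos_of_ne_zero hsq.ne_zero
  have hd' : (1:ℝ) ≤ d := by exact_mod_cast hd0
  have hφ : (1:ℝ) ≤ d.totient := by exact_mod_cast Nat.totient_pos.mpr hd0
  have hφd : (d.totient:ℝ) ≤ d := by exact_mod_cast Nat.totient_le d
  have hl2 := Real.log_two_gt_d9
  have hl2' := Real.log_two_lt_d9
  set ℓ := Real.log (2*d) with hℓ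
  have hℓd : ℓ = Real.log 2 + Real.log d := by rw [hℓ, Real.log_mul (by norm_num) (by linarith)]
  have hld : 0 ≤ Real.log d := Real.log_nonneg hd'
  have hℓ0 : 0.69 ≤ ℓ := by linarith
  obtain ⟨z, hz2, hdz, hz⟩ : ∃ z : ℕ, 2 ≤ z ∧ d ≤ z ∧ z ≤ 2 * d := ⟨max d 2, by omega, by omega, by omega⟩
  have hzr : (2:ℝ) ≤ z := by exact_mod_cast hz2
  have hlz : Real.log z ≤ ℓ := Real.log_le_log (by linarith) (by exact_mod_cast hz)
  have hlz2 : 0.69 ≤ Real.log z := by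
    have := Real.log_le_log (by norm_num) hzr
    linarith
  obtain ⟨J, hJ1, hJ2⟩ : ∃ J : ℕ, (d:ℝ)^4 ≤ 2^J ∧ J * Real.log 2 ≤ 4 * ℓ := by
    refine ⟨4 * (Nat.log 2 d + 1), ?_, ?_⟩
    · have : d ≤ 2^(Nat.log 2 d + 1) := (Nat.lt_pow_succ_log_self (by norm_num) d).le
      rw [mul_comm, pow_mul]
      gcongr
      exact_mod_cast this
    · have : 2^(Nat.log 2 d) ≤ d := Nat.pow_log_le_self 2 hd0.ne'
      have h2 : ((2:ℝ)^(Nat.log 2 d)) ≤ d := by exact_mod_cast this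
      have h3 := Real.log_le_log (by positivity) h2
      rw [Real.log_pow] at h3
      push_cast
      rw [hℓd]; linarith
  have hJ3 : (J:ℝ) ≤ 6 * ℓ := by nlinarith [(by positivity : (0:ℝ) ≤ J)]
  set Y := z^(8*2^J) with hY
  have hz8Y : z^8 ≤ Y := Nat.pow_le_pow_right (by omega) (by have := Nat.one_le_two_pow (n := J); omega)
  have hzz8 : z ≤ z^8 := Nat.le_self_pow (by norm_num) z
  have hlogY : Real.log Y = 8 * 2^J * Real.log z := by
    rw [hY]; push_cast; rw [Real.log_pow]; push_cast; ring
  have hlogY2 : (d:ℝ)^4 ≤ Real.log Y := by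
    rw [hlogY]; nlinarith [(by positivity : (0:ℝ) < 2^J)]
  have hY2 : 2 ≤ Y := by omega
  have hLLY : LL Y ≤ 10 * ℓ := by
    unfold LL
    rw [hlogY, Real.log_mul (by positivity) (by linarith), Real.log_mul (by norm_num) (by positivity), Real.log_pow]
    have e8 : Real.log 8 = 3 * Real.log 2 := by
      rw [show (8:ℝ) = 2^3 by norm_num, Real.log_pow]; norm_num
    have := Real.log_le_sub_one_of_pos (by linarith : 0 < Real.log z)
    rw [e8]
    linarith
  have inv_d : (1:ℝ)/d ≤ 1/d.totient := by gcongr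
  have init : ∀ M : ℕ, Q ≤ M → M ≤ max Q Y → |Pr d b Q M - (LL M - LL Q)/d.totient| ≤ 150 * ℓ / d.totient := by
    intro M hQM hM
    rcases Nat.lt_or_ge Q M with hlt | hge
    swap
    · have : M = Q := by omega
      subst this
      simp [Pr]
      positivity
    have hMY : M ≤ Y := by omega
    have p1 : Pr d b Q M ≤ Pr d b d Y := Pr_mono _ _ _ _ _ _ hdQ hMY
    rw [Pr_add d b d (z^8) Y (by omega) hz8Y] at p1
    have p2 := Pr_trivial d b d (z^8) hd0 le_rfl (by omega)
    have p3 := Pr_sieve d b z J hsq hz2 hdz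
    have p4 : (Real.log ((z^8:ℕ):ℝ) - Real.log d + 2) / d ≤ 11 * ℓ / d.totient := by
      push_cast; rw [Real.log_pow]; push_cast
      calc _ ≤ (11 * ℓ) / d := by gcongr; linarith
        _ ≤ _ := by gcongr
    have p5 : 18 * (J:ℝ) / d.totient ≤ 108 * ℓ / d.totient := by gcongr ?_ / _; linarith
    have p6 : Pr d b Q M ≤ 119 * ℓ / d.totient := by
      have : 119 * ℓ / d.totient = 11 * ℓ / d.totient + 108 * ℓ / d.totient := by ring
      linarith
    have q1 : LL M ≤ 10 * ℓ := (LL_mono M Y (by omega) hMY).trans hLLY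
    have q2 := LL_nonneg Q hQ
    have q3 := LL_mono Q M (by omega) hQM
    have q4 : (LL M - LL Q)/d.totient ≤ 10 * ℓ / d.totient := by gcongr; linarith
    have q5 : 0 ≤ (LL M - LL Q)/d.totient := div_nonneg (by linarith) (by linarith)
    have q6 := Pr_nonneg d b Q M
    have q7 : 119 * ℓ / d.totient ≤ 150 * ℓ / d.totient := by gcongr ?_ / _; linarith
    have q8 : 10 * ℓ / d.totient ≤ 150 * ℓ / d.totient := by gcongr ?_ / _; linarith
    rw [abs_le]; constructor <;> linarith
  rcases le_total N (max Q Y) with hN | hN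
  · refine (init N hQN hN).trans ?_
    gcongr; linarith
  · have i := init (max Q Y) (le_max_left _ _) le_rfl
    set M := max Q Y with hM
    have hM2 : 2 ≤ M := by omega
    have t := ht d b M N hd0 hb hM2 hN
    have hlM : (d:ℝ)^4 ≤ Real.log M := by
      refine hlogY2.trans (Real.log_le_log (by exact_mod_cast (by omega : 0 < Y)) ?_)
      exact_mod_cast le_max_right _ _
    have d4 : 1 ≤ (d:ℝ)^4 := one_le_pow₀ hd'
    have t1 : C * (d:ℝ)^3/Real.log M ≤ C / d.totient := by
      calc _ ≤ C * (d:ℝ)^3 / (d:ℝ)^4 := by gcongr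
        _ = C / d := by field_simp
        _ ≤ _ := by gcongr
    have t2 : 1 / Real.log M / d.totient ≤ 1 / d.totient := by
      gcongr
      rw [div_le_one (by linarith)]; linarith
    rw [Pr_add d b Q M N (le_max_left _ _) hN]
    have e : Pr d b Q M + Pr d b M N - (LL N - LL Q)/d.totient =
       (Pr d b Q M - (LL M - LL Q)/d.totient) + (Pr d b M N - (LL N - LL M)/d.totient) := by ring
    rw [e]
    refine (abs_add_le _ _).trans ((add_le_add i (t.trans (add_le_add t1 t2))).trans ?_)
    rw [← add_div, ← add_div]
    gcongr
    nlinarith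
end

section
open Finset

theorem prime_recip : ∃ C : ℝ, 0 < C ∧ ∀ X : ℕ, 3 ≤ X → Pr 1 0 0 X ≤ LL X + C := by
  obtain ⟨C, hC, h⟩ := lemmaE
  refine ⟨3 + C * Real.log 2, by have := Real.log_two_gt_d9; positivity, fun X hX => ?_⟩
  have h1 := h 1 0 3 X squarefree_one (by simp) le_rfl (by norm_num) hX
  simp only [Nat.totient_one, Nat.cast_one, div_one, mul_one] at h1
  have h2 := LL_nonneg 3 le_rfl
  rw [Pr_add 1 0 0 3 X (by norm_num) hX]
  have h3 : Pr 1 0 0 3 ≤ 3 := by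
    unfold Pr
    calc _ ≤ ∑ p ∈ (Ioc 0 3).filter (fun p => p.Prime ∧ p ≡ 0 [MOD 1]), (1:ℝ) := by
          refine sum_le_sum fun p hp => ?_
          have : (1:ℝ) ≤ p := by exact_mod_cast (mem_filter.mp hp).2.1.one_le
          rw [div_le_one (by linarith)]; exact this
      _ ≤ _ := by
          rw [sum_const, nsmul_eq_mul, mul_one]
          have := card_filter_le (Ioc 0 3) (fun p => p.Prime ∧ p ≡ 0 [MOD 1])
          rw [Nat.card_Ioc] at this
          exact_mod_cast this
  linarith [(abs_le.mp h1).2]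

theorem powerset_bound (g h : ℕ → ℝ) (hg : ∀ n, 0 ≤ g n) (hh : ∀ n, 0 ≤ h n) (P : Finset ℕ) :
    ∀ c : ℝ, 0 ≤ c → ∑ s ∈ P.powerset, (∏ l ∈ s, g l) * (c + ∑ l ∈ s, h l)
      ≤ (∏ l ∈ P, (1 + g l)) * (c + ∑ l ∈ P, g l * h l) := by
  classical
  induction P using Finset.induction_on with
  | empty => intro c _; simp
  | insert l P hl ih =>
    intro c hc
    rw [sum_powerset_insert hl, prod_insert hl, sum_insert hl]
    have e : ∑ s ∈ P.powerset, (∏ x ∈ insert l s, g x) * (c + ∑ x ∈ insert l s, h x)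
       = g l * ∑ s ∈ P.powerset, (∏ x ∈ s, g x) * ((c + h l) + ∑ x ∈ s, h x) := by
      rw [mul_sum]
      refine sum_congr rfl fun s hs => ?_
      have : l ∉ s := fun hx => hl (mem_powerset.mp hs hx)
      rw [prod_insert this, sum_insert this]; ring
    rw [e]
    have i1 := ih c hc
    have i2 := mul_le_mul_of_nonneg_left (ih (c + h l) (add_nonneg hc (hh l))) (hg l)
    have p0 : 0 ≤ ∏ x ∈ P, (1 + g x) := prod_nonneg fun x _ => by linarith [hg x]
    have : 0 ≤ (∏ x ∈ P, (1 + g x)) * (g l * (g l * h l)) := by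
      have := hg l; have := hh l; positivity
    nlinarith

theorem LL3_lower (q : ℕ) (hq : 0 < q) : 1 ≤ Real.log (3*q) ∧ 0.08 ≤ Real.log (Real.log (3*q)) := by
  have h3 : (3:ℝ) ≤ 3 * q := by
    have : (1:ℝ) ≤ q := by exact_mod_cast hq
    linarith
  have hl : Real.log 3 ≤ Real.log (3*q) := Real.log_le_log (by norm_num) h3
  have l3 : (1.097:ℝ) ≤ Real.log 3 := by
    have h1 : (3:ℝ)/2 * 2 = 3 := by norm_num
    have := Real.log_two_gt_d9
    have h2 : Real.log 3 = Real.log 2 + Real.log (3/2) := by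
      rw [← Real.log_mul (by norm_num) (by norm_num)]; norm_num
    have h3 : Real.log (3/2) * 12 = Real.log (531441/4096) := by
      rw [show (531441/4096:ℝ) = (3/2)^12 by norm_num, Real.log_pow]; push_cast; ring
    have h4 : Real.log (128) ≤ Real.log (531441/4096) := Real.log_le_log (by norm_num) (by norm_num)
    have h5 : Real.log 128 = 7 * Real.log 2 := by
      rw [show (128:ℝ) = 2^7 by norm_num, Real.log_pow]; push_cast; ring
    linarith
  refine ⟨by linarith, ?_⟩
  have := Real.one_sub_inv_le_log_of_pos (by linarith : 0 < Real.log (3*q))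
  have h2 : (Real.log (3*q))⁻¹ ≤ (1.097:ℝ)⁻¹ := by gcongr; linarith
  have h4 : (Real.log (3*q))⁻¹ ≤ 92/100 := h2.trans (by norm_num)
  have h5 : (0.08:ℝ) = 8/100 := by norm_num
  rw [h5]
  linarith

theorem pf_sums : ∃ C : ℝ, 0 < C ∧ ∀ q : ℕ, 0 < q →
    ∑ l ∈ q.primeFactors, Real.log l / l ≤ C * Real.log (Real.log (3*q)) ∧
    ∑ l ∈ q.primeFactors, (1:ℝ) / l ≤ Real.log (Real.log (Real.log (3*q))) + C := by
  obtain ⟨C, hC, hP⟩ := prime_recip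
  refine ⟨C + 130, by linarith, fun q hq => ?_⟩
  obtain ⟨hL, hLL⟩ := LL3_lower q hq
  set L := Real.log (3*q) with hLdef
  set K := Real.log L with hK
  set X : ℕ := ⌊L⌋₊ + 3 with hX
  have hX3 : 3 ≤ X := by omega
  have hXL : L ≤ X := by
    have := Nat.lt_floor_add_one L
    rw [hX]; push_cast; linarith
  have hXU : (X:ℝ) ≤ 4 * L := by
    have := Nat.floor_le (by linarith : 0 ≤ L)
    rw [hX]; push_cast; linarith
  have hX0 : (3:ℝ) ≤ X := by exact_mod_cast hX3
  have logX : Real.log X ≤ K + 2 := by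
    have := Real.log_le_log (by linarith) hXU
    rw [Real.log_mul (by norm_num) (by linarith)] at this
    linarith [log4_le]
  have logX0 : 1 ≤ Real.log X := one_le_log_three.trans (Real.log_le_log (by norm_num) hX0)
  have pp : ∀ l ∈ q.primeFactors, l.Prime := fun l hl => Nat.prime_of_mem_primeFactors hl
  have sumlog : ∑ l ∈ q.primeFactors, Real.log l ≤ L := by
    rw [← Real.log_prod (fun l hl => by exact_mod_cast (pp l hl).ne_zero)]
    refine Real.log_le_log ?_ ?_
    · exact prod_pos fun l hl => by exact_mod_cast (pp l hl).pos
    · have := Nat.le_of_dvd hq (Nat.prod_primeFactors_dvd q)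
      have h2 : ∏ l ∈ q.primeFactors, (l:ℝ) ≤ q := by rw [← Nat.cast_prod]; exact_mod_cast this
      have : (0:ℝ) ≤ q := by positivity
      linarith
  have large : ∑ l ∈ q.primeFactors.filter (fun l => ¬ l ≤ X), Real.log l / l ≤ 1 := by
    calc _ ≤ ∑ l ∈ q.primeFactors.filter (fun l => ¬ l ≤ X), Real.log l / X := by
          refine sum_le_sum fun l hl => ?_
          have := (mem_filter.mp hl).2
          have h2 : (X:ℝ) ≤ l := by exact_mod_cast (by omega : X ≤ l)
          have := Real.log_natCast_nonneg l
          gcongr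
      _ ≤ ∑ l ∈ q.primeFactors, Real.log l / X := by
          refine sum_le_sum_of_subset_of_nonneg (filter_subset _ _) fun l _ _ => ?_
          exact div_nonneg (Real.log_natCast_nonneg l) (by linarith)
      _ ≤ L / X := by rw [← sum_div]; gcongr
      _ ≤ 1 := by rw [div_le_one (by linarith)]; exact hXL
  have large2 : ∑ l ∈ q.primeFactors.filter (fun l => ¬ l ≤ X), (1:ℝ) / l ≤ 1 := by
    refine le_trans (sum_le_sum fun l hl => ?_) large
    have := (mem_filter.mp hl).2
    have h2 : (3:ℝ) ≤ l := by exact_mod_cast (by omega : 3 ≤ l)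
    gcongr
    exact one_le_log_three.trans (Real.log_le_log (by norm_num) h2)
  have small : ∑ l ∈ q.primeFactors.filter (fun l => l ≤ X), Real.log l / l ≤ Real.log X + 6 := by
    refine le_trans ?_ (mertens1 X (by omega)).2
    calc _ = ∑ l ∈ q.primeFactors.filter (fun l => l ≤ X), ArithmeticFunction.vonMangoldt l / l := by
          refine sum_congr rfl fun l hl => ?_
          rw [ArithmeticFunction.vonMangoldt_apply_prime (pp l (mem_filter.mp hl).1)]
      _ ≤ _ := by
          refine sum_le_sum_of_subset_of_nonneg ?_ fun l _ _ => div_nonneg ArithmeticFunction.vonMangoldt_nonneg (by positivity)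
          intro l hl
          have := mem_filter.mp hl
          exact mem_Ioc.mpr ⟨(pp l this.1).pos, this.2⟩
  have small2 : ∑ l ∈ q.primeFactors.filter (fun l => l ≤ X), (1:ℝ) / l ≤ LL X + C := by
    refine le_trans ?_ (hP X hX3)
    refine sum_le_sum_of_subset_of_nonneg ?_ fun l _ _ => by positivity
    intro l hl
    have := mem_filter.mp hl
    exact mem_filter.mpr ⟨mem_Ioc.mpr ⟨(pp l this.1).pos, this.2⟩, pp l this.1, Nat.modEq_one⟩
  have LLX : LL X ≤ Real.log K + 26 := by
    unfold LL
    have h25 : Real.log X ≤ 26 * K := by norm_num at hLL; linarith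
    refine (Real.log_le_log (by linarith) h25).trans ?_
    rw [Real.log_mul (by norm_num) (by norm_num at hLL; linarith)]
    have := Real.log_le_sub_one_of_pos (show (0:ℝ) < 26 by norm_num)
    linarith
  constructor
  · rw [← sum_filter_add_sum_filter_not _ (fun l => l ≤ X)]
    norm_num at hLL
    nlinarith
  · rw [← sum_filter_add_sum_filter_not _ (fun l => l ≤ X)]
    linarith

theorem inv_pred_sum (P : Finset ℕ) (hP : ∀ l ∈ P, 2 ≤ l) :
    ∑ l ∈ P, (1:ℝ)/((l:ℝ)-1) ≤ ∑ l ∈ P, (1:ℝ)/l + 1 := by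
  have h : ∀ M : ℕ, ∑ l ∈ Icc 2 (M+1), ((1:ℝ)/((l:ℝ)-1) - 1/l) ≤ 1 - 1/((M:ℝ)+1) := by
    intro M
    induction M with
    | zero => simp
    | succ M ih =>
      rw [sum_Icc_succ_top (by omega)]
      push_cast
      rw [show (M:ℝ)+1+1-1 = M+1 by ring]
      linarith
  obtain ⟨M, hM⟩ : ∃ M : ℕ, P ⊆ Icc 2 (M+1) := by
    refine ⟨P.sup id, fun l hl => mem_Icc.mpr ⟨hP l hl, ?_⟩⟩
    have := le_sup (f := id) hl
    simp at this; omega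
  have h2 : ∑ l ∈ P, ((1:ℝ)/((l:ℝ)-1) - 1/l) ≤ 1 := by
    refine (sum_le_sum_of_subset_of_nonneg hM ?_).trans ((h M).trans ?_)
    · intro l hl _
      have : (2:ℝ) ≤ l := by exact_mod_cast (mem_Icc.mp hl).1
      rw [sub_nonneg]
      have h3 : 0 < (l:ℝ) - 1 := by linarith
      gcongr; linarith
    · have : (0:ℝ) ≤ 1/((M:ℝ)+1) := by positivity
      linarith
  rw [sum_sub_distrib] at h2
  linarith

theorem divisor_sum_bound (D : ℕ) : ∃ C : ℝ, 0 < C ∧ ∀ q : ℕ, 0 < q →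
    ∑ e ∈ q.divisors.filter Squarefree, (D:ℝ)^e.primeFactors.card * Real.log (2*e) / e.totient
      ≤ C * Real.log (Real.log (3*q))^(D+1) := by
  obtain ⟨C, hC, h⟩ := pf_sums
  refine ⟨Real.exp (D * (C + 1)) * (12 + 2 * D * C), by positivity, fun q hq => ?_⟩
  obtain ⟨h1, h2⟩ := h q hq
  obtain ⟨hL, hLL⟩ := LL3_lower q hq
  set K := Real.log (Real.log (3*q)) with hK
  have hK0 : 0 < K := by norm_num at hLL; linarith
  set P := q.primeFactors with hPdef
  have pp : ∀ l ∈ P, l.Prime := fun l hl => Nat.prime_of_mem_primeFactors hl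
  set g : ℕ → ℝ := fun l => D / ((l - 1 : ℕ):ℝ) with hg
  have key := powerset_bound g (fun l => Real.log l) (fun n => by positivity) (fun n => Real.log_natCast_nonneg n) P
    (Real.log 2) (Real.log_nonneg (by norm_num))
  have conv : ∑ e ∈ q.divisors.filter Squarefree, (D:ℝ)^e.primeFactors.card * Real.log (2*e) / e.totient
     = ∑ s ∈ P.powerset, (∏ l ∈ s, g l) * (Real.log 2 + ∑ l ∈ s, Real.log l) := by
    refine sum_bij (fun e _ => e.primeFactors) ?_ ?_ ?_ ?_
    · intro e he
      simp only [mem_filter, Nat.mem_divisors] at he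
      exact mem_powerset.mpr (Nat.primeFactors_mono he.1.1 hq.ne')
    · intro a ha b hb hab
      rw [← Nat.prod_primeFactors_of_squarefree (mem_filter.mp ha).2, ← Nat.prod_primeFactors_of_squarefree (mem_filter.mp hb).2, hab]
    · intro s hs
      have hs' := mem_powerset.mp hs
      have ps : ∀ l ∈ s, l.Prime := fun l hl => pp l (hs' hl)
      refine ⟨∏ l ∈ s, l, ?_, Nat.primeFactors_prod ps⟩
      simp only [mem_filter, Nat.mem_divisors]
      refine ⟨⟨?_, hq.ne'⟩, ?_⟩
      · exact (prod_dvd_prod_of_subset _ _ _ hs').trans (Nat.prod_primeFactors_dvd q)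
      · refine Finset.squarefree_prod_of_pairwise_isCoprime (fun a ha b hb hab => ?_)
          fun l hl => (ps l hl).squarefree
        simp only [← Nat.coprime_iff_isRelPrime]
        exact (Nat.coprime_primes (ps a ha) (ps b hb)).mpr hab
    · intro e he
      simp only [mem_filter, Nat.mem_divisors] at he
      have e0 : e ≠ 0 := he.2.ne_zero
      have pe := Nat.prod_primeFactors_of_squarefree he.2
      have tot : (e.totient : ℝ) = ∏ l ∈ e.primeFactors, ((l - 1 : ℕ):ℝ) := by
        have t := Nat.totient_mul_prod_primeFactors e
        rw [pe, mul_comm] at t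
        have t2 := Nat.eq_of_mul_eq_mul_left (Nat.pos_of_ne_zero e0) t
        rw [t2, Nat.cast_prod]
      have lg : Real.log (2*e) = Real.log 2 + ∑ l ∈ e.primeFactors, Real.log l := by
        rw [Real.log_mul (by norm_num) (by exact_mod_cast e0), ← Real.log_prod (fun l hl => by exact_mod_cast (Nat.prime_of_mem_primeFactors hl).ne_zero)]
        congr 2
        conv_lhs => rw [← pe]
        push_cast; rfl
      rw [hg, prod_div_distrib, prod_const, ← tot, lg]; ring
  rw [conv]
  refine key.trans ?_
  have p1 : ∏ l ∈ P, (1 + g l) ≤ Real.exp (D * (C+1)) * K^D := by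
    calc _ ≤ ∏ l ∈ P, Real.exp (g l) := by
          refine prod_le_prod (fun l _ => by positivity) fun l _ => ?_
          linarith [Real.add_one_le_exp (g l)]
      _ = Real.exp (∑ l ∈ P, g l) := (Real.exp_sum _ _).symm
      _ ≤ Real.exp (D * (C+1) + D * Real.log K) := by
          gcongr
          have : ∑ l ∈ P, g l = D * ∑ l ∈ P, (1:ℝ)/((l:ℝ)-1) := by
            rw [mul_sum]
            refine sum_congr rfl fun l hl => ?_
            rw [hg]
            dsimp only
            rw [Nat.cast_sub (pp l hl).one_le, Nat.cast_one, mul_one_div]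
          rw [this, ← mul_add]
          gcongr
          linarith [inv_pred_sum P fun l hl => (pp l hl).two_le]
      _ = _ := by
          rw [Real.exp_add, ← Real.rpow_natCast K D, Real.rpow_def_of_pos hK0, mul_comm (D:ℝ) (Real.log K)]
  have p2 : Real.log 2 + ∑ l ∈ P, g l * Real.log l ≤ (12 + 2 * D * C) * K := by
    have s1 : ∑ l ∈ P, g l * Real.log l ≤ 2 * D * ∑ l ∈ P, Real.log l / l := by
      rw [mul_sum]
      refine sum_le_sum fun l hl => ?_
      have l2 : (2:ℝ) ≤ l := by exact_mod_cast (pp l hl).two_le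
      have ll := Real.log_natCast_nonneg l
      rw [hg]
      dsimp only
      rw [Nat.cast_sub (pp l hl).one_le, Nat.cast_one]
      have : (1:ℝ) / ((l:ℝ)-1) ≤ 2 / l := by
        rw [div_le_div_iff₀ (by linarith) (by linarith)]; linarith
      calc _ = (1:ℝ) / ((l:ℝ)-1) * (D * Real.log l) := by ring
        _ ≤ 2 / l * (D * Real.log l) := by gcongr
        _ = _ := by ring
    have := Real.log_two_lt_d9
    norm_num at hLL
    have s2 : 2 * D * ∑ l ∈ P, Real.log l / l ≤ 2 * D * (C * K) := by gcongr
    nlinarith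
  calc _ ≤ (Real.exp (D * (C+1)) * K^D) * ((12 + 2 * D * C) * K) := by
        gcongr
    _ = _ := by ring
end

section
open Finset

/-- residues coprime to `e` that are roots of `F` modulo `e`. -/
def Bset (F : Polynomial ℤ) (e : ℕ) : Finset ℕ :=
  (range e).filter (fun b : ℕ => b.Coprime e ∧ (e:ℤ) ∣ F.eval (b:ℤ))

theorem dvd_eval_iff (F : Polynomial ℤ) (n a : ℕ) :
    (n:ℤ) ∣ F.eval (a:ℤ) ↔ Polynomial.aeval ((a:ℕ) : ZMod n) F = 0 := by
  rw [← ZMod.intCast_zmod_eq_zero_iff_dvd]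
  have : ((F.eval (a:ℤ) : ℤ) : ZMod n) = Polynomial.aeval ((a:ℕ) : ZMod n) F := by
    have := Polynomial.aeval_algebraMap_apply (ZMod n) (a:ℤ) F
    simp at this
    simp [this]
  rw [this]

theorem dvd_eval_congr (F : Polynomial ℤ) (n a b : ℕ) (h : a ≡ b [MOD n]) :
    (n:ℤ) ∣ F.eval (a:ℤ) ↔ (n:ℤ) ∣ F.eval (b:ℤ) := by
  rw [dvd_eval_iff, dvd_eval_iff, (ZMod.natCast_eq_natCast_iff a b n).mpr h]

theorem roots_card (F : Polynomial ℤ) (l : ℕ) (hl : l.Prime) (h : ¬ l ∣ F.leadingCoeff.natAbs) :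
    ((range l).filter (fun b : ℕ => (l:ℤ) ∣ F.eval (b:ℤ))).card ≤ F.natDegree := by
  classical
  have : Fact l.Prime := ⟨hl⟩
  set G := F.map (Int.castRingHom (ZMod l)) with hG
  have lc : Int.castRingHom (ZMod l) F.leadingCoeff ≠ 0 := by
    simp only [eq_intCast, ne_eq, ZMod.intCast_zmod_eq_zero_iff_dvd]
    rwa [Int.natCast_dvd]
  have G0 : G ≠ 0 := by
    intro h0
    apply lc
    have : G.coeff F.natDegree = 0 := by rw [h0]; simp
    rwa [hG, Polynomial.coeff_map] at this
  have : ((range l).filter (fun b : ℕ => (l:ℤ) ∣ F.eval (b:ℤ))).card ≤ G.roots.toFinset.card := by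
    refine card_le_card_of_injOn (fun b : ℕ => (b : ZMod l)) ?_ ?_
    · intro b hb
      have hb := (mem_filter.mp hb).2
      rw [dvd_eval_iff] at hb
      rw [mem_coe, Multiset.mem_toFinset, Polynomial.mem_roots G0, Polynomial.IsRoot.def, hG, Polynomial.eval_map]
      rw [Polynomial.aeval_def] at hb
      exact hb
    · intro a ha b hb hab
      have ha := mem_range.mp (mem_filter.mp ha).1
      have hb := mem_range.mp (mem_filter.mp hb).1
      have := (ZMod.natCast_eq_natCast_iff a b l).mp hab
      exact Nat.ModEq.eq_of_lt_of_lt this ha hb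
  refine this.trans ((Multiset.toFinset_card_le _).trans ((Polynomial.card_roots' G).trans ?_))
  exact Polynomial.natDegree_map_le

theorem modEq_of_primes (e a b : ℕ) (he : Squarefree e) (h : ∀ l ∈ e.primeFactors, a ≡ b [MOD l]) :
    a ≡ b [MOD e] := by
  rw [Nat.modEq_iff_dvd]
  rw [Int.natCast_dvd]
  rw [← Nat.prod_primeFactors_of_squarefree he]
  refine Finset.prod_primes_dvd _ (fun l hl => (Nat.prime_of_mem_primeFactors hl).prime) fun l hl => ?_
  have := h l hl
  rw [Nat.modEq_iff_dvd, Int.natCast_dvd] at this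
  exact this

theorem Bset_card (F : Polynomial ℤ) (hF : 0 < F.natDegree) (e : ℕ) (he : Squarefree e) :
    (Bset F e).card ≤ F.leadingCoeff.natAbs * F.natDegree ^ e.primeFactors.card := by
  classical
  set R : ℕ → Finset ℕ := fun l => (range l).filter (fun b : ℕ => (l:ℤ) ∣ F.eval (b:ℤ)) with hR
  have lc0 : F.leadingCoeff.natAbs ≠ 0 := by
    rw [Int.natAbs_ne_zero, Polynomial.leadingCoeff_ne_zero]
    rintro rfl; simp at hF
  have h1 : (Bset F e).card ≤ (e.primeFactors.pi R).card := by
    refine card_le_card_of_injOn (fun b l _ => b % l) ?_ ?_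
    · intro b hb
      have hb := (mem_filter.mp hb)
      refine mem_coe.mpr (mem_pi.mpr fun l hl => ?_)
      have lp := Nat.prime_of_mem_primeFactors hl
      refine mem_filter.mpr ⟨mem_range.mpr (Nat.mod_lt _ lp.pos), ?_⟩
      rw [dvd_eval_congr F l (b % l) b (Nat.mod_modEq b l)]
      refine dvd_trans ?_ hb.2.2
      exact_mod_cast Nat.dvd_of_mem_primeFactors hl
    · intro a ha b hb hab
      have ha := mem_range.mp (mem_filter.mp ha).1
      have hb := mem_range.mp (mem_filter.mp hb).1
      refine Nat.ModEq.eq_of_lt_of_lt (modEq_of_primes e a b he fun l hl => ?_) ha hb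
      exact congrFun (congrFun hab l) hl
  rw [card_pi] at h1
  refine h1.trans ?_
  calc _ ≤ ∏ l ∈ e.primeFactors, ((if l ∣ F.leadingCoeff.natAbs then l else 1) * F.natDegree) := by
        refine prod_le_prod (fun _ _ => Nat.zero_le _) fun l hl => ?_
        split_ifs with h
        · refine (card_filter_le _ _).trans ?_
          rw [card_range]
          exact Nat.le_mul_of_pos_right _ hF
        · rw [one_mul]
          exact roots_card F l (Nat.prime_of_mem_primeFactors hl) h
    _ = (∏ l ∈ e.primeFactors, (if l ∣ F.leadingCoeff.natAbs then l else 1)) * F.natDegree ^ e.primeFactors.card := by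
        rw [prod_mul_distrib, prod_const]
    _ ≤ _ := by
        gcongr
        rw [← prod_filter]
        refine Nat.le_of_dvd (Nat.pos_of_ne_zero lc0) ?_
        refine Finset.prod_primes_dvd _ (fun l hl => (Nat.prime_of_mem_primeFactors (mem_filter.mp hl).1).prime) fun l hl => (mem_filter.mp hl).2

theorem count_units (n : ℕ) [NeZero n] (P : ZMod n → Prop) [DecidablePred P] :
    ((range n).filter (fun a : ℕ => a.Coprime n ∧ P (a : ZMod n))).card
      = (univ.filter (fun u : (ZMod n)ˣ => P (u : ZMod n))).card := by
  refine card_bij' (fun a ha => ZMod.unitOfCoprime a (mem_filter.mp ha).2.1) (fun u _ => (u : ZMod n).val) ?_ ?_ ?_ ?_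
  · intro a ha
    simpa using (mem_filter.mp ha).2.2
  · intro u hu
    refine mem_filter.mpr ⟨mem_range.mpr (ZMod.val_lt _), ZMod.val_coe_unit_coprime u, ?_⟩
    simpa using (mem_filter.mp hu).2
  · intro a ha
    simp only [ZMod.coe_unitOfCoprime]
    exact ZMod.val_cast_of_lt (mem_range.mp (mem_filter.mp ha).1)
  · intro u hu
    ext
    simp

theorem count_lift (F : Polynomial ℤ) (q e : ℕ) (hq : 0 < q) (he : e ∣ q) :
    ((range q).filter (fun a : ℕ => a.Coprime q ∧ (e:ℤ) ∣ F.eval (a:ℤ))).card * e.totient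
      = (Bset F e).card * q.totient := by
  classical
  have : NeZero q := ⟨hq.ne'⟩
  have e0 : 0 < e := Nat.pos_of_dvd_of_pos he hq
  have : NeZero e := ⟨e0.ne'⟩
  have h1 : (Bset F e).card = (univ.filter (fun u : (ZMod e)ˣ => Polynomial.aeval (u : ZMod e) F = 0)).card := by
    rw [← count_units e (fun x => Polynomial.aeval x F = 0)]
    unfold Bset
    congr 1
    ext a
    simp only [mem_filter, dvd_eval_iff]
  have h2 : ((range q).filter (fun a : ℕ => a.Coprime q ∧ (e:ℤ) ∣ F.eval (a:ℤ))).card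
      = (univ.filter (fun u : (ZMod q)ˣ => Polynomial.aeval (ZMod.castHom he (ZMod e) (u : ZMod q)) F = 0)).card := by
    rw [← count_units q (fun x => Polynomial.aeval (ZMod.castHom he (ZMod e) x) F = 0)]
    congr 1
    ext a
    simp only [mem_filter, dvd_eval_iff, map_natCast]
  have h3 : ∀ v : (ZMod e)ˣ, (univ.filter (fun u : (ZMod q)ˣ => ZMod.unitsMap he u = v)).card * e.totient = q.totient := by
    have hs := ZMod.unitsMap_surjective he
    have eqf : ∀ v w : (ZMod e)ˣ, (univ.filter (fun u : (ZMod q)ˣ => ZMod.unitsMap he u = v)).card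
        = (univ.filter (fun u : (ZMod q)ˣ => ZMod.unitsMap he u = w)).card := fun v w =>
      MonoidHom.card_fiber_eq_of_mem_range (ZMod.unitsMap he) (hs v) (hs w)
    intro v
    have tot := card_eq_sum_card_fiberwise (s := (univ : Finset (ZMod q)ˣ)) (t := (univ : Finset (ZMod e)ˣ)) (f := ZMod.unitsMap he) (fun _ _ => by simp)
    rw [card_univ, ZMod.card_units_eq_totient, sum_congr rfl (fun w _ => eqf w v), sum_const, card_univ, ZMod.card_units_eq_totient, smul_eq_mul] at tot
    rw [tot, mul_comm]
  rw [h1, h2]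
  have h4 := card_eq_sum_card_fiberwise (s := univ.filter (fun u : (ZMod q)ˣ => Polynomial.aeval (ZMod.castHom he (ZMod e) (u : ZMod q)) F = 0))
    (t := univ.filter (fun u : (ZMod e)ˣ => Polynomial.aeval (u : ZMod e) F = 0)) (f := ZMod.unitsMap he) (by
      intro u hu
      have := (mem_filter.mp hu).2
      simp only [coe_filter, mem_univ, true_and, Set.mem_ofPred_eq]
      rw [ZMod.unitsMap_val]
      exact this)
  rw [h4, sum_mul]
  rw [card_eq_sum_ones, sum_mul]
  refine sum_congr rfl fun v hv => ?_
  rw [one_mul, ← h3 v]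
  congr 2
  ext u
  simp only [mem_filter, mem_univ, true_and, and_iff_right_iff_imp]
  rintro rfl
  have := (mem_filter.mp hv).2
  rw [ZMod.unitsMap_val] at this
  exact this
end

section
open Finset

theorem indicator_sum (q : ℕ) (hq : 0 < q) (n : ℤ) :
    ∑ e ∈ q.divisors, (ArithmeticFunction.moebius e : ℝ) * (if (e:ℤ) ∣ n then 1 else 0)
      = if Int.gcd n (q:ℤ) = 1 then 1 else 0 := by
  have h := sum_mu (Int.gcd n q)
  have h2 : (Int.gcd n q).divisors = q.divisors.filter (fun e : ℕ => (e:ℤ) ∣ n) := by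
    ext e
    simp only [Nat.mem_divisors, mem_filter]
    rw [Int.dvd_gcd_iff, Int.natCast_dvd_natCast]
    have : Int.gcd n q ≠ 0 := by
      rw [Ne, Int.gcd_eq_zero_iff]
      intro h
      have := h.2
      omega
    have := hq.ne'
    tauto
  rw [h2, sum_filter] at h
  simp only [mul_ite, mul_one, mul_zero]
  exact_mod_cast h

theorem alpha_eq (F : Polynomial ℤ) (q : ℕ) (hq : 0 < q) :
    alpha F q = ∑ e ∈ q.divisors, (ArithmeticFunction.moebius e : ℝ) * ((Bset F e).card / e.totient) := by
  have hφ : (q.totient:ℝ) ≠ 0 := by exact_mod_cast (Nat.totient_pos.mpr hq).ne'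
  have h1 : {a : ℕ | a < q ∧ Int.gcd ((a : ℤ) * F.eval (a : ℤ)) (q : ℤ) = 1}
     = (((range q).filter (fun a : ℕ => a.Coprime q)).filter (fun a : ℕ => Int.gcd (F.eval (a : ℤ)) (q : ℤ) = 1) : Finset ℕ) := by
    ext a
    simp only [Set.mem_ofPred_eq, coe_filter, mem_filter, mem_range, and_assoc]
    rw [← Int.isCoprime_iff_gcd_eq_one, IsCoprime.mul_left_iff, Int.isCoprime_iff_gcd_eq_one, Int.isCoprime_iff_gcd_eq_one, Int.gcd_natCast_natCast]
  unfold alpha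
  rw [h1, Set.ncard_coe_finset, div_eq_iff hφ]
  rw [card_filter, Nat.cast_sum]
  have h2 : ∀ a ∈ (range q).filter (fun a : ℕ => a.Coprime q), (((if Int.gcd (F.eval (a : ℤ)) (q : ℤ) = 1 then 1 else 0 : ℕ)) : ℝ)
     = ∑ e ∈ q.divisors, (ArithmeticFunction.moebius e : ℝ) * (if (e:ℤ) ∣ F.eval (a : ℤ) then 1 else 0) := by
    intro a _
    rw [indicator_sum q hq]
    push_cast; rfl
  rw [sum_congr rfl h2, sum_comm, sum_mul]
  refine sum_congr rfl fun e he => ?_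
  have hed := Nat.dvd_of_mem_divisors he
  have e0 : (e.totient:ℝ) ≠ 0 := by
    exact_mod_cast (Nat.totient_pos.mpr (Nat.pos_of_dvd_of_pos hed hq)).ne'
  have h3 := count_lift F q e hq hed
  rw [← mul_sum, mul_assoc]
  congr 1
  rw [div_mul_eq_mul_div, eq_div_iff e0]
  rw [← filter_filter] at h3
  rw [← sum_filter, sum_const, nsmul_eq_mul, mul_one]
  exact_mod_cast h3

theorem sum_split (F : Polynomial ℤ) (q Q N : ℕ) (hq : 0 < q) (hQ : q ≤ Q) :
    ∑ p ∈ (Ioc Q N).filter (fun p : ℕ => p.Prime ∧ Int.gcd (F.eval (p:ℤ)) (q:ℤ) = 1), (1:ℝ)/p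
      = ∑ e ∈ q.divisors, (ArithmeticFunction.moebius e : ℝ) * ∑ b ∈ Bset F e, Pr e b Q N := by
  rw [← filter_filter, sum_filter]
  have h2 : ∀ p ∈ (Ioc Q N).filter (fun p : ℕ => p.Prime), (if Int.gcd (F.eval (p : ℤ)) (q : ℤ) = 1 then (1:ℝ)/p else 0)
     = ∑ e ∈ q.divisors, (ArithmeticFunction.moebius e : ℝ) * (if (e:ℤ) ∣ F.eval (p : ℤ) then (1:ℝ)/p else 0) := by
    intro p _
    have := congrArg (fun t => t * ((1:ℝ)/p)) (indicator_sum q hq (F.eval (p:ℤ)))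
    simp only [ite_mul, one_mul, zero_mul] at this
    rw [← this, sum_mul]
    refine sum_congr rfl fun e _ => ?_
    split_ifs <;> ring
  rw [sum_congr rfl h2, sum_comm]
  refine sum_congr rfl fun e he => ?_
  have hed := Nat.dvd_of_mem_divisors he
  have e0 := Nat.pos_of_dvd_of_pos hed hq
  have heq := Nat.le_of_dvd hq hed
  rw [← mul_sum, ← sum_filter, filter_filter]
  congr 1
  rw [← sum_fiberwise_of_maps_to (t := Bset F e) (g := fun p => p % e)]
  · refine sum_congr rfl fun b hb => ?_
    have hb := mem_filter.mp hb
    unfold Pr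
    refine sum_congr ?_ fun _ _ => rfl
    ext p
    simp only [mem_filter]
    have hbe : p % e = b ↔ p ≡ b [MOD e] := by
      unfold Nat.ModEq
      rw [Nat.mod_eq_of_lt (mem_range.mp hb.1)]
    rw [hbe]
    constructor
    · rintro ⟨⟨h1, h2, h3⟩, h4⟩; exact ⟨h1, h2, h4⟩
    · rintro ⟨h1, h2, h4⟩
      exact ⟨⟨h1, h2, (dvd_eval_congr F e p b h4).mpr hb.2.2⟩, h4⟩
  · intro p hp
    obtain ⟨h1, h2, h3⟩ := mem_filter.mp hp
    have h1 := mem_Ioc.mp h1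
    refine mem_filter.mpr ⟨mem_range.mpr (Nat.mod_lt _ e0), ?_, ?_⟩
    · have : p.Coprime e := (Nat.coprime_of_lt_prime e0.ne' (by omega) h2)
      rwa [Nat.Coprime, Nat.gcd_comm, Nat.gcd_rec] at this
    · exact (dvd_eval_congr F e (p % e) p (Nat.mod_modEq p e)).mpr h3

theorem main_range (F : Polynomial ℤ) (hF : 0 < F.natDegree) : ∃ C : ℝ, 0 < C ∧ ∀ q N : ℕ, 0 < q → 3 * q ≤ N →
    |∑ p ∈ (Ioc (3*q) N).filter (fun p : ℕ => p.Prime ∧ Int.gcd (F.eval (p:ℤ)) (q:ℤ) = 1), (1:ℝ)/p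
      - alpha F q * (LL N - LL (3*q))| ≤ C * Real.log (Real.log (3*q)) ^ (F.natDegree + 1) := by
  obtain ⟨C1, hC1, h1⟩ := lemmaE
  obtain ⟨C2, hC2, h2⟩ := divisor_sum_bound F.natDegree
  set c : ℝ := (F.leadingCoeff.natAbs : ℝ) with hc
  have hc0 : 0 < c := by
    rw [hc]
    have : 0 < F.leadingCoeff.natAbs := by
      rw [Int.natAbs_pos, Polynomial.leadingCoeff_ne_zero]
      rintro rfl; simp at hF
    exact_mod_cast this
  refine ⟨C1 * c * C2, by positivity, fun q N hq hN => ?_⟩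
  rw [sum_split F q (3*q) N hq (by omega), alpha_eq F q hq, sum_mul, ← sum_sub_distrib]
  have h3 := mul_le_mul_of_nonneg_left (h2 q hq) (by positivity : 0 ≤ C1 * c)
  rw [← mul_assoc] at h3
  refine le_trans ?_ h3
  rw [mul_sum, sum_filter]
  refine (abs_sum_le_sum_abs _ _).trans (sum_le_sum fun e he => ?_)
  have hed := Nat.dvd_of_mem_divisors he
  have e0 := Nat.pos_of_dvd_of_pos hed hq
  have heq := Nat.le_of_dvd hq hed
  split_ifs with hs
  · have hlog : 0 ≤ Real.log (2 * e) := Real.log_nonneg (by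
      have : (1:ℝ) ≤ e := by exact_mod_cast e0
      linarith)
    have hB : ((Bset F e).card : ℝ) ≤ c * (F.natDegree:ℝ)^e.primeFactors.card := by
      rw [hc]; exact_mod_cast Bset_card F hF e hs
    have e1 : (ArithmeticFunction.moebius e : ℝ) * ∑ b ∈ Bset F e, Pr e b (3*q) N
        - (ArithmeticFunction.moebius e : ℝ) * ((Bset F e).card / e.totient) * (LL N - LL (3*q))
        = (ArithmeticFunction.moebius e : ℝ) * ∑ b ∈ Bset F e, (Pr e b (3*q) N - (LL N - LL (3*q)) / e.totient) := by
      rw [sum_sub_distrib, sum_const, nsmul_eq_mul]; ring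
    rw [e1, abs_mul]
    have m1 : |(ArithmeticFunction.moebius e : ℝ)| ≤ 1 := by
      have := ArithmeticFunction.abs_moebius_le_one (n := e)
      exact_mod_cast this
    calc _ ≤ 1 * ∑ b ∈ Bset F e, (C1 * Real.log (2*e) / e.totient) := by
          gcongr
          refine (abs_sum_le_sum_abs _ _).trans (sum_le_sum fun b hb => ?_)
          exact h1 e b (3*q) N hs (mem_filter.mp hb).2.1 (by omega) (by omega) hN
      _ = (Bset F e).card * (C1 * Real.log (2*e) / e.totient) := by
          rw [one_mul, sum_const, nsmul_eq_mul]
      _ ≤ (c * (F.natDegree:ℝ)^e.primeFactors.card) * (C1 * Real.log (2*e) / e.totient) := by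
          gcongr
      _ = _ := by ring
  · rw [ArithmeticFunction.moebius_eq_zero_of_not_squarefree hs]; simp

theorem alpha_bounds (F : Polynomial ℤ) (q : ℕ) (hq : 0 < q) : 0 ≤ alpha F q ∧ alpha F q ≤ 1 := by
  unfold alpha
  have hφ : (0:ℝ) < q.totient := by exact_mod_cast (Nat.totient_pos.mpr hq)
  refine ⟨by positivity, ?_⟩
  rw [div_le_one hφ]
  have : Set.ncard {a : ℕ | a < q ∧ Int.gcd ((a : ℤ) * F.eval (a : ℤ)) (q : ℤ) = 1} ≤ q.totient := by
    rw [Nat.totient_eq_card_coprime, ← Set.ncard_coe_finset]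
    refine Set.ncard_le_ncard ?_ (finite_toSet _)
    intro a ha
    obtain ⟨h1, h2⟩ := ha
    rw [← Int.isCoprime_iff_gcd_eq_one, IsCoprime.mul_left_iff, Int.isCoprime_iff_gcd_eq_one, Int.gcd_natCast_natCast] at h2
    simp only [coe_filter, mem_range]
    exact ⟨h1, Nat.Coprime.symm h2.1⟩
  exact_mod_cast this
end

open Finset in
/-- **Lemma 2.4.** For a fixed nonconstant `F ∈ ℤ[T]` of degree `D`, every positive integer
`q`, and every real `x ≥ 3q`:
`∑_{p ≤ x, gcd(F(p),q)=1} 1/p = α(q) log log x + O((log log 3q)^{D+1})`. -/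
theorem stmt8 (F : Polynomial ℤ) (hFdeg : 0 < F.natDegree) :
    ∃ C : ℝ, ∀ q : ℕ, 0 < q → ∀ x : ℝ, 3 * (q : ℝ) ≤ x →
      |(∑ p ∈ (Finset.range (Nat.floor x + 1)).filter
            (fun p : ℕ => p.Prime ∧ (p : ℝ) ≤ x ∧ Int.gcd (F.eval (p : ℤ)) (q : ℤ) = 1),
            (1 : ℝ) / p)
          - alpha F q * Real.log (Real.log x)|
        ≤ C * Real.log (Real.log (3 * (q : ℝ))) ^ (F.natDegree + 1) := by
  obtain ⟨C1, hC1, h1⟩ := main_range F hFdeg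
  obtain ⟨C2, hC2, h2⟩ := prime_recip
  refine ⟨C1 + (C2 + 3) * 12.5 ^ (F.natDegree + 1), fun q hq x hx => ?_⟩
  obtain ⟨hL, hLL⟩ := LL3_lower q hq
  obtain ⟨a0, a1⟩ := alpha_bounds F q hq
  have q1 : (1:ℝ) ≤ q := by exact_mod_cast hq
  have hx0 : 0 ≤ x := by linarith
  set N := ⌊x⌋₊ with hN
  have hNQ : 3 * q ≤ N := by
    rw [hN, Nat.le_floor_iff hx0]; push_cast; exact hx
  have m := h1 q N hq hNQ
  have r := h2 (3*q) (by omega)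
  have LQ : LL (3*q) = Real.log (Real.log (3*q)) := by unfold LL; push_cast; rfl
  rw [LQ] at r m
  set K := Real.log (Real.log (3*(q:ℝ))) with hK
  set D := F.natDegree
  set G : ℕ → Prop := fun p => Int.gcd (F.eval (p : ℤ)) (q : ℤ) = 1 with hG
  have hsplit : ∑ p ∈ (range (N + 1)).filter
            (fun p : ℕ => p.Prime ∧ (p : ℝ) ≤ x ∧ Int.gcd (F.eval (p : ℤ)) (q : ℤ) = 1), (1 : ℝ) / p
      = ∑ p ∈ (Ioc 0 (3*q)).filter (fun p : ℕ => p.Prime ∧ Int.gcd (F.eval (p : ℤ)) (q : ℤ) = 1), (1 : ℝ) / p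
       + ∑ p ∈ (Ioc (3*q) N).filter (fun p : ℕ => p.Prime ∧ Int.gcd (F.eval (p : ℤ)) (q : ℤ) = 1), (1 : ℝ) / p := by
    rw [← sum_union]
    · refine sum_congr ?_ fun _ _ => rfl
      ext p
      simp only [mem_filter, mem_range, mem_union, mem_Ioc]
      constructor
      · rintro ⟨h1, h2, h3, h4⟩
        have := h2.pos
        by_cases hp : p ≤ 3 * q
        · exact Or.inl ⟨⟨this, hp⟩, h2, h4⟩
        · exact Or.inr ⟨⟨by omega, by omega⟩, h2, h4⟩
      · have aux : ∀ p : ℕ, p ≤ N → (p:ℝ) ≤ x := fun p hp =>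
          (Nat.le_floor_iff hx0).mp hp
        rintro (⟨h1, h2, h3⟩ | ⟨h1, h2, h3⟩)
        · exact ⟨by omega, h2, aux p (by omega), h3⟩
        · exact ⟨by omega, h2, aux p (by omega), h3⟩
    · rw [disjoint_left]
      intro p h1 h2
      have h1 := mem_Ioc.mp (mem_filter.mp h1).1
      have h2 := mem_Ioc.mp (mem_filter.mp h2).1
      omega
  have s0 : 0 ≤ ∑ p ∈ (Ioc 0 (3*q)).filter (fun p : ℕ => p.Prime ∧ Int.gcd (F.eval (p : ℤ)) (q : ℤ) = 1), (1 : ℝ) / p :=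
    sum_nonneg fun p _ => by positivity
  have s1 : ∑ p ∈ (Ioc 0 (3*q)).filter (fun p : ℕ => p.Prime ∧ Int.gcd (F.eval (p : ℤ)) (q : ℤ) = 1), (1 : ℝ) / p ≤ K + C2 := by
    refine le_trans ?_ r
    refine sum_le_sum_of_subset_of_nonneg ?_ fun l _ _ => by positivity
    intro l hl
    have := mem_filter.mp hl
    exact mem_filter.mpr ⟨this.1, this.2.1, Nat.modEq_one⟩
  have N3 : (3:ℝ) ≤ N := by exact_mod_cast (by omega : 3 ≤ N)
  have lN : 1 ≤ Real.log N := one_le_log_three.trans (Real.log_le_log (by norm_num) N3)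
  have Nx : (N:ℝ) ≤ x := Nat.floor_le hx0
  have xN : x ≤ 2 * N := by have := Nat.lt_floor_add_one x; linarith
  have l2 := Real.log_two_lt_d9
  have lx1 : Real.log N ≤ Real.log x := Real.log_le_log (by linarith) Nx
  have lx2 : Real.log x ≤ 2 * Real.log N := by
    have := Real.log_le_log (by linarith) xN
    rw [Real.log_mul (by norm_num) (by linarith)] at this
    linarith
  have ll1 : LL N ≤ Real.log (Real.log x) := Real.log_le_log (by linarith) lx1
  have ll2 : Real.log (Real.log x) ≤ LL N + 1 := by
    have := Real.log_le_log (by linarith) lx2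
    rw [Real.log_mul (by norm_num) (by linarith)] at this
    unfold LL
    linarith
  rw [hsplit]
  have K0 : 0.08 ≤ K := hLL
  have K1 : 1 ≤ 12.5 * K := by norm_num at K0 ⊢; linarith
  have KD : 1 ≤ (12.5 * K) ^ D := one_le_pow₀ K1
  have KD1 : 1 ≤ (12.5 * K) ^ (D+1) := one_le_pow₀ K1
  have KD2 : K ≤ (12.5 * K) ^ (D+1) := by
    rw [pow_succ]; norm_num at K1 KD ⊢; nlinarith
  have fin : (C1 + (C2 + 3) * 12.5 ^ (D + 1)) * K ^ (D+1) = C1 * K^(D+1) + (C2+3) * (12.5 * K)^(D+1) := by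
    rw [mul_pow]; ring
  rw [fin]
  obtain ⟨m1, m2⟩ := abs_le.mp m
  have K00 : 0 ≤ K := by norm_num at K0; linarith
  have t1 : alpha F q * K ≤ K := by nlinarith
  have t2 : 0 ≤ alpha F q * K := by positivity
  have t3 : 0 ≤ alpha F q * (Real.log (Real.log x) - LL N) := mul_nonneg a0 (by linarith)
  have t4 : alpha F q * (Real.log (Real.log x) - LL N) ≤ 1 := by nlinarith
  have t5 : C2 ≤ C2 * (12.5 * K)^(D+1) := le_mul_of_one_le_right hC2.le KD1
  have e : alpha F q * Real.log (Real.log x) = alpha F q * (LL N - K) + alpha F q * K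
      + alpha F q * (Real.log (Real.log x) - LL N) := by ring
  rw [add_mul, e]
  clear fin hsplit h1 h2 KD e
  generalize (12.5 * K)^(D+1) = W at *
  generalize C1 * K^(D+1) = V at *
  generalize C2 * W = U at *
  generalize alpha F q * (LL N - K) = A1 at *
  generalize alpha F q * K = A2 at *
  generalize alpha F q * (Real.log (Real.log x) - LL N) = A3 at *
  rw [abs_le]
  constructor <;> linarith
end

section
/- Let R and S be integers with R ≠ 0 and set F(T) = RT + S. For every ε > 0 there exists J₀ such that for all integers J ≥ J₀, all positive integers q with gcd(q, 6R) = 1, and all units w modulo q, the quantity V = #{(v₁, …, v_J) ∈ ((ℤ/qℤ)^×)^J : ∏_{i=1}^J (R·v_i + S) ≡ w (mod q)} satisfies |φ(q)·V − (φ(q)·α(q))^J| ≤ ε·(φ(q)·α(q))^J. -/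
/-- `α(q)` for the linear polynomial `F(T) = RT + S`:
`α(q) = (1/φ(q)) · #{a mod q : gcd(a·F(a), q) = 1}`. -/
noncomputable def alphaLin (R S : ℤ) (q : ℕ) : ℝ :=
  (Set.ncard {a : ℕ | a < q ∧ Int.gcd ((a : ℤ) * (R * (a : ℤ) + S)) (q : ℤ) = 1} : ℝ)
    / (Nat.totient q : ℝ)

/-- Number of representations of `w` as a product of `J` elements of `A`, defined recursively. -/
noncomputable def cntRep {G : Type*} [CommGroup G] (A : Finset G) : ℕ → G → ℝ
  | 0, w => by classical exact if w = 1 then 1 else 0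
  | J + 1, w => ∑ u ∈ A, cntRep A J (w / u)

theorem cntRep_zero {G : Type*} [CommGroup G] [DecidableEq G] (A : Finset G) (w : G) :
    cntRep A 0 w = if w = 1 then 1 else 0 := by
  simp only [cntRep]
  split_ifs <;> rfl

theorem cntRep_sum {G : Type*} [CommGroup G] [Fintype G] (A : Finset G) (J : ℕ) :
    ∑ w, cntRep A J w = (A.card : ℝ) ^ J := by
  classical
  induction J with
  | zero => simp [cntRep_zero]
  | succ J ih =>
    simp only [cntRep]
    rw [Finset.sum_comm]
    have : ∀ u ∈ A, ∑ w, cntRep A J (w / u) = (A.card : ℝ) ^ J := by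
      intro u _
      rw [← ih]
      exact Fintype.sum_equiv (Equiv.divRight u) _ _ (fun _ => rfl)
    rw [Finset.sum_congr rfl this]
    simp [pow_succ, mul_comm]

theorem cntRep_bound {G : Type*} [CommGroup G] [Fintype G] [DecidableEq G] (A : Finset G)
    (J : ℕ) : ∀ w : G,
    |(Fintype.card G : ℝ) * cntRep A (J + 1) w - (A.card : ℝ) ^ (J + 1)|
      ≤ (Fintype.card G : ℝ) * ((Aᶜ).card : ℝ) ^ J := by
  induction J with
  | zero =>
    intro w
    have h1 : cntRep A (0 + 1) w = if w ∈ A then 1 else 0 := by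
      simp only [cntRep.eq_2, cntRep_zero, div_eq_one]
      simp
    have h2 : (A.card : ℝ) ≤ Fintype.card G := by exact_mod_cast Finset.card_le_univ A
    have h3 : (0 : ℝ) ≤ A.card := by positivity
    rw [h1, abs_le]
    split_ifs <;> constructor <;>
      simp only [mul_one, mul_zero, zero_add, pow_one, pow_zero] <;> linarith
  | succ J ih =>
    intro w
    have h1 : cntRep A (J + 1 + 1) w
        = (A.card : ℝ) ^ (J + 1) - ∑ u ∈ Aᶜ, cntRep A (J + 1) (w / u) := by
      have h := Finset.sum_add_sum_compl A (fun u => cntRep A (J + 1) (w / u))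
      have h' : ∑ u, cntRep A (J + 1) (w / u) = (A.card : ℝ) ^ (J + 1) := by
        rw [← cntRep_sum]
        exact Fintype.sum_equiv (Equiv.divLeft w) _ _ (fun _ => rfl)
      rw [h'] at h
      rw [← h]
      simp [cntRep]
    have h2 : (Fintype.card G : ℝ) = A.card + (Aᶜ).card := by
      exact_mod_cast (Finset.card_add_card_compl A).symm
    have h3 : (Fintype.card G : ℝ) * cntRep A (J + 1 + 1) w - (A.card : ℝ) ^ (J + 1 + 1)
        = - ∑ u ∈ Aᶜ, ((Fintype.card G : ℝ) * cntRep A (J + 1) (w / u)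
            - (A.card : ℝ) ^ (J + 1)) := by
      rw [h1, Finset.sum_sub_distrib, ← Finset.mul_sum, Finset.sum_const, nsmul_eq_mul, h2]
      ring
    rw [h3, abs_neg]
    refine (Finset.abs_sum_le_sum_abs _ _).trans ?_
    refine (Finset.sum_le_sum (fun u _ => ih (w / u))).trans ?_
    rw [Finset.sum_const, nsmul_eq_mul]
    apply le_of_eq
    ring

theorem cntRep_prod {G G₁ G₂ : Type*} [CommGroup G] [CommGroup G₁] [CommGroup G₂]
    (e : G ≃* G₁ × G₂) (A : Finset G) (A₁ : Finset G₁) (A₂ : Finset G₂)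
    (h : ∀ u, u ∈ A ↔ (e u).1 ∈ A₁ ∧ (e u).2 ∈ A₂) (J : ℕ) : ∀ w : G,
    cntRep A J w = cntRep A₁ J (e w).1 * cntRep A₂ J (e w).2 := by
  induction J with
  | zero =>
    intro w
    have : w = 1 ↔ (e w).1 = 1 ∧ (e w).2 = 1 := by
      rw [← Prod.mk_eq_one, Prod.mk.eta, map_eq_one_iff e e.injective]
    classical
    rw [cntRep_zero, cntRep_zero, cntRep_zero]
    by_cases h1 : (e w).1 = 1 <;> by_cases h2 : (e w).2 = 1 <;>
      simp only [h1, h2, this] <;> simp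
  | succ J ih =>
    intro w
    simp only [cntRep]
    rw [Finset.sum_mul_sum, ← Finset.sum_product']
    refine Finset.sum_equiv e.toEquiv ?_ ?_
    · intro u
      simp [h u]
    · intro u _
      simp [ih]

theorem card_prod_of_equiv {G G₁ G₂ : Type*} [CommGroup G] [CommGroup G₁] [CommGroup G₂]
    (e : G ≃* G₁ × G₂) (A : Finset G) (A₁ : Finset G₁) (A₂ : Finset G₂)
    (h : ∀ u, u ∈ A ↔ (e u).1 ∈ A₁ ∧ (e u).2 ∈ A₂) : A.card = A₁.card * A₂.card := by
  rw [← Finset.card_product]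
  refine Finset.card_equiv e.toEquiv ?_
  intro u
  simp [h u]

theorem cntRep_eq_sum {G : Type*} [CommGroup G] [Fintype G] [DecidableEq G] (A : Finset G)
    (J : ℕ) : ∀ w : G,
    cntRep A J w = ∑ u : Fin J → G, if (∀ i, u i ∈ A) ∧ ∏ i, u i = w then (1 : ℝ) else 0 := by
  induction J with
  | zero =>
    intro w
    simp [cntRep_zero, eq_comm]
  | succ J ih =>
    intro w
    rw [← (Fin.consEquiv (fun _ : Fin (J + 1) => G)).sum_comp, Fintype.sum_prod_type]
    simp only [cntRep, ih]
    rw [← Finset.sum_subset (Finset.subset_univ A)]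
    · refine Finset.sum_congr rfl fun u hu => Finset.sum_congr rfl fun v _ => ?_
      simp [Fin.consEquiv, Fin.forall_fin_succ, Fin.prod_univ_succ, hu, eq_div_iff_mul_eq', mul_comm]
    · intro u _ hu
      simp [Fin.consEquiv, Fin.forall_fin_succ, hu]

theorem cntRep_eq_ncard {G : Type*} [CommGroup G] [Fintype G] (A : Finset G)
    (J : ℕ) (w : G) :
    cntRep A J w = (Set.ncard {u : Fin J → G | (∀ i, u i ∈ A) ∧ ∏ i, u i = w} : ℝ) := by
  classical
  rw [cntRep_eq_sum, Finset.sum_boole]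
  rw [← Set.ncard_coe_finset]
  simp

open Classical in
/-- Units `u` mod `q` with `u - S` a unit. -/
noncomputable def goodSet (S : ℤ) (q : ℕ) [NeZero q] : Finset (ZMod q)ˣ :=
  Finset.univ.filter fun u => IsUnit ((u : ZMod q) - (S : ZMod q))

theorem mem_goodSet (S : ℤ) (q : ℕ) [NeZero q] (u : (ZMod q)ˣ) :
    u ∈ goodSet S q ↔ IsUnit ((u : ZMod q) - (S : ZMod q)) := by
  simp [goodSet]

theorem alpha_eq_s14 (R S : ℤ) (q : ℕ) [NeZero q] (hR : IsUnit (R : ZMod q)) :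
    (Nat.totient q : ℝ) * alphaLin R S q = (goodSet S q).card := by
  have hφ : (Nat.totient q : ℝ) ≠ 0 := by
    have := Nat.totient_pos.2 (Nat.pos_of_ne_zero (NeZero.ne q))
    positivity
  unfold alphaLin
  rw [mul_div_cancel₀ _ hφ]
  congr 1
  rw [← Set.ncard_coe_finset]
  have key : ∀ a : ℕ, Int.gcd ((a : ℤ) * (R * (a : ℤ) + S)) (q : ℤ) = 1 ↔
      IsUnit (a : ZMod q) ∧ IsUnit ((R : ZMod q) * a + S) := by
    intro a
    rw [← IsUnit.mul_iff, ← Int.isCoprime_iff_gcd_eq_one, ← isCoprime_comm, ← ZMod.coe_int_isUnit_iff_isCoprime]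
    push_cast
    rfl
  have him : (fun a : ℕ => (R : ZMod q) * (a : ZMod q) + S) ''
      {a : ℕ | a < q ∧ Int.gcd ((a : ℤ) * (R * (a : ℤ) + S)) (q : ℤ) = 1}
      = (Units.val) '' (goodSet S q : Set (ZMod q)ˣ) := by
    ext x
    constructor
    · rintro ⟨a, ⟨_, ha⟩, rfl⟩
      rw [key] at ha
      refine ⟨ha.2.unit, ?_, rfl⟩
      simp only [Finset.mem_coe, mem_goodSet]
      simpa using hR.mul ha.1
    · rintro ⟨u, hu, rfl⟩
      simp only [Finset.mem_coe, mem_goodSet] at hu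
      obtain ⟨r, hr⟩ := hR
      have hx : (R : ZMod q) * ((((r⁻¹ : (ZMod q)ˣ) : ZMod q) * ((u : ZMod q) - S)).val : ℕ) + S
          = u := by
        rw [ZMod.natCast_zmod_val, ← hr]
        simp
      refine ⟨(((r⁻¹ : (ZMod q)ˣ) : ZMod q) * ((u : ZMod q) - S)).val, ⟨ZMod.val_lt _, ?_⟩, hx⟩
      rw [key, hx, ZMod.natCast_zmod_val]
      exact ⟨(Units.isUnit _).mul hu, u.isUnit⟩
  rw [← Set.ncard_image_of_injOn (f := fun a : ℕ => (R : ZMod q) * (a : ZMod q) + S), him,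
    Set.ncard_image_of_injective _ Units.val_injective]
  rintro a ⟨ha, _⟩ b ⟨hb, _⟩ hab
  have h1 : (a : ZMod q) = b := hR.mul_left_cancel (add_right_cancel hab)
  have := congrArg ZMod.val h1
  rwa [ZMod.val_cast_of_lt ha, ZMod.val_cast_of_lt hb] at this

theorem V_eq (R S : ℤ) (q : ℕ) [NeZero q] (hR : IsUnit (R : ZMod q)) (J : ℕ) (w : (ZMod q)ˣ) :
    (Set.ncard {v : Fin J → (ZMod q)ˣ |
                ∏ i, ((R : ZMod q) * ((v i : (ZMod q)ˣ) : ZMod q) + (S : ZMod q))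
                  = (w : ZMod q)} : ℝ) = cntRep (goodSet S q) J w := by
  rw [cntRep_eq_ncard]
  congr 1
  have i1 : Function.Injective
      (fun (v : Fin J → (ZMod q)ˣ) i => (R : ZMod q) * (v i : ZMod q) + (S : ZMod q)) := by
    intro v v' h
    funext i
    exact Units.ext (hR.mul_left_cancel (add_right_cancel (congrFun h i)))
  have i2 : Function.Injective (fun (v : Fin J → (ZMod q)ˣ) i => (v i : ZMod q)) := by
    intro v v' h
    funext i
    exact Units.ext (congrFun h i)
  rw [← Set.ncard_image_of_injective _ i1, ← Set.ncard_image_of_injective _ i2]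
  congr 1
  ext x
  constructor
  · rintro ⟨v, hv, rfl⟩
    simp only [Set.mem_ofPred_eq] at hv
    have hu : ∀ i, IsUnit ((R : ZMod q) * (v i : ZMod q) + (S : ZMod q)) := by
      intro i
      refine isUnit_of_dvd_unit (Finset.dvd_prod_of_mem
        (fun i => (R : ZMod q) * (v i : ZMod q) + (S : ZMod q)) (Finset.mem_univ i)) ?_
      rw [hv]
      exact w.isUnit
    refine ⟨fun i => (hu i).unit, ⟨?_, ?_⟩, rfl⟩
    · intro i
      rw [mem_goodSet]
      simpa using hR
    · apply Units.ext
      simpa using hv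
  · rintro ⟨u, ⟨hu, hw⟩, rfl⟩
    simp only [mem_goodSet] at hu
    obtain ⟨r, hr⟩ := hR
    have hx : ∀ i, (R : ZMod q) * ((r⁻¹ * (hu i).unit : (ZMod q)ˣ) : ZMod q) + S = u i := by
      intro i
      rw [← hr]
      simp
    refine ⟨fun i => r⁻¹ * (hu i).unit, ?_, funext hx⟩
    simp only [Set.mem_ofPred_eq, hx]
    rw [← hw]
    simp

theorem compl_card_le (S : ℤ) (p k : ℕ) (hp : p.Prime) (hk : 0 < k) [NeZero (p ^ k)] :
    ∀ B : Finset (ZMod (p ^ k))ˣ,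
      (∀ u ∈ B, ¬ IsUnit ((u : ZMod (p ^ k)) - (S : ZMod (p ^ k)))) → B.card ≤ p ^ (k - 1) := by
  classical
  intro B hB
  have h1 : B.card ≤ (Finset.univ.filter fun x : ZMod (p ^ k) => ¬ IsUnit x).card := by
    refine Finset.card_le_card_of_injOn (fun u => (u : ZMod (p ^ k)) - S) ?_ ?_
    · intro u hu
      simpa using hB u hu
    · intro u _ v _ h
      exact Units.ext (sub_left_injective h)
  have h2 : (Finset.univ.filter fun x : ZMod (p ^ k) => IsUnit x).card = Nat.totient (p ^ k) := by
    rw [← ZMod.card_units_eq_totient, ← Finset.card_univ]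
    symm
    rw [← Finset.card_map ⟨Units.val, Units.val_injective⟩]
    congr 1
    ext x
    simp only [Finset.mem_map, Finset.mem_univ, true_and, Finset.mem_filter]
    rfl
  have h3 := Finset.card_filter_add_card_filter_not (s := (Finset.univ : Finset (ZMod (p ^ k))))
    (fun x => IsUnit x)
  rw [h2, Finset.card_univ, ZMod.card, Nat.totient_prime_pow hp hk] at h3
  have h4 : p ^ k = p ^ (k - 1) * (p - 1) + p ^ (k - 1) := by
    obtain ⟨j, rfl⟩ : ∃ j, k = j + 1 := ⟨k - 1, by omega⟩
    obtain ⟨m, rfl⟩ : ∃ m, p = m + 1 := ⟨p - 1, by have := hp.pos; omega⟩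
    simp [pow_succ]
    ring
  omega

/-- The error term at `p`. -/
noncomputable def errAt (J : ℕ) (p : ℕ) : ℝ := ((p : ℝ) - 1) / ((p : ℝ) - 2) ^ J

theorem errAt_nonneg (J p : ℕ) (hp : 5 ≤ p) : 0 ≤ errAt J p := by
  have : (5 : ℝ) ≤ p := by exact_mod_cast hp
  exact div_nonneg (by linarith) (pow_nonneg (by linarith) _)

theorem prime_ge_five {q p : ℕ} (h : Nat.Coprime q 6) (hp : p.Prime) (hpq : p ∣ q) : 5 ≤ p := by
  have h2 := Nat.Coprime.coprime_dvd_left hpq h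
  have := hp.two_le
  by_contra hlt
  have : p < 5 := by omega
  interval_cases p
  · revert h2; decide
  · revert h2; decide
  · revert hp; decide

theorem main_bound (S : ℤ) (J : ℕ) (hJ : 2 ≤ J) (q : ℕ) :
    ∀ [NeZero q], Nat.Coprime q 6 → ∀ w : (ZMod q)ˣ,
      |(Nat.totient q : ℝ) * cntRep (goodSet S q) J w - ((goodSet S q).card : ℝ) ^ J|
        ≤ (∏ p ∈ q.primeFactors, (1 + errAt J p) - 1) * ((goodSet S q).card : ℝ) ^ J := by
  classical
  obtain ⟨I, rfl⟩ : ∃ I, J = I + 1 := ⟨J - 1, by omega⟩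
  induction q using Nat.recOnPosPrimePosCoprime with
  | zero => intro h; exact absurd rfl h.out
  | one =>
    intro _ _ w
    have h := cntRep_bound (goodSet S 1) I w
    have hc : (goodSet S 1)ᶜ = ∅ := by
      ext u
      simp only [Finset.mem_compl, mem_goodSet, Finset.notMem_empty, iff_false, not_not]
      exact isUnit_of_subsingleton _
    rw [ZMod.card_units_eq_totient, hc] at h
    simpa [show I ≠ 0 by omega] using h
  | prime_pow p k hp hk =>
    intro _ hq w
    have h := cntRep_bound (goodSet S (p ^ k)) I w
    have hp5 : 5 ≤ p := prime_ge_five hq hp (dvd_pow_self p (by omega))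
    rw [ZMod.card_units_eq_totient] at h
    rw [Nat.primeFactors_prime_pow (by omega) hp, Finset.prod_singleton, add_sub_cancel_left]
    refine h.trans ?_
    have hb : ((goodSet S (p ^ k))ᶜ).card ≤ p ^ (k - 1) := by
      refine compl_card_le S p k hp hk _ ?_
      intro u hu
      rwa [Finset.mem_compl, mem_goodSet] at hu
    have hab := Finset.card_add_card_compl (goodSet S (p ^ k))
    rw [ZMod.card_units_eq_totient] at hab
    have hφ := Nat.totient_prime_pow hp hk
    have hφ' : (Nat.totient (p ^ k) : ℝ) = (p : ℝ) ^ (k - 1) * ((p : ℝ) - 1) := by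
      rw [hφ]
      push_cast [hp.one_le]
      ring
    have hb' : (((goodSet S (p ^ k))ᶜ).card : ℝ) ≤ (p : ℝ) ^ (k - 1) := by exact_mod_cast hb
    have hab' : ((goodSet S (p ^ k)).card : ℝ) + (((goodSet S (p ^ k))ᶜ).card : ℝ)
        = Nat.totient (p ^ k) := by exact_mod_cast hab
    have hp5' : (5 : ℝ) ≤ p := by exact_mod_cast hp5
    have ha : (p : ℝ) ^ (k - 1) * ((p : ℝ) - 2) ≤ ((goodSet S (p ^ k)).card : ℝ) := by
      rw [hφ'] at hab'
      linarith
    have hP : (0 : ℝ) < (p : ℝ) ^ (k - 1) := by positivity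
    have h2 : (0 : ℝ) < (p : ℝ) - 2 := by linarith
    have hpw := pow_le_pow_left₀ (by positivity) ha (I + 1)
    have hpb := pow_le_pow_left₀ (by positivity) hb' I
    calc (Nat.totient (p ^ k) : ℝ) * (((goodSet S (p ^ k))ᶜ).card : ℝ) ^ I
        ≤ (p : ℝ) ^ (k - 1) * ((p : ℝ) - 1) * ((p : ℝ) ^ (k - 1)) ^ I := by
          rw [hφ']
          exact mul_le_mul_of_nonneg_left hpb (mul_nonneg hP.le (by linarith))
      _ = errAt (I + 1) p * ((p : ℝ) ^ (k - 1) * ((p : ℝ) - 2)) ^ (I + 1) := by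
          unfold errAt
          have : ((p : ℝ) - 2) ^ (I + 1) ≠ 0 := by positivity
          rw [mul_pow, div_mul_eq_mul_div, eq_div_iff this]
          ring
      _ ≤ _ := mul_le_mul_of_nonneg_left hpw (errAt_nonneg _ _ hp5)
  | coprime m n hm hn hmn ihm ihn =>
    intro _ hq w
    have : NeZero m := ⟨by omega⟩
    have : NeZero n := ⟨by omega⟩
    have hqm : Nat.Coprime m 6 := Nat.Coprime.coprime_dvd_left (Dvd.intro _ rfl) hq
    have hqn : Nat.Coprime n 6 := Nat.Coprime.coprime_dvd_left (Dvd.intro_left _ rfl) hq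
    let c := ZMod.chineseRemainder hmn
    let e : (ZMod (m * n))ˣ ≃* (ZMod m)ˣ × (ZMod n)ˣ :=
      (Units.mapEquiv c.toMulEquiv).trans MulEquiv.prodUnits
    have he : ∀ u, u ∈ goodSet S (m * n) ↔ (e u).1 ∈ goodSet S m ∧ (e u).2 ∈ goodSet S n := by
      intro u
      simp only [mem_goodSet]
      have h1 : ((e u).1 : ZMod m) = (c u).1 := rfl
      have h2 : ((e u).2 : ZMod n) = (c u).2 := rfl
      rw [h1, h2, ← MulEquiv.isUnit_map c, Prod.isUnit_iff, map_sub, map_intCast]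
      rfl
    rw [cntRep_prod e _ _ _ he, card_prod_of_equiv e _ _ _ he, Nat.totient_mul hmn,
      hmn.primeFactors_mul, Finset.prod_union hmn.disjoint_primeFactors]
    have h1 := ihm hqm (e w).1
    have h2 := ihn hqn (e w).2
    have key : ∀ a b x y P Q : ℝ, 0 ≤ x → 0 ≤ y → 1 ≤ P → 1 ≤ Q → |a - x| ≤ (P - 1) * x →
        |b - y| ≤ (Q - 1) * y → |a * b - x * y| ≤ (P * Q - 1) * (x * y) := by
      intro a b x y P Q hx hy hP hQ ha hb
      have e1 : a * b - x * y = (a - x) * (b - y) + x * (b - y) + (a - x) * y := by ring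
      rw [e1]
      refine (abs_add_three _ _ _).trans ?_
      rw [abs_mul, abs_mul, abs_mul, abs_of_nonneg hx, abs_of_nonneg hy]
      have t1 := mul_le_mul ha hb (abs_nonneg _) (mul_nonneg (by linarith) hx)
      have t2 := mul_le_mul_of_nonneg_left hb hx
      have t3 := mul_le_mul_of_nonneg_right ha hy
      refine (add_le_add (add_le_add t1 t2) t3).trans (le_of_eq ?_)
      ring
    have one_le : ∀ r : ℕ, Nat.Coprime r 6 → 1 ≤ ∏ p ∈ r.primeFactors, (1 + errAt (I + 1) p) := by
      intro r hr
      refine Finset.prod_induction _ (fun x => (1 : ℝ) ≤ x) (fun a b => one_le_mul_of_one_le_of_one_le) le_rfl ?_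
      intro p hp
      have := errAt_nonneg (I + 1) p
        (prime_ge_five hr (Nat.prime_of_mem_primeFactors hp) (Nat.dvd_of_mem_primeFactors hp))
      linarith
    have := key _ _ _ _ _ _ (by positivity) (by positivity) (one_le m hqm) (one_le n hqn) h1 h2
    push_cast
    convert this using 2 <;> ring

theorem errAt_le (J p : ℕ) (hJ : 3 ≤ J) (hp : 5 ≤ p) :
    errAt J p ≤ 162 * (1 / 3 : ℝ) ^ J * (1 / (p : ℝ) ^ 2) := by
  obtain ⟨I, rfl⟩ : ∃ I, J = I + 3 := ⟨J - 3, by omega⟩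
  have hp5 : (5 : ℝ) ≤ p := by exact_mod_cast hp
  unfold errAt
  have h3 : (3 : ℝ) ^ I ≤ ((p : ℝ) - 2) ^ I := pow_le_pow_left₀ (by norm_num) (by linarith) I
  have h0 : (0 : ℝ) < (p : ℝ) - 2 := by linarith
  rw [div_le_iff₀ (by positivity)]
  have h4 : ((p : ℝ) - 1) * (p : ℝ) ^ 2 ≤ 6 * ((p : ℝ) - 2) ^ 3 := by
    obtain ⟨t, ht⟩ : ∃ t : ℝ, (p : ℝ) = t + 5 := ⟨p - 5, by ring⟩
    have ht0 : 0 ≤ t := by linarith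
    rw [ht]
    have := pow_nonneg ht0 2
    have := pow_nonneg ht0 3
    nlinarith
  have h5 : 162 * (1 / 3 : ℝ) ^ (I + 3) * (1 / (p : ℝ) ^ 2) * ((p : ℝ) - 2) ^ (I + 3)
      = 6 * ((p : ℝ) - 2) ^ 3 * ((p : ℝ) - 2) ^ I / ((3 : ℝ) ^ I * (p : ℝ) ^ 2) := by
    rw [one_div_pow]
    field_simp
    ring
  rw [h5, le_div_iff₀ (by positivity)]
  calc ((p : ℝ) - 1) * ((3 : ℝ) ^ I * (p : ℝ) ^ 2)
      = ((p : ℝ) - 1) * (p : ℝ) ^ 2 * (3 : ℝ) ^ I := by ring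
    _ ≤ _ := mul_le_mul h4 h3 (by positivity) (by positivity)

theorem exists_J (ε : ℝ) (hε : 0 < ε) : ∃ J₀ : ℕ, 2 ≤ J₀ ∧ ∀ J, J₀ ≤ J → ∀ q : ℕ,
    Nat.Coprime q 6 → ∏ p ∈ q.primeFactors, (1 + errAt J p) - 1 ≤ ε := by
  have hs : Summable (fun n : ℕ => 1 / (n : ℝ) ^ 2) :=
    Real.summable_one_div_nat_pow.2 (by norm_num)
  set C : ℝ := ∑' n : ℕ, 1 / (n : ℝ) ^ 2 with hC
  have ht : Filter.Tendsto (fun J : ℕ => Real.exp (162 * (1 / 3 : ℝ) ^ J * C)) Filter.atTop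
      (nhds (Real.exp (162 * 0 * C))) :=
    (Real.continuous_exp.tendsto _).comp
      (((tendsto_pow_atTop_nhds_zero_of_lt_one (by norm_num) (by norm_num)).const_mul _).mul_const _)
  have hev := ht.eventually_lt_const (u := 1 + ε) (by simpa using hε)
  obtain ⟨N, hN⟩ := Filter.eventually_atTop.1 hev
  refine ⟨max N 3, by omega, ?_⟩
  intro J hJ q hq
  have h1 : ∏ p ∈ q.primeFactors, (1 + errAt J p) ≤ Real.exp (162 * (1 / 3 : ℝ) ^ J * C) := by
    have h5 : ∀ p ∈ q.primeFactors, 5 ≤ p := fun p hp =>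
      prime_ge_five hq (Nat.prime_of_mem_primeFactors hp) (Nat.dvd_of_mem_primeFactors hp)
    calc ∏ p ∈ q.primeFactors, (1 + errAt J p)
        ≤ ∏ p ∈ q.primeFactors, Real.exp (errAt J p) := by
          refine Finset.prod_le_prod ?_ ?_
          · intro p hp
            have := errAt_nonneg J p (h5 p hp)
            linarith
          · intro p _
            have := Real.add_one_le_exp (errAt J p)
            linarith
      _ = Real.exp (∑ p ∈ q.primeFactors, errAt J p) := (Real.exp_sum _ _).symm
      _ ≤ _ := by
          apply Real.exp_le_exp.2
          calc ∑ p ∈ q.primeFactors, errAt J p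
              ≤ ∑ p ∈ q.primeFactors, 162 * (1 / 3 : ℝ) ^ J * (1 / (p : ℝ) ^ 2) :=
                Finset.sum_le_sum fun p hp => errAt_le J p (by omega) (h5 p hp)
            _ = 162 * (1 / 3 : ℝ) ^ J * ∑ p ∈ q.primeFactors, (1 / (p : ℝ) ^ 2) := by
                rw [Finset.mul_sum]
            _ ≤ _ := by
                refine mul_le_mul_of_nonneg_left ?_ (by positivity)
                exact hs.sum_le_tsum _ (fun _ _ => by positivity)
  have := hN J (by omega)
  linarith

/-- **Hypothesis A for linear `F` (§4).** For `F(T) = RT + S` with `R ≠ 0`: uniformly over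
`q` coprime to `6R` and units `w` mod `q`, the count `V` of tuples `(v₁, …, v_J)` of units
mod `q` with `∏ (R vᵢ + S) ≡ w (mod q)` satisfies `φ(q) V = (φ(q) α(q))^J (1 + o(1))`
as `J → ∞`. -/
theorem stmt14 (R S : ℤ) (hR : R ≠ 0) :
    ∀ ε : ℝ, 0 < ε → ∃ J₀ : ℕ, ∀ J : ℕ, J₀ ≤ J →
      ∀ q : ℕ, 0 < q → Int.gcd (q : ℤ) (6 * R) = 1 →
        ∀ w : (ZMod q)ˣ,
          |(Nat.totient q : ℝ) *
              (Set.ncard {v : Fin J → (ZMod q)ˣ |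
                ∏ i, ((R : ZMod q) * ((v i : (ZMod q)ˣ) : ZMod q) + (S : ZMod q))
                  = (w : ZMod q)} : ℝ)
            - ((Nat.totient q : ℝ) * alphaLin R S q) ^ J|
          ≤ ε * ((Nat.totient q : ℝ) * alphaLin R S q) ^ J := by
  intro ε hε
  obtain ⟨J₀, h2, hJ₀⟩ := exists_J ε hε
  refine ⟨J₀, ?_⟩
  intro J hJ q hq hg w
  haveI : NeZero q := ⟨hq.ne'⟩
  have hcop : IsCoprime (q : ℤ) (6 * R) := Int.isCoprime_iff_gcd_eq_one.2 hg
  have h6 : Nat.Coprime q 6 := by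
    have := hcop.of_mul_right_left
    exact Nat.isCoprime_iff_coprime.1 (by exact_mod_cast this)
  have hRu : IsUnit (R : ZMod q) :=
    (ZMod.coe_int_isUnit_iff_isCoprime R q).2 hcop.of_mul_right_right
  rw [V_eq R S q hRu, alpha_eq_s14 R S q hRu]
  refine (main_bound S J (by omega) q h6 w).trans ?_
  exact mul_le_mul_of_nonneg_right (hJ₀ J hJ q h6) (by positivity)
end
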